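/- arXiv:1211.6080 — 7 statements merged into one kernel-verified Lean document; each statement's English description precedes it below -/
import Mathlib

section
/- Let X be a real Hilbert space, I ⊆ ℝ an interval, U ⊆ I × X relatively open, f : U → X continuous and of class C^{1,1} with respect to its second argument, φ the general solution of ẋ = f(t,x), x₀ ∈ X, r > 0, t₀, t₁ ∈ I with (t₁,t₀,x) ∈ dom φ for all x ∈ B̄(x₀,r), and suppose M₂ ≥ limsup_{h→0} ‖D₂f(τ,x+h) − D₂f(τ,x)‖/‖h‖ for all (τ,x) ∈ U. Assume there exist λ₋, λ₊ ∈ ℝ with λ₋ ≤ μ₋(D₂f(τ,x)) ≤ μ₊(D₂f(τ,x)) ≤ λ₊ for all (τ,x) ∈ U, and set M₁ = 2λ₊ − λ₋ if t₁ ≥ t₀ and M₁ = λ₊ − 2λ₋ otherwise. If r·M₂·K(M₁) ≤ 1, where K(α) = |t₁−t₀| for α = 0 and K(α) = (exp(α|t₁−t₀|)−1)/α otherwise, then the reachable set φ(t₁,t₀,B̄(x₀,r)) is convex. -/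
open Filter Topology Metric Set RealInnerProductSpace

/-- `μ₋(A) = inf {⟨Ax,x⟩ : ‖x‖ = 1}`. -/
noncomputable def muMinus {X : Type*} [NormedAddCommGroup X] [InnerProductSpace ℝ X]
    (A : X →L[ℝ] X) : ℝ :=
  sInf {c : ℝ | ∃ y : X, ‖y‖ = 1 ∧ c = ⟪A y, y⟫}

/-- `μ₊(A) = sup {⟨Ax,x⟩ : ‖x‖ = 1}`. -/
noncomputable def muPlus {X : Type*} [NormedAddCommGroup X] [InnerProductSpace ℝ X]
    (A : X →L[ℝ] X) : ℝ :=
  sSup {c : ℝ | ∃ y : X, ‖y‖ = 1 ∧ c = ⟪A y, y⟫}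

open scoped NNReal

/-!
By reversing time it suffices to treat the map `F` that sends `x ∈ B̄(x₀, r)` at the final time `b`
back to the state at the initial time `a`. Let `G` be its inverse on the image of the open ball.
For a short segment in the image with midpoint `z` and endpoints `z₁`, `z₂`, compare the solution
through `z` with the average of the solutions through `z₁` and `z₂`: the second-order defect of `f`
and one-sided Gronwall estimates give `‖G z - midpoint (G z₁) (G z₂)‖ ≤ k * ‖G z₁ - G z₂‖ ^ 2`,
where `8 * r * k = r * M₂ * K(M₁) ≤ 1`. By the parallelogram law, such an estimate excludes interior
maxima of `‖G · - x₀‖` along segments in the image. So a segment in the image whose endpoints come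
from a smaller closed ball stays in the image of that closed ball; moving one endpoint continuously,
the segment never leaves the image of the open ball, which is therefore convex. Passing to the
closure settles the closed ball.
-/

theorem forall_mem_Icc_of_real_induction {P : ℝ → Prop} {a b : ℝ}
    (hclosed : ∀ u ∈ Icc a b, (∀ u' ∈ Ico a u, P u') → P u)
    (hopen : ∀ u ∈ Ico a b, P u → ∀ᶠ v in 𝓝[>] u, P v) :
    ∀ u ∈ Icc a b, P u := by
  rcases lt_or_ge b a with hba | hab
  · simp [Icc_eq_empty hba.not_ge]
  set S : Set ℝ := {u | ∀ u' ∈ Icc a u, P u'}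
  have extend : ∀ u ∈ Icc a b, (∀ u' ∈ Ico a u, P u') → u ∈ S := by
    intro u hu hlt u' hu'
    rcases hu'.2.lt_or_eq with h | rfl
    · exact hlt u' ⟨hu'.1, h⟩
    · exact hclosed u' hu hlt
  have S_closed : IsClosed (S ∩ Icc a b) := by
    refine isClosed_of_closure_subset fun u hu => ?_
    have huI : u ∈ Icc a b := isClosed_Icc.closure_subset_iff.2 inter_subset_right hu
    refine ⟨extend u huI fun u' hu' => ?_, huI⟩
    obtain ⟨v, hv, hvS, -⟩ := mem_closure_iff.1 hu (Ioi u') isOpen_Ioi hu'.2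
    exact hvS u' ⟨hu'.1, hv.le⟩
  have S_right : ∀ u ∈ S ∩ Ico a b, ∀ v ∈ Ioi u, (S ∩ Ioc u v).Nonempty := by
    rintro u ⟨huS, hu⟩ v hv
    obtain ⟨w, hw, hP⟩ := mem_nhdsGT_iff_exists_Ioc_subset.1 (hopen u hu (huS u ⟨hu.1, le_rfl⟩))
    refine ⟨min w v, fun u' hu' => ?_, lt_min hw hv, min_le_right _ _⟩
    rcases le_or_gt u' u with h | h
    · exact huS u' ⟨hu'.1, h⟩
    · exact hP ⟨h, hu'.2.trans (min_le_left _ _)⟩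
  have a_mem : a ∈ S := extend a ⟨le_rfl, hab⟩ (by simp)
  exact fun u hu => S_closed.Icc_subset_of_forall_exists_gt a_mem S_right hu u ⟨hu.1, le_rfl⟩

theorem dist_le_mul_sub_of_eventually_dist_le {Y : Type*} [PseudoMetricSpace Y] {g : ℝ → Y}
    {a b C : ℝ} (hab : a ≤ b) (hg : ContinuousOn g (Icc a b))
    (h : ∀ t ∈ Ico a b, ∀ C' > C, ∀ᶠ s in 𝓝[>] t, dist (g s) (g t) ≤ C' * (s - t)) :
    dist (g b) (g a) ≤ C * (b - a) := by
  refine image_le_of_liminf_slope_right_le_deriv_boundary (f := fun t => dist (g t) (g a))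
    (B := fun t => C * (t - a)) (B' := fun _ => C)
    (continuous_dist.comp_continuousOn (hg.prodMk continuousOn_const)) (by simp) (by fun_prop)
    (fun t _ => ?_) (fun t ht C' hC' => ?_) (right_mem_Icc.2 hab)
  · simpa using (((hasDerivAt_id t).sub_const a).const_mul C).hasDerivWithinAt (s := Ici t)
  · refine Eventually.frequently ?_
    obtain ⟨C'', hCC'', hC''⟩ := exists_between (show C < C' from hC')
    filter_upwards [h t ht C'' hCC'', self_mem_nhdsWithin] with s hs hts
    have hts' : 0 < s - t := sub_pos.2 hts
    rw [slope_def_field, div_lt_iff₀ hts']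
    calc dist (g s) (g a) - dist (g t) (g a) ≤ dist (g s) (g t) := by
          linarith [dist_triangle (g s) (g t) (g a)]
      _ ≤ C'' * (s - t) := hs
      _ < C' * (s - t) := by gcongr

theorem lipschitzOnWith_of_convex_of_eventually_dist_le {E Y : Type*} [NormedAddCommGroup E]
    [NormedSpace ℝ E] [PseudoMetricSpace Y] {F : E → Y} {s : Set E} {C : ℝ≥0} (hs : Convex ℝ s)
    (h : ∀ x ∈ s, ∀ C' > (C : ℝ), ∀ᶠ y in 𝓝[s] x, dist (F y) (F x) ≤ C' * dist y x) :
    LipschitzOnWith C F s := by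
  have F_cont : ContinuousOn F s := fun x hx => by
    refine tendsto_iff_dist_tendsto_zero.2 (squeeze_zero' (.of_forall fun _ => dist_nonneg)
      (h x hx (C + 1) (lt_add_one _)) ?_)
    have : Continuous fun y => (C + 1) * dist y x := by fun_prop
    simpa using (this.tendsto x).mono_left nhdsWithin_le_nhds
  refine LipschitzOnWith.of_dist_le_mul fun y hy x hx => ?_
  rcases eq_or_ne x y with rfl | hxy
  · simp
  have hd : 0 < dist x y := dist_pos.2 hxy
  have seg_mem : ∀ t ∈ Icc (0 : ℝ) 1, AffineMap.lineMap x y t ∈ s := fun t ht =>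
    hs.lineMap_mem hx hy ht
  have seg_cont : Continuous (AffineMap.lineMap x y : ℝ → E) := AffineMap.lineMap_continuous
  have := dist_le_mul_sub_of_eventually_dist_le (g := fun t : ℝ => F (AffineMap.lineMap x y t))
    (C := C * dist x y) zero_le_one (F_cont.comp seg_cont.continuousOn seg_mem)
    fun t ht C' hC' => ?_
  · simpa [dist_comm x y] using this
  have lim : Tendsto (AffineMap.lineMap x y : ℝ → E) (𝓝[>] t) (𝓝[s] (AffineMap.lineMap x y t)) :=
    tendsto_nhdsWithin_iff.2 ⟨(seg_cont.tendsto t).mono_left nhdsWithin_le_nhds, by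
      filter_upwards [Ioc_mem_nhdsGT ht.2] with t' ht'
      exact seg_mem t' ⟨ht.1.trans ht'.1.le, ht'.2⟩⟩
  filter_upwards [lim.eventually (h _ (seg_mem t ⟨ht.1, ht.2.le⟩) (C' / dist x y)
    ((lt_div_iff₀ hd).2 hC')), self_mem_nhdsWithin] with t' ht' htt'
  rwa [dist_lineMap_lineMap, Real.dist_eq, abs_of_pos (sub_pos.2 htt'), mul_comm (t' - t),
    ← mul_assoc, div_mul_cancel₀ _ hd.ne'] at ht'

theorem lipschitzOnWith_lineMap_comp_lineMap {E F : Type*} [NormedAddCommGroup E]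
    [NormedSpace ℝ E] [NormedAddCommGroup F] [NormedSpace ℝ F] {f : E → F} {S : Set E} {T : Set ℝ}
    {C : ℝ≥0} {x y : E} {s : ℝ} (c : F) (hf : LipschitzOnWith C f S)
    (hT : MapsTo (AffineMap.lineMap x y) T S) (hs : s ∈ Icc (0 : ℝ) 1) :
    LipschitzOnWith (C * nndist x y)
      (fun v : ℝ => AffineMap.lineMap c (f (AffineMap.lineMap x y v)) s) T := by
  refine LipschitzOnWith.of_dist_le_mul fun v hv w hw => ?_
  calc dist (AffineMap.lineMap c (f (AffineMap.lineMap x y v)) s)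
        (AffineMap.lineMap c (f (AffineMap.lineMap x y w)) s)
      = s * dist (f (AffineMap.lineMap x y v)) (f (AffineMap.lineMap x y w)) := by
        simp only [AffineMap.lineMap_apply_module', dist_add_right, dist_smul₀,
          Real.norm_of_nonneg hs.1, dist_sub_right]
    _ ≤ 1 * (C * dist (AffineMap.lineMap x y v : E) (AffineMap.lineMap x y w)) := by
        gcongr
        · exact hs.2
        · exact hf.dist_le_mul _ (hT hv) _ (hT hw)
    _ = (C * nndist x y : ℝ≥0) * dist v w := by
        rw [dist_lineMap_lineMap, one_mul]; push_cast; ring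

theorem mem_image_of_mem_closure_of_uniformContinuousOn {T X Y : Type*} [UniformSpace T]
    [UniformSpace X] [CompleteSpace X] [TopologicalSpace Y] [T2Space Y]
    {S : Set T} {τ : T} {g : T → X} {p : T → Y} {F : X → Y} {K : Set X} {z : Y}
    (hτ : τ ∈ closure S) (hg : UniformContinuousOn g S) (hgK : MapsTo g S K) (hK : IsClosed K)
    (hF : ContinuousOn F K) (hp : Tendsto p (𝓝[S] τ) (𝓝 z)) (hFg : EqOn (F ∘ g) p S) :
    z ∈ F '' K := by
  have : (𝓝[S] τ).NeBot := mem_closure_iff_nhdsWithin_neBot.1 hτ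
  have cauchy : Cauchy (map g (𝓝[S] τ)) :=
    (cauchy_nhds.mono nhdsWithin_le_nhds).map_of_le hg inf_le_right
  obtain ⟨m, hm⟩ := CompleteSpace.complete cauchy
  have eventually_mem : ∀ᶠ t in 𝓝[S] τ, g t ∈ K :=
    eventually_mem_nhdsWithin.mono fun t ht => hgK ht
  have m_mem : m ∈ K := hK.mem_of_tendsto hm eventually_mem
  have lim : Tendsto (F ∘ g) (𝓝[S] τ) (𝓝 (F m)) :=
    (hF m m_mem).tendsto.comp (tendsto_nhdsWithin_iff.2 ⟨hm, eventually_mem⟩)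
  exact ⟨m, m_mem, tendsto_nhds_unique lim (hp.congr' (hFg.eventuallyEq_nhdsWithin.symm))⟩

theorem eq_of_norm_sub_midpoint_le {X : Type*} [NormedAddCommGroup X] [InnerProductSpace ℝ X]
    {a b m : X} {k : ℝ} (ha : ‖a‖ ≤ ‖m‖) (hb : ‖b‖ ≤ ‖m‖)
    (hmid : ‖m - midpoint ℝ a b‖ ≤ k * ‖a - b‖ ^ 2) (hk : 8 * ‖m‖ * k ≤ 1) : a = b := by
  have parallelogram : 4 * ‖midpoint ℝ a b‖ ^ 2 + ‖a - b‖ ^ 2 = 2 * (‖a‖ ^ 2 + ‖b‖ ^ 2) := by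
    have h : ‖a + b‖ = 2 * ‖midpoint ℝ a b‖ := by
      rw [midpoint_eq_smul_add, norm_smul]; norm_num; ring
    have := parallelogram_law_with_norm ℝ a b
    rw [h] at this
    linarith
  have gap_le : ‖m‖ - ‖midpoint ℝ a b‖ ≤ k * ‖a - b‖ ^ 2 := (norm_sub_norm_le _ _).trans hmid
  set d := ‖a - b‖
  set P := ‖midpoint ℝ a b‖
  have ha_sq : ‖a‖ ^ 2 ≤ ‖m‖ ^ 2 := by gcongr
  have hb_sq : ‖b‖ ^ 2 ≤ ‖m‖ ^ 2 := by gcongr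
  have gap_nonneg : 0 ≤ ‖m‖ - P := sub_nonneg.2 <|
    le_of_sq_le_sq (by linarith [sq_nonneg d]) (norm_nonneg m)
  have d_sq_le : d ^ 2 ≤ 4 * ((‖m‖ - P) * (‖m‖ + P)) := by linarith
  have gap_eq_zero : ‖m‖ - P = 0 := by
    refine pow_eq_zero_iff two_ne_zero |>.1 (le_antisymm ?_ (sq_nonneg _))
    have sum_le : (‖m‖ - P) * (‖m‖ + P) ≤ k * d ^ 2 * (‖m‖ + P) := by gcongr
    have defect_le : 8 * ‖m‖ * k * d ^ 2 ≤ 1 * d ^ 2 := by gcongr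
    calc (‖m‖ - P) ^ 2 ≤ k * d ^ 2 * (‖m‖ - P) := by rw [sq]; gcongr
      _ = 2 * ‖m‖ * k * d ^ 2 - k * d ^ 2 * (‖m‖ + P) := by ring
      _ ≤ 0 := by linarith
  rw [gap_eq_zero, zero_mul, mul_zero] at d_sq_le
  exact sub_eq_zero.1 (norm_eq_zero.1 (pow_eq_zero_iff two_ne_zero |>.1
    (d_sq_le.antisymm (sq_nonneg d))))

section ConvexImage

variable {X : Type*} [NormedAddCommGroup X] [InnerProductSpace ℝ X]

/-- `F` is a Lipschitz map on the closed ball `B̄(x₀, r)`, injective on the open ball, with open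
image there; its inverse `G` is locally `c`-Lipschitz and locally maps midpoints to midpoints up to
an error `k‖a - b‖²` for endpoints `a`, `b` of the image segment. -/
structure AlmostMidpointChart (F G : X → X) (x₀ : X) (r k : ℝ) (C c : ℝ≥0) : Prop where
  lipschitzOnWith : LipschitzOnWith C F (closedBall x₀ r)
  leftInvOn : LeftInvOn G F (ball x₀ r)
  isOpen_image : IsOpen (F '' ball x₀ r)
  eventually_dist_le : ∀ z ∈ F '' ball x₀ r, ∀ᶠ z' in 𝓝 z, dist (G z') (G z) ≤ c * dist z' z
  eventually_norm_sub_midpoint_le : ∀ z ∈ F '' ball x₀ r, ∀ᶠ h in 𝓝 (0 : X),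
    ‖G z - midpoint ℝ (G (z + h)) (G (z - h))‖ ≤ k * ‖G (z + h) - G (z - h)‖ ^ 2

namespace AlmostMidpointChart

variable {F G : X → X} {x₀ : X} {r k : ℝ} {C c : ℝ≥0} {x y z z' : X} {R s u : ℝ}

theorem inverse_mem_ball (hF : AlmostMidpointChart F G x₀ r k C c) (hz : z ∈ F '' ball x₀ r) :
    G z ∈ ball x₀ r := by
  obtain ⟨x, hx, rfl⟩ := hz
  rwa [hF.leftInvOn hx]

theorem rightInvOn (hF : AlmostMidpointChart F G x₀ r k C c) :
    RightInvOn G F (F '' ball x₀ r) :=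
  hF.leftInvOn.rightInvOn_image

theorem injOn_inverse (hF : AlmostMidpointChart F G x₀ r k C c) : InjOn G (F '' ball x₀ r) :=
  hF.rightInvOn.injOn

theorem continuousOn_inverse (hF : AlmostMidpointChart F G x₀ r k C c) :
    ContinuousOn G (F '' ball x₀ r) := fun z hz => by
  refine ContinuousAt.continuousWithinAt (tendsto_iff_dist_tendsto_zero.2
    (squeeze_zero' (.of_forall fun _ => dist_nonneg) (hF.eventually_dist_le z hz) ?_))
  have : Continuous fun z' => c * dist z' z := by fun_prop
  simpa using this.tendsto z

theorem lipschitzOnWith_inverse_comp_of_convex {E : Type*} [NormedAddCommGroup E]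
    [NormedSpace ℝ E] {p : E → X} {S : Set E} {L : ℝ≥0}
    (hF : AlmostMidpointChart F G x₀ r k C c) (hS : Convex ℝ S) (hp : LipschitzOnWith L p S)
    (hpS : MapsTo p S (F '' ball x₀ r)) : LipschitzOnWith (c * L) (G ∘ p) S := by
  refine lipschitzOnWith_of_convex_of_eventually_dist_le hS fun t ht C' hC' => ?_
  filter_upwards [(hp.continuousOn t ht).eventually (hF.eventually_dist_le (p t) (hpS ht)),
    self_mem_nhdsWithin] with t' ht' htS
  calc dist (G (p t')) (G (p t)) ≤ c * dist (p t') (p t) := ht'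
    _ ≤ c * (L * dist t' t) := by gcongr; exact hp.dist_le_mul t' htS t ht
    _ = (c * L : ℝ≥0) * dist t' t := by push_cast; ring
    _ ≤ C' * dist t' t := by gcongr

theorem eventually_dist_lt_max (hF : AlmostMidpointChart F G x₀ r k C c) (hk : 8 * r * k ≤ 1)
    (hz : z ∈ F '' ball x₀ r) :
    ∀ᶠ h in 𝓝[≠] (0 : X), dist (G z) x₀ < max (dist (G (z + h)) x₀) (dist (G (z - h)) x₀) := by
  have V_nhds : F '' ball x₀ r ∈ 𝓝 z := hF.isOpen_image.mem_nhds hz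
  have plus_mem : ∀ᶠ h in 𝓝 (0 : X), z + h ∈ F '' ball x₀ r :=
    (continuous_const.add continuous_id).tendsto' (0 : X) z (add_zero z) V_nhds
  have minus_mem : ∀ᶠ h in 𝓝 (0 : X), z - h ∈ F '' ball x₀ r :=
    (continuous_const.sub continuous_id).tendsto' (0 : X) z (sub_zero z) V_nhds
  have hz_mid := hF.eventually_norm_sub_midpoint_le z hz
  filter_upwards [(plus_mem.and (minus_mem.and hz_mid)).filter_mono nhdsWithin_le_nhds,
    self_mem_nhdsWithin] with h ⟨hplus, hminus, hmid⟩ h_ne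
  by_contra! hle
  simp only [max_le_iff, dist_eq_norm] at hle
  have norm_lt : ‖G z - x₀‖ < r := mem_ball_iff_norm.1 (hF.inverse_mem_ball hz)
  have hmk : 8 * ‖G z - x₀‖ * k ≤ 1 := by
    rcases le_total 0 k with hk0 | hk0
    · exact le_trans (by gcongr) hk
    · exact (mul_nonpos_of_nonneg_of_nonpos (by positivity) hk0).trans zero_le_one
  have eq_sub : G (z + h) - x₀ = G (z - h) - x₀ := by
    have midpoint_sub : midpoint ℝ (G (z + h) - x₀) (G (z - h) - x₀) =
        midpoint ℝ (G (z + h)) (G (z - h)) - x₀ := by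
      simpa using (midpoint_vsub_midpoint (R := ℝ) (G (z + h)) (G (z - h)) x₀ x₀).symm
    refine eq_of_norm_sub_midpoint_le hle.1 hle.2 ?_ hmk
    rwa [midpoint_sub, sub_sub_sub_cancel_right, sub_sub_sub_cancel_right]
  have h_eq_neg : h = -h := by
    simpa [sub_eq_add_neg] using hF.injOn_inverse hplus hminus (sub_left_injective eq_sub)
  have : IsAddTorsionFree X := .of_isTorsionFree ℝ X
  exact h_ne (self_eq_neg.1 h_eq_neg)

theorem eventually_dist_lineMap_lt_max (hF : AlmostMidpointChart F G x₀ r k C c)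
    (hk : 8 * r * k ≤ 1) (hne : z ≠ z') (hs : AffineMap.lineMap z z' s ∈ F '' ball x₀ r) :
    ∀ᶠ η in 𝓝[≠] (0 : ℝ), dist (G (AffineMap.lineMap z z' s)) x₀ <
      max (dist (G (AffineMap.lineMap z z' (s + η))) x₀)
        (dist (G (AffineMap.lineMap z z' (s - η))) x₀) := by
  have smul_lim : Tendsto (fun η : ℝ => η • (z' - z)) (𝓝[≠] 0) (𝓝[≠] 0) :=
    tendsto_nhdsWithin_iff.2 ⟨((continuous_id.smul continuous_const).tendsto' 0 0
      (zero_smul ℝ (z' - z))).mono_left nhdsWithin_le_nhds, by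
        filter_upwards [self_mem_nhdsWithin] with η hη
        exact smul_ne_zero hη (sub_ne_zero.2 hne.symm)⟩
  filter_upwards [smul_lim.eventually (hF.eventually_dist_lt_max hk hs)] with η hη
  have plus_eq : AffineMap.lineMap z z' s + η • (z' - z) = AffineMap.lineMap z z' (s + η) := by
    simp only [AffineMap.lineMap_apply_module']; module
  have minus_eq : AffineMap.lineMap z z' s - η • (z' - z) = AffineMap.lineMap z z' (s - η) := by
    simp only [AffineMap.lineMap_apply_module']; module
  rwa [plus_eq, minus_eq] at hη

/-- The maximum principle: `‖G · - x₀‖` has no interior maximum along a segment. -/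
theorem inverse_lineMap_mem_closedBall (hF : AlmostMidpointChart F G x₀ r k C c)
    (hk : 8 * r * k ≤ 1) (hz : G z ∈ closedBall x₀ R) (hz' : G z' ∈ closedBall x₀ R)
    (hseg : ∀ s ∈ Icc (0 : ℝ) 1, AffineMap.lineMap z z' s ∈ F '' ball x₀ r)
    (hs : s ∈ Icc (0 : ℝ) 1) : G (AffineMap.lineMap z z' s) ∈ closedBall x₀ R := by
  rcases eq_or_ne z z' with rfl | hne
  · simpa using hz
  by_contra hR
  set g : ℝ → X := fun s => G (AffineMap.lineMap z z' s)
  have g_cont : ContinuousOn g (Icc 0 1) :=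
    hF.continuousOn_inverse.comp AffineMap.lineMap_continuous.continuousOn hseg
  obtain ⟨s₀, hs₀, isMax⟩ := isCompact_Icc.exists_isMaxOn ⟨s, hs⟩
    (continuous_dist.comp_continuousOn (g_cont.prodMk (continuousOn_const (c := x₀))))
  have dist_le : ∀ t ∈ Icc (0 : ℝ) 1, dist (g t) x₀ ≤ dist (g s₀) x₀ := isMax
  have R_lt : R < dist (g s₀) x₀ := (not_le.1 hR).trans_le (dist_le s hs)
  have s₀_ne_zero : s₀ ≠ 0 := by
    rintro rfl
    exact R_lt.not_ge (by simpa [g] using hz)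
  have s₀_ne_one : s₀ ≠ 1 := by
    rintro rfl
    exact R_lt.not_ge (by simpa [g] using hz')
  have Icc_nhds : Icc (0 : ℝ) 1 ∈ 𝓝 s₀ :=
    Icc_mem_nhds (hs₀.1.lt_of_ne' s₀_ne_zero) (hs₀.2.lt_of_ne s₀_ne_one)
  have plus_mem : ∀ᶠ η in 𝓝 (0 : ℝ), s₀ + η ∈ Icc (0 : ℝ) 1 :=
    (continuous_const.add continuous_id).tendsto' 0 s₀ (add_zero s₀) Icc_nhds
  have minus_mem : ∀ᶠ η in 𝓝 (0 : ℝ), s₀ - η ∈ Icc (0 : ℝ) 1 :=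
    (continuous_const.sub continuous_id).tendsto' 0 s₀ (sub_zero s₀) Icc_nhds
  obtain ⟨η, hlt, hplus, hminus⟩ :=
    ((hF.eventually_dist_lineMap_lt_max hk hne (hseg s₀ hs₀)).and
      ((plus_mem.and minus_mem).filter_mono nhdsWithin_le_nhds)).exists
  exact hlt.not_ge (max_le (dist_le _ hplus) (dist_le _ hminus))

theorem eventually_lineMap_image_mem (hF : AlmostMidpointChart F G x₀ r k C c)
    (hu : AffineMap.lineMap x y u ∈ ball x₀ r)
    (h : ∀ s ∈ Icc (0 : ℝ) 1,
      AffineMap.lineMap (F x) (F (AffineMap.lineMap x y u)) s ∈ F '' ball x₀ r) :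
    ∀ᶠ v in 𝓝 u, ∀ s ∈ Icc (0 : ℝ) 1,
      AffineMap.lineMap (F x) (F (AffineMap.lineMap x y v)) s ∈ F '' ball x₀ r := by
  refine isCompact_Icc.eventually_forall_of_forall_eventually fun s hs => ?_
  have F_cont : ContinuousAt F (AffineMap.lineMap x y u) :=
    hF.lipschitzOnWith.continuousOn.continuousAt
      (mem_of_superset (isOpen_ball.mem_nhds hu) ball_subset_closedBall)
  have path_cont : ContinuousAt (fun p : ℝ × ℝ => F (AffineMap.lineMap x y p.1)) (u, s) :=
    F_cont.comp (f := fun p : ℝ × ℝ => AffineMap.lineMap x y p.1) (x := (u, s))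
      (AffineMap.lineMap_continuous.comp continuous_fst).continuousAt
  have : ContinuousAt (fun p : ℝ × ℝ =>
      AffineMap.lineMap (F x) (F (AffineMap.lineMap x y p.1)) p.2) (u, s) := by
    simp only [AffineMap.lineMap_apply_module']
    exact (continuousAt_snd.smul (path_cont.sub continuousAt_const)).add continuousAt_const
  exact this (hF.isOpen_image.mem_nhds (h s hs))

theorem lineMap_image_mem_of_forall_lt (hF : AlmostMidpointChart F G x₀ r k C c) [CompleteSpace X]
    (hk : 8 * r * k ≤ 1) (hR : R < r) (hx : x ∈ closedBall x₀ R) (hy : y ∈ closedBall x₀ R)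
    (hu : u ∈ Icc (0 : ℝ) 1) (hs : s ∈ Icc (0 : ℝ) 1)
    (h : ∀ u' ∈ Ico 0 u, ∀ s ∈ Icc (0 : ℝ) 1,
      AffineMap.lineMap (F x) (F (AffineMap.lineMap x y u')) s ∈ F '' ball x₀ r) :
    AffineMap.lineMap (F x) (F (AffineMap.lineMap x y u)) s ∈ F '' ball x₀ r := by
  have hRr : closedBall x₀ R ⊆ ball x₀ r := closedBall_subset_ball hR
  rcases hu.1.eq_or_lt with rfl | hu0
  · simpa using mem_image_of_mem F (hRr hx)
  have line_mem : ∀ v ∈ Icc 0 u, AffineMap.lineMap x y v ∈ closedBall x₀ R := fun v hv =>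
    (convex_closedBall x₀ R).lineMap_mem hx hy ⟨hv.1, hv.2.trans hu.2⟩
  set p : ℝ → X := fun v => AffineMap.lineMap (F x) (F (AffineMap.lineMap x y v)) s
  have p_lip : LipschitzOnWith (C * nndist x y) p (Icc 0 u) :=
    lipschitzOnWith_lineMap_comp_lineMap (F x) hF.lipschitzOnWith
      (fun v hv => ball_subset_closedBall (hRr (line_mem v hv))) hs
  have hpV : MapsTo p (Ico 0 u) (F '' ball x₀ r) := fun v hv => h v hv s hs
  have Gp_lip := hF.lipschitzOnWith_inverse_comp_of_convex (convex_Ico 0 u)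
    (p_lip.mono Ico_subset_Icc_self) hpV
  have Gp_mem : MapsTo (G ∘ p) (Ico 0 u) (closedBall x₀ R) := fun v hv => by
    refine hF.inverse_lineMap_mem_closedBall hk ?_ ?_ (h v hv) hs
    · rwa [hF.leftInvOn (hRr hx)]
    · rw [hF.leftInvOn (hRr (line_mem v (Ico_subset_Icc_self hv)))]
      exact line_mem v (Ico_subset_Icc_self hv)
  refine image_mono hRr (mem_image_of_mem_closure_of_uniformContinuousOn (S := Ico 0 u) (τ := u)
    (p := p) ?_ Gp_lip.uniformContinuousOn Gp_mem isClosed_closedBall ?_ ?_ ?_)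
  · rw [closure_Ico hu0.ne]
    exact right_mem_Icc.2 hu0.le
  · exact hF.lipschitzOnWith.continuousOn.mono (hRr.trans ball_subset_closedBall)
  · exact (p_lip.continuousOn u (right_mem_Icc.2 hu0.le)).mono_left
      (nhdsWithin_mono _ Ico_subset_Icc_self)
  · exact fun v hv => hF.rightInvOn (hpV hv)

/-- The endpoint `F x` is kept fixed while the other one moves along the image of `[x, y]`; the
maximum principle keeps the segment inside a smaller closed ball, hence away from the boundary. -/
theorem convex_image_ball (hF : AlmostMidpointChart F G x₀ r k C c) [CompleteSpace X]
    (hk : 8 * r * k ≤ 1) : Convex ℝ (F '' ball x₀ r) := by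
  rw [convex_iff_segment_subset]
  rintro _ ⟨x, hx, rfl⟩ _ ⟨y, hy, rfl⟩
  set R := max (dist x x₀) (dist y x₀)
  have hR : R < r := max_lt hx hy
  have hxR : x ∈ closedBall x₀ R := mem_closedBall.2 (le_max_left _ _)
  have hyR : y ∈ closedBall x₀ R := mem_closedBall.2 (le_max_right _ _)
  have key := forall_mem_Icc_of_real_induction (a := 0) (b := 1)
    (P := fun u => ∀ s ∈ Icc (0 : ℝ) 1,
      AffineMap.lineMap (F x) (F (AffineMap.lineMap x y u)) s ∈ F '' ball x₀ r)
    (fun u hu h s hs => hF.lineMap_image_mem_of_forall_lt hk hR hxR hyR hu hs h)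
    (fun u hu h => (hF.eventually_lineMap_image_mem ((convex_ball x₀ r).lineMap_mem hx hy
      ⟨hu.1, hu.2.le⟩) h).filter_mono nhdsWithin_le_nhds)
  rw [segment_eq_image_lineMap]
  rintro _ ⟨s, hs, rfl⟩
  simpa using key 1 (right_mem_Icc.2 zero_le_one) s hs

theorem convex_image_closedBall (hF : AlmostMidpointChart F G x₀ r k C c) [CompleteSpace X]
    (hr : r ≠ 0) (hk : 8 * r * k ≤ 1) : Convex ℝ (F '' closedBall x₀ r) := by
  have V_convex := hF.convex_image_ball hk
  have F_cont : ContinuousOn F (closedBall x₀ r) := hF.lipschitzOnWith.continuousOn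
  have G_lip := hF.lipschitzOnWith_inverse_comp_of_convex V_convex
    LipschitzWith.id.lipschitzOnWith (mapsTo_id _)
  have image_eq : F '' closedBall x₀ r = closure (F '' ball x₀ r) := by
    refine Subset.antisymm ?_ fun z hz => ?_
    · rw [← closure_ball x₀ hr] at F_cont ⊢
      exact F_cont.image_closure
    · exact mem_image_of_mem_closure_of_uniformContinuousOn hz G_lip.uniformContinuousOn
        (fun z hz => ball_subset_closedBall (hF.inverse_mem_ball hz)) isClosed_closedBall F_cont
        (tendsto_id.mono_left nhdsWithin_le_nhds) hF.rightInvOn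
  rw [image_eq]
  exact V_convex.closure

end AlmostMidpointChart

end ConvexImage

section Gronwall

theorem exp_mul_sub_le_of_mem_Icc (l : ℝ) {a b t : ℝ} (ht : t ∈ Icc a b) :
    Real.exp (l * (t - a)) ≤ Real.exp (|l| * (b - a)) := by
  have := sub_nonneg.2 ht.1
  gcongr
  exacts [le_abs_self l, ht.2]

variable {X : Type*} [NormedAddCommGroup X] [InnerProductSpace ℝ X] {u u' : ℝ → X}
  {B B' g : ℝ → ℝ} {a b l ε : ℝ}

theorem norm_le_of_inner_deriv_lt (hu : ∀ t ∈ Icc a b, HasDerivWithinAt u (u' t) (Icc a b) t)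
    (hB : ∀ t, HasDerivAt B (B' t) t) (hB0 : ∀ t ∈ Icc a b, 0 ≤ B t) (ha : ‖u a‖ ≤ B a)
    (h : ∀ t ∈ Ico a b, ‖u t‖ = B t → ⟪u t, u' t⟫ < B t * B' t) :
    ∀ t ∈ Icc a b, ‖u t‖ ≤ B t := by
  have u_cont : ContinuousOn u (Icc a b) := fun t ht => (hu t ht).continuousWithinAt
  have u_deriv : ∀ t ∈ Ico a b, HasDerivWithinAt u (u' t) (Ici t) t := fun t ht =>
    (hu t ⟨ht.1, ht.2.le⟩).mono_of_mem_nhdsWithin (Icc_mem_nhdsGE_of_mem ht)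
  have B_sq_deriv : ∀ t, HasDerivAt (fun t => B t ^ 2) (2 * (B t * B' t)) t := fun t =>
    ((hB t).fun_pow 2).congr_deriv (by norm_num; ring)
  intro t ht
  refine le_of_sq_le_sq ?_ (hB0 t ht)
  refine image_le_of_deriv_right_lt_deriv_boundary (f := fun t => ‖u t‖ ^ 2)
    (f' := fun t => 2 * ⟪u t, u' t⟫) (u_cont.norm.pow 2) (fun t ht => (u_deriv t ht).norm_sq)
    (by gcongr) B_sq_deriv (fun t ht heq => ?_) ht
  have norm_eq : ‖u t‖ = B t := (pow_left_inj₀ (norm_nonneg _)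
    (hB0 t ⟨ht.1, ht.2.le⟩) two_ne_zero).1 heq
  linarith [h t ht norm_eq]

theorem norm_le_of_inner_deriv_le (hu : ∀ t ∈ Icc a b, HasDerivWithinAt u (u' t) (Icc a b) t)
    (hB : ∀ t, HasDerivAt B (l * B t + g t) t) (hB0 : ∀ t ∈ Icc a b, 0 ≤ B t) (hε : 0 < ε)
    (ha : ‖u a‖ ≤ B a)
    (h : ∀ t ∈ Icc a b, ‖u t‖ < B t + ε → ⟪u t, u' t⟫ ≤ l * ‖u t‖ ^ 2 + g t * ‖u t‖) :
    ∀ t ∈ Icc a b, ‖u t‖ ≤ B t := by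
  set e : ℝ → ℝ := fun t => Real.exp ((l + 1) * (t - a))
  have e_pos : ∀ t, 0 < e t := fun t => Real.exp_pos _
  have e_deriv : ∀ t, HasDerivAt e ((l + 1) * e t) t := fun t =>
    (((hasDerivAt_id t).sub_const a).const_mul (l + 1)).exp.congr_deriv (by simp [e, mul_comm])
  obtain ⟨E, hE⟩ : BddAbove (e '' Icc a b) :=
    isCompact_Icc.bddAbove_image (fun t _ => (e_deriv t).continuousAt.continuousWithinAt)
  have perturbed : ∀ η > 0, η * E < ε → ∀ t ∈ Icc a b, ‖u t‖ ≤ B t + η * e t := by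
    intro η hη hηE
    have pos : ∀ t ∈ Icc a b, 0 < B t + η * e t := fun t ht =>
      add_pos_of_nonneg_of_pos (hB0 t ht) (mul_pos hη (e_pos t))
    refine norm_le_of_inner_deriv_lt hu (fun t => (hB t).add ((e_deriv t).const_mul η))
      (fun t ht => (pos t ht).le) (ha.trans (le_add_of_nonneg_right (mul_pos hη (e_pos a)).le))
      fun t ht heq => ?_
    have htI : t ∈ Icc a b := ⟨ht.1, ht.2.le⟩
    have small : η * e t < ε :=
      (mul_le_mul_of_nonneg_left (hE (mem_image_of_mem e htI)) hη.le).trans_lt hηE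
    calc ⟪u t, u' t⟫ ≤ l * ‖u t‖ ^ 2 + g t * ‖u t‖ := h t htI (by linarith)
      _ = (B t + η * e t) * (l * B t + g t + η * (l * e t)) := by rw [heq]; ring
      _ < (B t + η * e t) * (l * B t + g t + η * ((l + 1) * e t)) := by
        have := e_pos t
        have := pos t htI
        gcongr
        linarith
  intro t ht
  have lim : Tendsto (fun η => B t + η * e t) (𝓝[>] 0) (𝓝 (B t)) := by
    have : Continuous fun η => B t + η * e t := by fun_prop
    exact (this.tendsto' 0 _ (by simp)).mono_left nhdsWithin_le_nhds
  have small : ∀ᶠ η in 𝓝[>] (0 : ℝ), η * E < ε := by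
    have : Continuous fun η : ℝ => η * E := by fun_prop
    exact ((this.tendsto' 0 0 (zero_mul E)).mono_left nhdsWithin_le_nhds).eventually_lt_const hε
  refine ge_of_tendsto lim ?_
  filter_upwards [small, self_mem_nhdsWithin] with η hηE hη using perturbed η hη hηE t ht

theorem norm_le_exp_mul_of_inner_deriv_le
    (hu : ∀ t ∈ Icc a b, HasDerivWithinAt u (u' t) (Icc a b) t)
    (hε : Real.exp (|l| * (b - a)) * ‖u a‖ < ε)
    (h : ∀ t ∈ Icc a b, ‖u t‖ < ε → ⟪u t, u' t⟫ ≤ l * ‖u t‖ ^ 2) :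
    ∀ t ∈ Icc a b, ‖u t‖ ≤ Real.exp (l * (t - a)) * ‖u a‖ := by
  refine norm_le_of_inner_deriv_le (l := l) (g := 0) (B := fun t => Real.exp (l * (t - a)) * ‖u a‖)
    hu (fun t => ?_) (fun t _ => by positivity) (sub_pos.2 hε) (by simp) fun t ht hut => ?_
  · exact ((((hasDerivAt_id t).sub_const a).const_mul l).exp.mul_const ‖u a‖).congr_deriv
      (by simp; ring)
  · have : Real.exp (l * (t - a)) * ‖u a‖ ≤ Real.exp (|l| * (b - a)) * ‖u a‖ := by
      gcongr ?_ * _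
      exact exp_mul_sub_le_of_mem_Icc l ht
    simpa using h t ht (by linarith)

end Gronwall

section Calculus

theorem gronwallBound_zero_one_nonneg (K : ℝ) {x : ℝ} (hx : 0 ≤ x) :
    0 ≤ gronwallBound 0 K 1 x := by
  rcases lt_trichotomy K 0 with hK | rfl | hK
  · have : Real.exp (K * x) ≤ 1 := Real.exp_le_one_iff.2 (mul_nonpos_of_nonpos_of_nonneg hK.le hx)
    simpa [gronwallBound_of_K_ne_0 hK.ne] using
      mul_nonneg_of_nonpos_of_nonpos (inv_nonpos.2 hK.le) (sub_nonpos.2 this)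
  · simpa [gronwallBound_K0] using hx
  · have : 1 ≤ Real.exp (K * x) := Real.one_le_exp (by positivity)
    simpa [gronwallBound_of_K_ne_0 hK.ne'] using mul_nonneg (inv_nonneg.2 hK.le) (sub_nonneg.2 this)

theorem hasDerivAt_exp_mul_gronwallBound_shift (a b k l t : ℝ) :
    HasDerivAt (fun t => Real.exp (-k * (b - t)) * gronwallBound 0 (l - k) 1 (t - a))
      (l * (Real.exp (-k * (b - t)) * gronwallBound 0 (l - k) 1 (t - a)) +
        Real.exp (-k * (b - t))) t := by
  have exp_deriv : HasDerivAt (fun t => Real.exp (-k * (b - t))) (k * Real.exp (-k * (b - t))) t :=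
    (((hasDerivAt_id t).const_sub b).const_mul (-k)).exp.congr_deriv (by simp; ring)
  exact (exp_deriv.mul (hasDerivAt_gronwallBound_shift 0 (l - k) 1 t a)).congr_deriv (by ring)

variable {X : Type*} [NormedAddCommGroup X]

theorem eventually_mul_norm_sub_lt (c : ℝ) (x : X) {η : ℝ} (hη : 0 < η) :
    ∀ᶠ y in 𝓝 x, c * ‖y - x‖ < η := by
  have : Continuous fun y => c * ‖y - x‖ := by fun_prop
  exact (this.tendsto' x 0 (by simp)).eventually_lt_const hη

theorem inner_sub_image_sub_le_of_inner_fderiv_le [InnerProductSpace ℝ X] {f : X → X}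
    {f' : X → X →L[ℝ] X} {s : Set X} {l : ℝ} {x y : X} (hs : Convex ℝ s)
    (hf : ∀ x ∈ s, HasFDerivWithinAt f (f' x) s x) (hl : ∀ x ∈ s, ∀ h, ⟪f' x h, h⟫ ≤ l * ‖h‖ ^ 2)
    (hx : x ∈ s) (hy : y ∈ s) : ⟪y - x, f y - f x⟫ ≤ l * ‖y - x‖ ^ 2 := by
  obtain ⟨z, hz, heq⟩ := domain_mvt (f := fun w => ⟪y - x, f w⟫)
    (fun w hw => (innerSL ℝ (y - x)).hasFDerivAt.comp_hasFDerivWithinAt w (hf w hw)) hs hx hy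
  calc ⟪y - x, f y - f x⟫ = ⟪y - x, f' z (y - x)⟫ := by rw [inner_sub_right]; exact heq
    _ = ⟪f' z (y - x), y - x⟫ := real_inner_comm _ _
    _ ≤ l * ‖y - x‖ ^ 2 := hl z (hs.segment_subset hx hy hz) _

theorem norm_add_sub_two_smul_le_of_lipschitzOnWith_deriv [NormedSpace ℝ X] {p p' : ℝ → X}
    {c δ : ℝ} {L : ℝ≥0} (hδ : 0 ≤ δ)
    (hp : ∀ t ∈ Icc (c - δ) (c + δ), HasDerivWithinAt p (p' t) (Icc (c - δ) (c + δ)) t)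
    (hL : LipschitzOnWith L p' (Icc (c - δ) (c + δ))) :
    ‖p (c + δ) + p (c - δ) - (2 : ℝ) • p c‖ ≤ L * δ ^ 2 := by
  have plus_maps : MapsTo (fun t => c + t) (Icc 0 δ) (Icc (c - δ) (c + δ)) := fun t ht =>
    ⟨by linarith [ht.1], by linarith [ht.2]⟩
  have minus_maps : MapsTo (fun t => c - t) (Icc 0 δ) (Icc (c - δ) (c + δ)) := fun t ht =>
    ⟨by linarith [ht.2], by linarith [ht.1]⟩
  have deriv : ∀ t ∈ Icc 0 δ, HasDerivWithinAt (fun t => p (c + t) + p (c - t) - (2 : ℝ) • p c)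
      (p' (c + t) - p' (c - t)) (Icc 0 δ) t := fun t ht => by
    have plus := (hp _ (plus_maps ht)).scomp t ((hasDerivWithinAt_id t _).const_add c) plus_maps
    have minus := (hp _ (minus_maps ht)).scomp t ((hasDerivWithinAt_id t _).const_sub c) minus_maps
    simpa [sub_eq_add_neg] using (plus.add minus).sub_const ((2 : ℝ) • p c)
  have deriv_le : ∀ t ∈ Icc 0 δ, ‖p' (c + t) - p' (c - t)‖ ≤ L * (2 * t) := fun t ht => by
    have := hL.dist_le_mul _ (plus_maps ht) _ (minus_maps ht)
    rwa [dist_eq_norm, Real.dist_eq, add_sub_sub_cancel, ← two_mul,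
      abs_of_nonneg (mul_nonneg zero_le_two ht.1)] at this
  exact image_norm_le_of_norm_deriv_right_le_deriv_boundary (B := fun t => L * t ^ 2)
    (fun t ht => (deriv t ht).continuousWithinAt)
    (fun t ht => (deriv t (Ico_subset_Icc_self ht)).mono_of_mem_nhdsWithin
      (Icc_mem_nhdsGE_of_mem ht))
    (by simp [two_smul]) (fun t => by simpa using (hasDerivAt_pow 2 t).const_mul (L : ℝ))
    (fun t ht => deriv_le t (Ico_subset_Icc_self ht)) (right_mem_Icc.2 hδ)

theorem norm_midpoint_image_sub_image_midpoint_le {Y : Type*} [NormedSpace ℝ X]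
    [NormedAddCommGroup Y] [NormedSpace ℝ Y] {f : X → Y} {f' : X → X →L[ℝ] Y} {s : Set X}
    {M : ℝ≥0} {x y : X} (hs : Convex ℝ s) (hf : ∀ x ∈ s, HasFDerivWithinAt f (f' x) s x)
    (hM : LipschitzOnWith M f' s) (hx : x ∈ s) (hy : y ∈ s) :
    ‖midpoint ℝ (f x) (f y) - f (midpoint ℝ x y)‖ ≤ M / 8 * ‖x - y‖ ^ 2 := by
  have line_maps : MapsTo (AffineMap.lineMap x y) (Icc (0 : ℝ) 1) s := fun t ht =>
    hs.lineMap_mem hx hy ht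
  have deriv : ∀ t ∈ Icc (0 : ℝ) 1, HasDerivWithinAt (fun t : ℝ => f (AffineMap.lineMap x y t))
      (f' (AffineMap.lineMap x y t) (y - x)) (Icc 0 1) t := fun t ht =>
    (hf _ (line_maps ht)).comp_hasDerivWithinAt t AffineMap.hasDerivWithinAt_lineMap line_maps
  have deriv_lip : LipschitzOnWith (M * nndist x y ^ 2)
      (fun t : ℝ => f' (AffineMap.lineMap x y t) (y - x)) (Icc 0 1) := by
    refine LipschitzOnWith.of_dist_le_mul fun t ht t' ht' => ?_
    rw [dist_eq_norm, ← sub_apply]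
    calc _ ≤ dist (f' (AffineMap.lineMap x y t)) (f' (AffineMap.lineMap x y t')) * ‖y - x‖ := by
          rw [dist_eq_norm]
          exact ContinuousLinearMap.le_opNorm _ _
      _ ≤ M * (dist t t' * dist x y) * ‖y - x‖ := by
          rw [← dist_lineMap_lineMap]
          gcongr
          exact hM.dist_le_mul _ (line_maps ht) _ (line_maps ht')
      _ = (M * nndist x y ^ 2 : ℝ≥0) * dist t t' := by
          rw [← dist_eq_norm, dist_comm y x]; push_cast; ring
  have Icc_eq : Icc (0 : ℝ) 1 = Icc (1 / 2 - 1 / 2) (1 / 2 + 1 / 2) := by norm_num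
  rw [Icc_eq] at deriv deriv_lip
  have second_diff := norm_add_sub_two_smul_le_of_lipschitzOnWith_deriv (by norm_num)
    deriv deriv_lip
  have defect_eq : midpoint ℝ (f x) (f y) - f (midpoint ℝ x y) = (2⁻¹ : ℝ) •
      (f (AffineMap.lineMap x y (1 / 2 + 1 / 2 : ℝ)) + f (AffineMap.lineMap x y (1 / 2 - 1 / 2 : ℝ))
        - (2 : ℝ) • f (AffineMap.lineMap x y (1 / 2 : ℝ))) := by
    rw [midpoint_eq_smul_add, midpoint, invOf_eq_inv]
    norm_num
    module
  rw [defect_eq, norm_smul, ← dist_eq_norm x y]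
  norm_num at second_diff ⊢
  linarith

/-- The retraction of a normed space onto its closed ball `B̄(0, ε)` along rays, for `ε > 0`. -/
noncomputable def radialRetraction [NormedSpace ℝ X] (ε : ℝ) (x : X) : X :=
  (ε / max ε ‖x‖) • x

theorem norm_radialRetraction_le [NormedSpace ℝ X] {ε : ℝ} (hε : 0 < ε) (x : X) :
    ‖radialRetraction ε x‖ ≤ ε := by
  have : 0 < max ε ‖x‖ := lt_max_of_lt_left hε
  rw [radialRetraction, norm_smul, Real.norm_of_nonneg (by positivity), div_mul_eq_mul_div,
    div_le_iff₀ this]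
  gcongr
  exact le_max_right _ _

theorem radialRetraction_of_norm_le [NormedSpace ℝ X] {ε : ℝ} (hε : 0 < ε) {x : X}
    (hx : ‖x‖ ≤ ε) : radialRetraction ε x = x := by
  rw [radialRetraction, max_eq_left hx, div_self hε.ne', one_smul]

theorem lipschitzWith_radialRetraction [NormedSpace ℝ X] {ε : ℝ} (hε : 0 < ε) :
    LipschitzWith 2 (radialRetraction ε : X → X) := by
  refine LipschitzWith.of_dist_le_mul fun x y => ?_
  have max_x_pos : 0 < max ε ‖x‖ := lt_max_of_lt_left hε
  have max_y_pos : 0 < max ε ‖y‖ := lt_max_of_lt_left hε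
  have abs_max_sub_le : |max ε ‖y‖ - max ε ‖x‖| ≤ ‖x - y‖ := by
    rw [max_comm ε, max_comm ε, norm_sub_rev]
    exact (abs_max_sub_max_le_abs ‖y‖ ‖x‖ ε).trans (abs_norm_sub_norm_le y x)
  have scale_le_one : ε / max ε ‖x‖ ≤ 1 := (div_le_one max_x_pos).2 (le_max_left _ _)
  have norm_div_le_one : ‖y‖ / max ε ‖y‖ ≤ 1 := (div_le_one max_y_pos).2 (le_max_right _ _)
  have sub_eq : radialRetraction ε x - radialRetraction ε y = (ε / max ε ‖x‖) •
      ((x - y) + ((max ε ‖y‖ - max ε ‖x‖) / max ε ‖y‖) • y) := by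
    have : ε / max ε ‖y‖ = ε / max ε ‖x‖ * (1 - (max ε ‖y‖ - max ε ‖x‖) / max ε ‖y‖) := by
      field_simp; ring
    rw [radialRetraction, radialRetraction, this]
    module
  calc dist (radialRetraction ε x) (radialRetraction ε y)
      = ε / max ε ‖x‖ * ‖(x - y) + ((max ε ‖y‖ - max ε ‖x‖) / max ε ‖y‖) • y‖ := by
        rw [dist_eq_norm, sub_eq, norm_smul, Real.norm_of_nonneg (by positivity)]
    _ ≤ 1 * (‖x - y‖ + |max ε ‖y‖ - max ε ‖x‖| * (‖y‖ / max ε ‖y‖)) := by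
        gcongr
        refine (norm_add_le _ _).trans_eq ?_
        rw [norm_smul, norm_div, Real.norm_of_nonneg max_y_pos.le, Real.norm_eq_abs]
        ring
    _ ≤ 1 * (‖x - y‖ + ‖x - y‖ * 1) := by gcongr
    _ = (2 : ℝ≥0) * dist x y := by rw [dist_eq_norm]; push_cast; ring

end Calculus

section NumericalRange

variable {X : Type*} [NormedAddCommGroup X] [InnerProductSpace ℝ X]

theorem muPlus_neg (A : X →L[ℝ] X) : muPlus (-A) = -muMinus A := by
  rw [muMinus, muPlus, ← Real.sSup_neg]
  congr 1
  ext c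
  simp [eq_neg_iff_add_eq_zero, neg_eq_iff_eq_neg, eq_comm]

theorem inner_apply_self_le_muPlus (A : X →L[ℝ] X) (x : X) : ⟪A x, x⟫ ≤ muPlus A * ‖x‖ ^ 2 := by
  rcases eq_or_ne x 0 with rfl | hx
  · simp
  have : 0 < ‖x‖ := norm_pos_iff.2 hx
  have bdd : BddAbove {c : ℝ | ∃ y : X, ‖y‖ = 1 ∧ c = ⟪A y, y⟫} := by
    refine ⟨‖A‖, ?_⟩
    rintro _ ⟨y, hy, rfl⟩
    calc ⟪A y, y⟫ ≤ ‖A y‖ * ‖y‖ := real_inner_le_norm _ _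
      _ ≤ ‖A‖ := by simpa [hy] using A.le_opNorm y
  have le_mu : ⟪A (‖x‖⁻¹ • x), ‖x‖⁻¹ • x⟫ ≤ muPlus A :=
    le_csSup bdd ⟨‖x‖⁻¹ • x, norm_smul_inv_norm (𝕜 := ℝ) hx, rfl⟩
  rw [map_smul, real_inner_smul_left, real_inner_smul_right] at le_mu
  calc ⟪A x, x⟫ = ‖x‖⁻¹ * (‖x‖⁻¹ * ⟪A x, x⟫) * ‖x‖ ^ 2 := by field_simp
    _ ≤ muPlus A * ‖x‖ ^ 2 := by gcongr

theorem muMinus_le_inner_apply_self (A : X →L[ℝ] X) (x : X) :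
    muMinus A * ‖x‖ ^ 2 ≤ ⟪A x, x⟫ := by
  have := inner_apply_self_le_muPlus (-A) x
  rw [muPlus_neg, neg_apply, inner_neg_left] at this
  linarith

end NumericalRange

theorem exists_isOpen_forall_norm_le_of_isCompact {T E : Type*} [TopologicalSpace T]
    [SeminormedAddCommGroup E] {g : T → E} {K S : Set T} (hK : IsCompact K) (hKS : K ⊆ S)
    (hg : ContinuousOn g S) : ∃ O, IsOpen O ∧ K ⊆ O ∧ ∃ L : ℝ≥0, ∀ p ∈ O ∩ S, ‖g p‖ ≤ L := by
  obtain ⟨L, hL⟩ := hK.bddAbove_image (hg.nnnorm.mono hKS)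
  obtain ⟨O, hO, preimage_eq⟩ :=
    continuousOn_iff'.1 hg.nnnorm (Iio (L + 1)) isOpen_Iio
  refine ⟨O, hO, fun p hp => ?_, L + 1, fun p hp => ?_⟩
  · have : p ∈ (‖g ·‖₊) ⁻¹' Iio (L + 1) ∩ S :=
      ⟨(hL (mem_image_of_mem _ hp)).trans_lt (lt_add_one L), hKS hp⟩
    exact (preimage_eq ▸ this).1
  · exact_mod_cast (preimage_eq.symm ▸ hp : p ∈ (‖g ·‖₊) ⁻¹' Iio (L + 1) ∩ S).1.le

section Tube

/-- The tube of radius `ε` around the graph of `γ` over `[a, b]` lies in `W`. -/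
def IsTube {X : Type*} [PseudoMetricSpace X] (W : Set (ℝ × X)) (a b : ℝ) (γ : ℝ → X) (ε : ℝ) :
    Prop :=
  ∀ t ∈ Icc a b, ∀ x ∈ ball (γ t) ε, (t, x) ∈ W

variable {X : Type*} [PseudoMetricSpace X] {W : Set (ℝ × X)} {a b : ℝ} {γ : ℝ → X}

theorem exists_isTube (hW : IsOpen W) (hγ : ContinuousOn γ (Icc a b))
    (hγW : ∀ t ∈ Icc a b, (t, γ t) ∈ W) : ∃ ε > 0, IsTube W a b γ ε := by
  have graph_compact : IsCompact ((fun t => (t, γ t)) '' Icc a b) :=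
    isCompact_Icc.image_of_continuousOn (continuousOn_id.prodMk hγ)
  obtain ⟨ε, hε, hsub⟩ := graph_compact.exists_thickening_subset_open hW (image_subset_iff.2 hγW)
  refine ⟨ε, hε, fun t ht x hx => hsub (mem_thickening_iff.2 ⟨_, mem_image_of_mem _ ht, ?_⟩)⟩
  rw [Prod.dist_eq, dist_self]
  exact max_lt hε hx

theorem IsTube.reverse {ε : ℝ} (hγ : IsTube W a b γ ε) :
    IsTube ((fun p => (-p.1, p.2)) ⁻¹' W) (-b) (-a) (fun t => γ (-t)) ε :=
  fun _ ht => hγ _ (neg_mem_Icc_iff.2 ht)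

end Tube

section Trajectory

/-- `γ` solves `γ' = f(t, γ)` on `[a, b]` and its graph lies in `W`. -/
structure IsTrajectory {X : Type*} [NormedAddCommGroup X] [NormedSpace ℝ X]
    (W : Set (ℝ × X)) (a b : ℝ) (f : ℝ → X → X) (γ : ℝ → X) : Prop where
  mem : ∀ t ∈ Icc a b, (t, γ t) ∈ W
  isIntegralCurveOn : IsIntegralCurveOn γ f (Icc a b)

theorem IsTrajectory.reverse {X : Type*} [NormedAddCommGroup X] [NormedSpace ℝ X]
    {W : Set (ℝ × X)} {a b : ℝ} {f : ℝ → X → X} {γ : ℝ → X}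
    (hγ : IsTrajectory W a b f γ) :
    IsTrajectory ((fun p => (-p.1, p.2)) ⁻¹' W) (-b) (-a) (fun t x => -f (-t) x)
      (fun t => γ (-t)) where
  mem t ht := hγ.mem _ (neg_mem_Icc_iff.2 ht)
  isIntegralCurveOn t ht := by
    simpa [Function.comp_def] using (hγ.isIntegralCurveOn _ (neg_mem_Icc_iff.2 ht)).scomp t
      (hasDerivWithinAt_neg t _) fun _ => neg_mem_Icc_iff.2

end Trajectory

section ODE

variable {X : Type*} [NormedAddCommGroup X] [InnerProductSpace ℝ X]

/-- A time-dependent vector field `f` on the part of the open set `W` over `[a, b]`, continuous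
together with its spatial derivative `f'`, whose derivative has numerical range in `[lm, lp]` and
pointwise Lipschitz constant at most `M`. -/
structure PinchedVectorField (W : Set (ℝ × X)) (a b : ℝ) (f : ℝ → X → X) (f' : ℝ → X → X →L[ℝ] X)
    (lm lp : ℝ) (M : ℝ≥0) : Prop where
  isOpen : IsOpen W
  continuousOn : ContinuousOn (fun p : ℝ × X => f p.1 p.2) (W ∩ Icc a b ×ˢ univ)
  continuousOn_deriv : ContinuousOn (fun p : ℝ × X => f' p.1 p.2) (W ∩ Icc a b ×ˢ univ)
  hasFDerivAt : ∀ t ∈ Icc a b, ∀ x, (t, x) ∈ W → HasFDerivAt (f t) (f' t x) x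
  le_inner : ∀ t ∈ Icc a b, ∀ x, (t, x) ∈ W → ∀ h, lm * ‖h‖ ^ 2 ≤ ⟪f' t x h, h⟫
  inner_le : ∀ t ∈ Icc a b, ∀ x, (t, x) ∈ W → ∀ h, ⟪f' t x h, h⟫ ≤ lp * ‖h‖ ^ 2
  eventually_dist_le : ∀ t ∈ Icc a b, ∀ x, (t, x) ∈ W → ∀ C > (M : ℝ),
    ∀ᶠ y in 𝓝 x, dist (f' t y) (f' t x) ≤ C * dist y x

variable {W : Set (ℝ × X)} {a b : ℝ} {f g : ℝ → X → X} {f' : ℝ → X → X →L[ℝ] X} {lm lp ε : ℝ}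
  {M : ℝ≥0} {γ v w : ℝ → X} {t : ℝ} {x y : X}

namespace PinchedVectorField

theorem reverse (hf : PinchedVectorField W a b f f' lm lp M) :
    PinchedVectorField ((fun p => (-p.1, p.2)) ⁻¹' W) (-b) (-a) (fun t x => -f (-t) x)
      (fun t x => -f' (-t) x) (-lp) (-lm) M := by
  have reverse_cont : Continuous fun p : ℝ × X => (-p.1, p.2) := by fun_prop
  have reverse_maps : MapsTo (fun p : ℝ × X => (-p.1, p.2))
      ((fun p => (-p.1, p.2)) ⁻¹' W ∩ Icc (-b) (-a) ×ˢ univ) (W ∩ Icc a b ×ˢ univ) :=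
    fun p hp => ⟨hp.1, neg_mem_Icc_iff.2 hp.2.1, mem_univ _⟩
  constructor
  case isOpen => exact hf.isOpen.preimage reverse_cont
  case continuousOn => exact (hf.continuousOn.comp reverse_cont.continuousOn reverse_maps).neg
  case continuousOn_deriv =>
    exact (hf.continuousOn_deriv.comp reverse_cont.continuousOn reverse_maps).neg
  case hasFDerivAt =>
    exact fun t ht x hx => (hf.hasFDerivAt _ (neg_mem_Icc_iff.2 ht) x hx).neg
  case le_inner =>
    intro t ht x hx h
    have := hf.inner_le _ (neg_mem_Icc_iff.2 ht) x hx h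
    rw [neg_apply, inner_neg_left]
    linarith
  case inner_le =>
    intro t ht x hx h
    have := hf.le_inner _ (neg_mem_Icc_iff.2 ht) x hx h
    rw [neg_apply, inner_neg_left]
    linarith
  case eventually_dist_le =>
    intro t ht x hx C hC
    simpa only [dist_neg_neg] using
      hf.eventually_dist_le _ (neg_mem_Icc_iff.2 ht) x hx C hC

theorem inner_sub_le (hf : PinchedVectorField W a b f f' lm lp M) {s : Set X} (ht : t ∈ Icc a b)
    (hs : Convex ℝ s) (hsW : ∀ x ∈ s, (t, x) ∈ W) (hx : x ∈ s) (hy : y ∈ s) :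
    ⟪y - x, f t y - f t x⟫ ≤ lp * ‖y - x‖ ^ 2 :=
  inner_sub_image_sub_le_of_inner_fderiv_le hs
    (fun z hz => (hf.hasFDerivAt t ht z (hsW z hz)).hasFDerivWithinAt)
    (fun z hz => hf.inner_le t ht z (hsW z hz)) hx hy

theorem norm_midpoint_sub_le (hf : PinchedVectorField W a b f f' lm lp M) {s : Set X}
    (ht : t ∈ Icc a b) (hs : Convex ℝ s) (hsW : ∀ x ∈ s, (t, x) ∈ W) (hx : x ∈ s) (hy : y ∈ s) :
    ‖midpoint ℝ (f t x) (f t y) - f t (midpoint ℝ x y)‖ ≤ M / 8 * ‖x - y‖ ^ 2 :=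
  norm_midpoint_image_sub_image_midpoint_le hs
    (fun z hz => (hf.hasFDerivAt t ht z (hsW z hz)).hasFDerivWithinAt)
    (lipschitzOnWith_of_convex_of_eventually_dist_le hs fun z hz C hC =>
      (hf.eventually_dist_le t ht z (hsW z hz) C hC).filter_mono nhdsWithin_le_nhds) hx hy

theorem exists_isTube_norm_le (hf : PinchedVectorField W a b f f' lm lp M)
    (hγ : IsTrajectory W a b f γ) : ∃ ε > 0, ∃ L : ℝ≥0, IsTube W a b γ ε ∧
      ∀ t ∈ Icc a b, ∀ x ∈ ball (γ t) ε, ‖f t x‖ ≤ L ∧ ‖f' t x‖ ≤ L := by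
  have γ_cont := hγ.isIntegralCurveOn.continuousOn
  have graph_compact : IsCompact ((fun t => (t, γ t)) '' Icc a b) :=
    isCompact_Icc.image_of_continuousOn (continuousOn_id.prodMk γ_cont)
  obtain ⟨O, hO, graph_sub, L, hL⟩ := exists_isOpen_forall_norm_le_of_isCompact graph_compact
    (S := W ∩ Icc a b ×ˢ univ) (image_subset_iff.2 fun t ht => ⟨hγ.mem t ht, ht, mem_univ _⟩)
    (hf.continuousOn.prodMk hf.continuousOn_deriv)
  obtain ⟨ε, hε, tube⟩ := exists_isTube (hO.inter hf.isOpen) γ_cont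
    fun t ht => ⟨graph_sub (mem_image_of_mem _ ht), hγ.mem t ht⟩
  refine ⟨ε, hε, L, fun t ht x hx => (tube t ht x hx).2, fun t ht x hx => ?_⟩
  have := hL (t, x) ⟨(tube t ht x hx).1, (tube t ht x hx).2, ht, mem_univ _⟩
  exact ⟨(norm_fst_le _).trans this, (norm_snd_le _).trans this⟩

theorem norm_sub_le (hf : PinchedVectorField W a b f f' lm lp M) (hγ : IsTrajectory W a b f γ)
    (tube : IsTube W a b γ ε) (hv : IsIntegralCurveOn v g (Icc a b))
    (hg : ∀ t ∈ Icc a b, v t ∈ ball (γ t) ε → g t (v t) = f t (v t))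
    (hε : Real.exp (|lp| * (b - a)) * ‖v a - γ a‖ < ε) :
    ∀ t ∈ Icc a b, ‖v t - γ t‖ ≤ Real.exp (lp * (t - a)) * ‖v a - γ a‖ := by
  have ε_pos : 0 < ε := (by positivity : (0 : ℝ) ≤ _).trans_lt hε
  refine norm_le_exp_mul_of_inner_deriv_le (u := fun t => v t - γ t)
    (fun t ht => (hv t ht).sub (hγ.isIntegralCurveOn t ht)) hε fun t ht hlt => ?_
  have v_mem : v t ∈ ball (γ t) ε := mem_ball_iff_norm.2 hlt
  rw [hg t ht v_mem]
  exact hf.inner_sub_le ht (convex_ball _ _) (tube t ht) (mem_ball_self ε_pos) v_mem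

theorem norm_sub_le_reverse (hf : PinchedVectorField W a b f f' lm lp M)
    (hγ : IsTrajectory W a b f γ) (tube : IsTube W a b γ ε) (hv : IsTrajectory W a b f v)
    (hε : Real.exp (|lm| * (b - a)) * ‖v b - γ b‖ < ε) :
    ∀ t ∈ Icc a b, ‖v t - γ t‖ ≤ Real.exp (-lm * (b - t)) * ‖v b - γ b‖ := by
  intro t ht
  have := hf.reverse.norm_sub_le hγ.reverse tube.reverse hv.reverse.isIntegralCurveOn
    (fun _ _ _ => rfl) (by simpa [add_comm, ← sub_eq_add_neg] using hε) (-t)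
    ⟨neg_le_neg ht.2, neg_le_neg ht.1⟩
  simpa [add_comm, ← sub_eq_add_neg] using this

theorem norm_sub_le_reverse_of_mem_ball (hf : PinchedVectorField W a b f f' lm lp M)
    (tube : IsTube W a b γ ε) (hv : IsTrajectory W a b f v) (hw : IsTrajectory W a b f w)
    (hvγ : ∀ t ∈ Icc a b, v t ∈ ball (γ t) ε) (hwγ : ∀ t ∈ Icc a b, w t ∈ ball (γ t) ε) :
    ∀ t ∈ Icc a b, ‖v t - w t‖ ≤ Real.exp (-lm * (b - t)) * ‖v b - w b‖ := by
  intro t ht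
  have := norm_le_exp_mul_of_inner_deriv_le (l := -lm) (u := fun t => v (-t) - w (-t))
    (fun t ht => (hv.reverse.isIntegralCurveOn t ht).sub (hw.reverse.isIntegralCurveOn t ht))
    (lt_add_one _) (fun t ht _ => hf.reverse.inner_sub_le ht (convex_ball _ _)
      (tube.reverse t ht) (hwγ _ (neg_mem_Icc_iff.2 ht)) (hvγ _ (neg_mem_Icc_iff.2 ht))) (-t)
    ⟨neg_le_neg ht.2, neg_le_neg ht.1⟩
  simpa [add_comm, ← sub_eq_add_neg] using this

theorem eqOn_of_eq_left (hf : PinchedVectorField W a b f f' lm lp M)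
    (hv : IsTrajectory W a b f v) (hw : IsTrajectory W a b f w) (h : v a = w a) :
    EqOn v w (Icc a b) := fun t ht => by
  obtain ⟨ε, hε, tube⟩ := exists_isTube hf.isOpen hw.isIntegralCurveOn.continuousOn hw.mem
  simpa [h, sub_eq_zero] using
    hf.norm_sub_le hw tube hv.isIntegralCurveOn (fun _ _ _ => rfl) (by simpa [h]) t ht

theorem eqOn_of_eq_right (hf : PinchedVectorField W a b f f' lm lp M)
    (hv : IsTrajectory W a b f v) (hw : IsTrajectory W a b f w) (h : v b = w b) :
    EqOn v w (Icc a b) := fun t ht => by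
  simpa using hf.reverse.eqOn_of_eq_left hv.reverse hw.reverse (by simpa)
    (⟨neg_le_neg ht.2, neg_le_neg ht.1⟩ : -t ∈ Icc (-b) (-a))

/-- Retracting onto half the tube makes the field globally Lipschitz without changing it near `γ`,
so Picard–Lindelöf yields solutions on all of `[a, b]`. -/
theorem exists_isIntegralCurveOn_radialRetraction [CompleteSpace X] {L : ℝ≥0}
    (hf : PinchedVectorField W a b f f' lm lp M) (hab : a ≤ b) (hγ : ContinuousOn γ (Icc a b))
    (hε : 0 < ε) (tube : IsTube W a b γ ε)
    (hL : ∀ t ∈ Icc a b, ∀ x ∈ ball (γ t) ε, ‖f t x‖ ≤ L ∧ ‖f' t x‖ ≤ L) (z : X) :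
    ∃ ψ, ψ a = z ∧ IsIntegralCurveOn ψ
      (fun t x => f t (γ t + radialRetraction (ε / 2) (x - γ t))) (Icc a b) := by
  have retract_mem : ∀ t x, γ t + radialRetraction (ε / 2) (x - γ t) ∈ ball (γ t) ε := fun t x => by
    rw [mem_ball_iff_norm, add_sub_cancel_left]
    exact (norm_radialRetraction_le (half_pos hε) _).trans_lt (half_lt_self hε)
  have retract_lip : ∀ t, LipschitzWith 2 fun x => γ t + radialRetraction (ε / 2) (x - γ t) :=
    fun t => LipschitzWith.of_dist_le_mul fun x y => by
      simpa using (lipschitzWith_radialRetraction (half_pos hε)).dist_le_mul (x - γ t) (y - γ t)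
  have f_lip : ∀ t ∈ Icc a b, LipschitzOnWith L (f t) (ball (γ t) ε) := fun t ht =>
    (convex_ball _ _).lipschitzOnWith_of_nnnorm_hasFDerivWithin_le
      (fun x hx => (hf.hasFDerivAt t ht x (tube t ht x hx)).hasFDerivWithinAt)
      fun x hx => (hL t ht x hx).2
  have picard : IsPicardLindelof (fun t x => f t (γ t + radialRetraction (ε / 2) (x - γ t)))
      (⟨a, left_mem_Icc.2 hab⟩ : Icc a b) z (L * (b - a).toNNReal) 0 L (L * 2) := by
    constructor
    case lipschitzOnWith =>
      exact fun t ht => (f_lip t ht).comp (retract_lip t).lipschitzOnWith fun x _ => retract_mem t x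
    case continuousOn =>
      have retract_cont := (lipschitzWith_radialRetraction (X := X) (half_pos hε)).continuous
      exact fun x _ => hf.continuousOn.comp (continuousOn_id.prodMk
        (hγ.add (retract_cont.comp_continuousOn (continuousOn_const.sub hγ))))
        fun t ht => ⟨tube t ht _ (retract_mem t x), ht, mem_univ _⟩
    case norm_le => exact fun t ht x _ => (hL t ht _ (retract_mem t x)).1
    case mul_max_le => simp [hab]
  exact picard.exists_eq_forall_mem_Icc_hasDerivWithinAt₀

theorem eventually_exists_isTrajectory [CompleteSpace X]
    (hf : PinchedVectorField W a b f f' lm lp M) (hab : a ≤ b) (hγ : IsTrajectory W a b f γ) :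
    ∀ᶠ z in 𝓝 (γ a), ∃ ψ, IsTrajectory W a b f ψ ∧ ψ a = z ∧
      ∀ t ∈ Icc a b, ‖ψ t - γ t‖ ≤ Real.exp (lp * (t - a)) * ‖z - γ a‖ := by
  obtain ⟨ε, hε, L, tube, hL⟩ := hf.exists_isTube_norm_le hγ
  filter_upwards [eventually_mul_norm_sub_lt (Real.exp (|lp| * (b - a))) (γ a) (half_pos hε)]
    with z hz
  obtain ⟨ψ, rfl, hψ⟩ := hf.exists_isIntegralCurveOn_radialRetraction hab
    hγ.isIntegralCurveOn.continuousOn hε tube hL z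
  have field_eq : ∀ t, ψ t ∈ ball (γ t) (ε / 2) →
      f t (γ t + radialRetraction (ε / 2) (ψ t - γ t)) = f t (ψ t) := fun t h => by
    rw [radialRetraction_of_norm_le (half_pos hε) (mem_ball_iff_norm.1 h).le, add_sub_cancel]
  have half_sub : ∀ t, ball (γ t) (ε / 2) ⊆ ball (γ t) ε := fun t =>
    ball_subset_ball (half_le_self hε.le)
  have close := hf.norm_sub_le hγ (fun t ht x hx => tube t ht x (half_sub t hx)) hψ
    (fun t _ => field_eq t) hz
  have mem : ∀ t ∈ Icc a b, ψ t ∈ ball (γ t) (ε / 2) := fun t ht => by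
    refine mem_ball_iff_norm.2 (((close t ht).trans ?_).trans_lt hz)
    gcongr ?_ * _
    exact exp_mul_sub_le_of_mem_Icc lp ht
  refine ⟨ψ, ⟨fun t ht => tube t ht _ (half_sub t (mem t ht)), fun t ht => ?_⟩, rfl, close⟩
  exact (hψ t ht).congr_deriv (field_eq t (mem t ht))

theorem inner_sub_midpoint_le (hf : PinchedVectorField W a b f f' lm lp M) {s : Set X}
    (ht : t ∈ Icc a b) (hs : Convex ℝ s) (hsW : ∀ x ∈ s, (t, x) ∈ W) {c : X} (hc : c ∈ s)
    (hx : x ∈ s) (hy : y ∈ s) :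
    ⟪c - midpoint ℝ x y, f t c - midpoint ℝ (f t x) (f t y)⟫ ≤
      lp * ‖c - midpoint ℝ x y‖ ^ 2 + M / 8 * ‖x - y‖ ^ 2 * ‖c - midpoint ℝ x y‖ := by
  have defect := hf.norm_midpoint_sub_le ht hs hsW hx hy
  have mid_mem : midpoint ℝ x y ∈ s := hs.midpoint_mem hx hy
  set m := midpoint ℝ x y
  set q := midpoint ℝ (f t x) (f t y)
  calc ⟪c - m, f t c - q⟫ = ⟪c - m, f t c - f t m⟫ + ⟪c - m, f t m - q⟫ := by
        rw [← inner_add_right, sub_add_sub_cancel]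
    _ ≤ lp * ‖c - m‖ ^ 2 + ‖c - m‖ * ‖f t m - q‖ :=
        add_le_add (hf.inner_sub_le ht hs hsW mid_mem hc) (real_inner_le_norm _ _)
    _ ≤ lp * ‖c - m‖ ^ 2 + M / 8 * ‖x - y‖ ^ 2 * ‖c - m‖ := by
        rw [mul_comm ‖c - m‖, norm_sub_rev (f t m)]
        gcongr

theorem norm_sub_midpoint_le (hf : PinchedVectorField W a b f f' lm lp M) (hab : a ≤ b)
    (hε : 0 < ε) (tube : IsTube W a b γ ε) (hγ : IsTrajectory W a b f γ)
    (hv : IsTrajectory W a b f v) (hw : IsTrajectory W a b f w)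
    (hvγ : ∀ t ∈ Icc a b, v t ∈ ball (γ t) ε) (hwγ : ∀ t ∈ Icc a b, w t ∈ ball (γ t) ε)
    (hmid : γ a = midpoint ℝ (v a) (w a)) :
    ‖γ b - midpoint ℝ (v b) (w b)‖ ≤
      M / 8 * gronwallBound 0 (lp - 2 * lm) 1 (b - a) * ‖v b - w b‖ ^ 2 := by
  set C := M / 8 * ‖v b - w b‖ ^ 2
  have B_deriv := fun t => (hasDerivAt_exp_mul_gronwallBound_shift a b (2 * lm) lp t).const_mul C
  have u_deriv : ∀ t ∈ Icc a b, HasDerivWithinAt (fun t => γ t - midpoint ℝ (v t) (w t))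
      (f t (γ t) - midpoint ℝ (f t (v t)) (f t (w t))) (Icc a b) t := fun t ht => by
    simp only [midpoint_eq_smul_add]
    exact (hγ.isIntegralCurveOn t ht).sub
      (((hv.isIntegralCurveOn t ht).add (hw.isIntegralCurveOn t ht)).const_smul _)
  have vw_le : ∀ t ∈ Icc a b, M / 8 * ‖v t - w t‖ ^ 2 ≤ C * Real.exp (-(2 * lm) * (b - t)) :=
    fun t ht => by
      calc M / 8 * ‖v t - w t‖ ^ 2 ≤ M / 8 * (Real.exp (-lm * (b - t)) * ‖v b - w b‖) ^ 2 := by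
            gcongr
            exact hf.norm_sub_le_reverse_of_mem_ball tube hv hw hvγ hwγ t ht
        _ = C * Real.exp (-(2 * lm) * (b - t)) := by
            simp only [C, mul_pow, ← Real.exp_nat_mul]; ring_nf
  have := norm_le_of_inner_deriv_le u_deriv
    (fun t => (B_deriv t).congr_deriv (by rw [mul_add, mul_left_comm]))
    (fun t ht => mul_nonneg (by positivity) (mul_nonneg (Real.exp_pos _).le
      (gronwallBound_zero_one_nonneg _ (sub_nonneg.2 ht.1)))) one_pos
    (by simp [hmid, gronwallBound_x0]) (fun t ht _ => ?_) b (right_mem_Icc.2 hab)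
  · refine this.trans_eq ?_
    simp only [C, sub_self, mul_zero, Real.exp_zero]
    ring
  · refine (hf.inner_sub_midpoint_le ht (convex_ball _ _) (tube t ht) (mem_ball_self hε)
      (hvγ t ht) (hwγ t ht)).trans ?_
    gcongr _ + ?_ * _
    exact vw_le t ht

variable {φ : X → ℝ → X} {x₀ : X} {r : ℝ}

theorem injOn_trajectory_left (hf : PinchedVectorField W a b f f' lm lp M) (hab : a ≤ b)
    (hφ : ∀ x ∈ closedBall x₀ r, IsTrajectory W a b f (φ x))
    (hφb : ∀ x ∈ closedBall x₀ r, φ x b = x) : InjOn (fun x => φ x a) (closedBall x₀ r) :=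
  fun x hx y hy h => by
    rw [← hφb x hx, ← hφb y hy]
    exact hf.eqOn_of_eq_left (hφ x hx) (hφ y hy) h (right_mem_Icc.2 hab)

theorem lipschitzOnWith_trajectory_left (hf : PinchedVectorField W a b f f' lm lp M) (hab : a ≤ b)
    (hφ : ∀ x ∈ closedBall x₀ r, IsTrajectory W a b f (φ x))
    (hφb : ∀ x ∈ closedBall x₀ r, φ x b = x) :
    LipschitzOnWith (Real.exp (-lm * (b - a))).toNNReal (fun x => φ x a) (closedBall x₀ r) := by
  refine lipschitzOnWith_of_convex_of_eventually_dist_le (convex_closedBall x₀ r)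
    fun x hx C hC => ?_
  rw [Real.coe_toNNReal _ (Real.exp_pos _).le] at hC
  obtain ⟨ε, hε, tube⟩ := exists_isTube hf.isOpen (hφ x hx).isIntegralCurveOn.continuousOn
    (hφ x hx).mem
  filter_upwards [(eventually_mul_norm_sub_lt (Real.exp (|lm| * (b - a))) x hε).filter_mono
    nhdsWithin_le_nhds, self_mem_nhdsWithin] with y hyx hy
  have := hf.norm_sub_le_reverse (hφ x hx) tube (hφ y hy) (by rwa [hφb x hx, hφb y hy]) a
    (left_mem_Icc.2 hab)
  rw [hφb x hx, hφb y hy, ← dist_eq_norm, ← dist_eq_norm] at this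
  exact this.trans (by gcongr)

theorem eventually_exists_trajectory_left_eq [CompleteSpace X]
    (hf : PinchedVectorField W a b f f' lm lp M) (hab : a ≤ b)
    (hφ : ∀ x ∈ closedBall x₀ r, IsTrajectory W a b f (φ x))
    (hφb : ∀ x ∈ closedBall x₀ r, φ x b = x) (hx : x ∈ ball x₀ r) :
    ∀ᶠ z in 𝓝 (φ x a), ∃ y ∈ ball x₀ r, φ y a = z ∧
      ∀ t ∈ Icc a b, ‖φ y t - φ x t‖ ≤ Real.exp (lp * (t - a)) * ‖z - φ x a‖ := by
  have hx' := ball_subset_closedBall hx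
  filter_upwards [hf.eventually_exists_isTrajectory hab (hφ x hx'),
    eventually_mul_norm_sub_lt (Real.exp (lp * (b - a))) (φ x a) (sub_pos.2 hx)]
  rintro _ ⟨ψ, hψ, rfl, close⟩ small
  have ψb_mem : ψ b ∈ ball x₀ r := by
    have close_b := close b (right_mem_Icc.2 hab)
    rw [hφb x hx', ← dist_eq_norm] at close_b
    calc dist (ψ b) x₀ ≤ dist (ψ b) x + dist x x₀ := dist_triangle _ _ _
      _ < r := lt_sub_iff_add_lt.1 (close_b.trans_lt small)
  have ψb_mem' := ball_subset_closedBall ψb_mem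
  have eqOn : EqOn (φ (ψ b)) ψ (Icc a b) :=
    hf.eqOn_of_eq_right (hφ _ ψb_mem') hψ (hφb _ ψb_mem')
  refine ⟨ψ b, ψb_mem, eqOn (left_mem_Icc.2 hab), fun t ht => ?_⟩
  rw [eqOn ht]
  exact close t ht

theorem eventually_norm_sub_midpoint_le [CompleteSpace X] {G : X → X}
    (hf : PinchedVectorField W a b f f' lm lp M) (hab : a ≤ b)
    (hφ : ∀ x ∈ closedBall x₀ r, IsTrajectory W a b f (φ x))
    (hφb : ∀ x ∈ closedBall x₀ r, φ x b = x)
    (hG : LeftInvOn G (fun x => φ x a) (ball x₀ r)) (hx : x ∈ ball x₀ r) :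
    ∀ᶠ h in 𝓝 (0 : X), ‖x - midpoint ℝ (G (φ x a + h)) (G (φ x a - h))‖ ≤
      M / 8 * gronwallBound 0 (lp - 2 * lm) 1 (b - a) *
        ‖G (φ x a + h) - G (φ x a - h)‖ ^ 2 := by
  have trajectory : ∀ y ∈ ball x₀ r, IsTrajectory W a b f (φ y) := fun y hy =>
    hφ y (ball_subset_closedBall hy)
  have φb_eq : ∀ y ∈ ball x₀ r, φ y b = y := fun y hy => hφb y (ball_subset_closedBall hy)
  obtain ⟨ε, hε, tube⟩ := exists_isTube hf.isOpen
    (trajectory x hx).isIntegralCurveOn.continuousOn (trajectory x hx).mem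
  have near : ∀ᶠ z in 𝓝 (φ x a), G z ∈ ball x₀ r ∧ φ (G z) a = z ∧
      ∀ t ∈ Icc a b, φ (G z) t ∈ ball (φ x t) ε := by
    filter_upwards [hf.eventually_exists_trajectory_left_eq hab hφ hφb hx,
      eventually_mul_norm_sub_lt (Real.exp (|lp| * (b - a))) (φ x a) hε]
    rintro _ ⟨y, hy, rfl, close⟩ small
    rw [hG hy]
    refine ⟨hy, rfl, fun t ht => mem_ball_iff_norm.2 (((close t ht).trans ?_).trans_lt small)⟩
    gcongr ?_ * _
    exact exp_mul_sub_le_of_mem_Icc lp ht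
  have plus_lim : Tendsto (fun h => φ x a + h) (𝓝 0) (𝓝 (φ x a)) :=
    (continuous_const.add continuous_id).tendsto' _ _ (add_zero _)
  have minus_lim : Tendsto (fun h => φ x a - h) (𝓝 0) (𝓝 (φ x a)) :=
    (continuous_const.sub continuous_id).tendsto' _ _ (sub_zero _)
  filter_upwards [plus_lim.eventually near, minus_lim.eventually near] with h
    ⟨plus_mem, plus_eq, plus_tube⟩ ⟨minus_mem, minus_eq, minus_tube⟩
  have := hf.norm_sub_midpoint_le hab hε tube (trajectory x hx) (trajectory _ plus_mem)
    (trajectory _ minus_mem) plus_tube minus_tube (by rw [plus_eq, minus_eq, midpoint_add_sub])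
  rwa [φb_eq x hx, φb_eq _ plus_mem, φb_eq _ minus_mem] at this

theorem almostMidpointChart [CompleteSpace X] {G : X → X}
    (hf : PinchedVectorField W a b f f' lm lp M) (hab : a ≤ b)
    (hφ : ∀ x ∈ closedBall x₀ r, IsTrajectory W a b f (φ x))
    (hφb : ∀ x ∈ closedBall x₀ r, φ x b = x)
    (hG : LeftInvOn G (fun x => φ x a) (ball x₀ r)) :
    AlmostMidpointChart (fun x => φ x a) G x₀ r
      (M / 8 * gronwallBound 0 (lp - 2 * lm) 1 (b - a)) (Real.exp (-lm * (b - a))).toNNReal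
      (Real.exp (lp * (b - a))).toNNReal where
  lipschitzOnWith := hf.lipschitzOnWith_trajectory_left hab hφ hφb
  leftInvOn := hG
  isOpen_image := isOpen_iff_mem_nhds.2 <| by
    rintro _ ⟨x, hx, rfl⟩
    filter_upwards [hf.eventually_exists_trajectory_left_eq hab hφ hφb hx]
      with z ⟨y, hy, hyz, _⟩ using ⟨y, hy, hyz⟩
  eventually_dist_le := by
    rintro _ ⟨x, hx, rfl⟩
    filter_upwards [hf.eventually_exists_trajectory_left_eq hab hφ hφb hx]
    rintro _ ⟨y, hy, rfl, close⟩
    have := close b (right_mem_Icc.2 hab)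
    rw [hφb x (ball_subset_closedBall hx), hφb y (ball_subset_closedBall hy)] at this
    rwa [hG hx, hG hy, Real.coe_toNNReal _ (Real.exp_pos _).le, dist_eq_norm, dist_eq_norm]
  eventually_norm_sub_midpoint_le := by
    rintro _ ⟨x, hx, rfl⟩
    simpa only [hG hx] using hf.eventually_norm_sub_midpoint_le hab hφ hφb hG hx

theorem convex_image_left_of_right_eq [CompleteSpace X]
    (hf : PinchedVectorField W a b f f' lm lp M) (hab : a ≤ b) (hr : r ≠ 0)
    (hφ : ∀ x ∈ closedBall x₀ r, IsTrajectory W a b f (φ x))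
    (hφb : ∀ x ∈ closedBall x₀ r, φ x b = x)
    (hM : r * M * gronwallBound 0 (lp - 2 * lm) 1 (b - a) ≤ 1) :
    Convex ℝ ((fun x => φ x a) '' closedBall x₀ r) := by
  have inj := (hf.injOn_trajectory_left hab hφ hφb).mono ball_subset_closedBall
  exact (hf.almostMidpointChart hab hφ hφb inj.leftInvOn_invFunOn).convex_image_closedBall hr
    (by linarith)

theorem convex_image_right_of_left_eq [CompleteSpace X]
    (hf : PinchedVectorField W a b f f' lm lp M) (hab : a ≤ b) (hr : r ≠ 0)
    (hφ : ∀ x ∈ closedBall x₀ r, IsTrajectory W a b f (φ x))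
    (hφa : ∀ x ∈ closedBall x₀ r, φ x a = x)
    (hM : r * M * gronwallBound 0 (2 * lp - lm) 1 (b - a) ≤ 1) :
    Convex ℝ ((fun x => φ x b) '' closedBall x₀ r) := by
  have := hf.reverse.convex_image_left_of_right_eq (φ := fun x t => φ x (-t)) (neg_le_neg hab) hr
    (fun x hx => (hφ x hx).reverse) (by simpa using hφa)
    (by convert hM using 3 <;> ring)
  simpa using this

end PinchedVectorField

end ODE

theorem eventually_dist_le_of_limsup_le {E F : Type*} [NormedAddCommGroup E]
    [SeminormedAddCommGroup F] {g : E → F} {x : E} {L M C : ℝ}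
    (hg : ∀ᶠ y in 𝓝 x, dist (g y) (g x) ≤ L * dist y x)
    (hM : limsup (fun h => ‖g (x + h) - g x‖ / ‖h‖) (𝓝[≠] 0) ≤ M) (hC : M < C) :
    ∀ᶠ y in 𝓝 x, dist (g y) (g x) ≤ C * dist y x := by
  have add_lim : Tendsto (fun h => x + h) (𝓝[≠] 0) (𝓝 x) :=
    ((continuous_const.add continuous_id).tendsto' _ _ (add_zero x)).mono_left nhdsWithin_le_nhds
  have bounded : ∀ᶠ h in 𝓝[≠] (0 : E), ‖g (x + h) - g x‖ / ‖h‖ ≤ L := by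
    filter_upwards [add_lim.eventually hg, self_mem_nhdsWithin] with h hh h_ne
    rw [div_le_iff₀ (norm_pos_iff.2 h_ne)]
    simpa [dist_eq_norm] using hh
  have lt_C := eventually_nhdsWithin_iff.1
    (eventually_lt_of_limsup_lt (hM.trans_lt hC) (isBoundedUnder_of_eventually_le bounded))
  have sub_lim : Tendsto (fun y => y - x) (𝓝 x) (𝓝 0) :=
    (continuous_id.sub continuous_const).tendsto' _ _ (sub_self x)
  filter_upwards [sub_lim.eventually lt_C] with y hy
  rcases eq_or_ne y x with rfl | hne
  · simp
  · have lt := hy (sub_ne_zero.2 hne)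
    rw [div_lt_iff₀ (norm_pos_iff.2 (sub_ne_zero.2 hne)), add_sub_cancel] at lt
    simpa only [dist_eq_norm] using lt.le

theorem gronwallBound_zero_one_eq_ite (K x : ℝ) :
    gronwallBound 0 K 1 x = if K = 0 then x else (Real.exp (K * x) - 1) / K := by
  split_ifs with hK
  · simp [hK, gronwallBound_K0]
  · simp [gronwallBound_of_K_ne_0 hK, div_eq_inv_mul]

theorem pinchedVectorField_of_mu_bounds {X : Type*} [NormedAddCommGroup X] [InnerProductSpace ℝ X]
    {W : Set (ℝ × X)} {I : Set ℝ} {a b lm lp M : ℝ} {f : ℝ → X → X} {f' : ℝ → X → X →L[ℝ] X}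
    (hW : IsOpen W) (hI : Icc a b ⊆ I)
    (hf : ContinuousOn (fun p : ℝ × X => f p.1 p.2) (W ∩ I ×ˢ univ))
    (hf' : ContinuousOn (fun p : ℝ × X => f' p.1 p.2) (W ∩ I ×ˢ univ))
    (hderiv : ∀ p ∈ W ∩ I ×ˢ univ, HasFDerivAt (f p.1) (f' p.1 p.2) p.2)
    (hlip : ∀ p ∈ W ∩ I ×ˢ univ, ∃ ε > 0, ∃ L : ℝ≥0,
      ∀ x ∈ ball p.2 ε, ∀ y ∈ ball p.2 ε, (p.1, x) ∈ W ∩ I ×ˢ univ → (p.1, y) ∈ W ∩ I ×ˢ univ →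
        ‖f' p.1 x - f' p.1 y‖ ≤ L * ‖x - y‖)
    (hmu : ∀ p ∈ W ∩ I ×ˢ univ, lm ≤ muMinus (f' p.1 p.2) ∧ muPlus (f' p.1 p.2) ≤ lp)
    (hM : ∀ p ∈ W ∩ I ×ˢ univ,
      limsup (fun h : X => ‖f' p.1 (p.2 + h) - f' p.1 p.2‖ / ‖h‖) (𝓝[≠] 0) ≤ M) :
    PinchedVectorField W a b f f' lm lp M.toNNReal := by
  have mem : ∀ t ∈ Icc a b, ∀ x, (t, x) ∈ W → (t, x) ∈ W ∩ I ×ˢ univ := fun t ht x hx =>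
    ⟨hx, hI ht, mem_univ _⟩
  have subset : W ∩ Icc a b ×ˢ univ ⊆ W ∩ I ×ˢ univ := fun p hp => mem p.1 hp.2.1 p.2 hp.1
  constructor
  case isOpen => exact hW
  case continuousOn => exact hf.mono subset
  case continuousOn_deriv => exact hf'.mono subset
  case hasFDerivAt => exact fun t ht x hx => hderiv _ (mem t ht x hx)
  case le_inner =>
    intro t ht x hx h
    exact (mul_le_mul_of_nonneg_right (hmu _ (mem t ht x hx)).1 (sq_nonneg _)).trans
      (muMinus_le_inner_apply_self _ h)
  case inner_le =>
    intro t ht x hx h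
    exact (inner_apply_self_le_muPlus _ h).trans
      (mul_le_mul_of_nonneg_right (hmu _ (mem t ht x hx)).2 (sq_nonneg _))
  case eventually_dist_le =>
    intro t ht x hx C hC
    obtain ⟨ε, hε, L, hL⟩ := hlip _ (mem t ht x hx)
    refine eventually_dist_le_of_limsup_le (g := f' t) (L := L) ?_ (hM (t, x) (mem t ht x hx))
      ((Real.le_coe_toNNReal M).trans_lt hC)
    have slice_mem : ∀ᶠ y in 𝓝 x, (t, y) ∈ W :=
      (Continuous.prodMk_right t).continuousAt.eventually (hW.mem_nhds hx)
    filter_upwards [slice_mem, ball_mem_nhds x hε] with y hyW hy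
    simpa only [dist_eq_norm] using
      hL y hy x (mem_ball_self hε) (mem t ht y hyW) (mem t ht x hx)

/-- Same setting as Statement 6, but with
`λ₋ ≤ μ₋(D₂f(τ,x)) ≤ μ₊(D₂f(τ,x)) ≤ λ₊` on `U` and `M₁ = 2λ₊ − λ₋` if `t₁ ≥ t₀`,
`M₁ = λ₊ − 2λ₋` otherwise.  If `r·M₂·K(M₁) ≤ 1` then the reachable set
`φ(t₁,t₀,B̄(x₀,r))` is convex. -/
theorem stmt_7 {X : Type*} [NormedAddCommGroup X] [InnerProductSpace ℝ X] [CompleteSpace X]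
    (I : Set ℝ) (hI : I.OrdConnected)
    (U : Set (ℝ × X)) (hU : ∃ W : Set (ℝ × X), IsOpen W ∧ U = W ∩ I ×ˢ (univ : Set X))
    (f : ℝ → X → X) (f' : ℝ → X → X →L[ℝ] X)
    (hfc : ContinuousOn (fun p : ℝ × X => f p.1 p.2) U)
    (hf'c : ContinuousOn (fun p : ℝ × X => f' p.1 p.2) U)
    (hderiv : ∀ p ∈ U, HasFDerivAt (fun x => f p.1 x) (f' p.1 p.2) p.2)
    (hlip : ∀ p ∈ U, ∃ ε > 0, ∃ L : NNReal,
      ∀ x ∈ ball p.2 ε, ∀ y ∈ ball p.2 ε, (p.1, x) ∈ U → (p.1, y) ∈ U →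
        ‖f' p.1 x - f' p.1 y‖ ≤ L * ‖x - y‖)
    (x₀ : X) (r : ℝ) (hr : 0 < r) (t₀ t₁ : ℝ) (ht₀ : t₀ ∈ I) (ht₁ : t₁ ∈ I)
    (φ : ℝ → ℝ → X → X)
    (hφ : ∀ x ∈ closedBall x₀ r, φ t₀ t₀ x = x ∧
      ∀ τ ∈ uIcc t₀ t₁, (τ, φ τ t₀ x) ∈ U ∧
        HasDerivWithinAt (fun s => φ s t₀ x) (f τ (φ τ t₀ x)) (uIcc t₀ t₁) τ)
    (lm lp M₁ M₂ : ℝ)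
    (hlmlp : ∀ p ∈ U, lm ≤ muMinus (f' p.1 p.2) ∧
      muMinus (f' p.1 p.2) ≤ muPlus (f' p.1 p.2) ∧ muPlus (f' p.1 p.2) ≤ lp)
    (hM₁ : M₁ = if t₀ ≤ t₁ then 2 * lp - lm else lp - 2 * lm)
    (hM₂ : ∀ p ∈ U,
      limsup (fun h : X => ‖f' p.1 (p.2 + h) - f' p.1 p.2‖ / ‖h‖) (𝓝[≠] (0:X)) ≤ M₂)
    (K : ℝ → ℝ)
    (hK : ∀ α : ℝ, K α = if α = 0 then |t₁ - t₀| else (Real.exp (α * |t₁ - t₀|) - 1) / α)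
    (hrad : r * M₂ * K M₁ ≤ 1) :
    Convex ℝ ((fun x => φ t₁ t₀ x) '' closedBall x₀ r) := by
  obtain ⟨W, hW, rfl⟩ := hU
  have field : ∀ a b, uIcc t₀ t₁ = Icc a b → PinchedVectorField W a b f f' lm lp M₂.toNNReal :=
    fun a b hab => pinchedVectorField_of_mu_bounds hW (hab ▸ hI.uIcc_subset ht₀ ht₁) hfc hf'c
      hderiv hlip (fun p hp => ⟨(hlmlp p hp).1, (hlmlp p hp).2.2⟩) hM₂
  have trajectory : ∀ a b, uIcc t₀ t₁ = Icc a b →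
      ∀ x ∈ closedBall x₀ r, IsTrajectory W a b f (fun s => φ s t₀ x) := fun a b hab x hx =>
    ⟨fun τ hτ => ((hφ x hx).2 τ (hab ▸ hτ)).1.1, fun τ hτ => hab ▸ ((hφ x hx).2 τ (hab ▸ hτ)).2⟩
  have rad : r * M₂.toNNReal * gronwallBound 0 M₁ 1 |t₁ - t₀| ≤ 1 := by
    rw [gronwallBound_zero_one_eq_ite, ← hK]
    rcases le_total 0 M₂ with h | h
    · rwa [Real.coe_toNNReal _ h]
    · simp [Real.toNNReal_of_nonpos h]
  have initial : ∀ x ∈ closedBall x₀ r, φ t₀ t₀ x = x := fun x hx => (hφ x hx).1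
  rcases le_or_gt t₀ t₁ with h | h
  · rw [hM₁, if_pos h, abs_of_nonneg (sub_nonneg.2 h)] at rad
    exact (field _ _ (uIcc_of_le h)).convex_image_right_of_left_eq h hr.ne'
      (trajectory _ _ (uIcc_of_le h)) initial rad
  · rw [hM₁, if_neg h.not_ge, abs_sub_comm, abs_of_pos (sub_pos.2 h)] at rad
    exact (field _ _ (uIcc_of_ge h.le)).convex_image_left_of_right_eq h.le hr.ne'
      (trajectory _ _ (uIcc_of_ge h.le)) initial rad
end

section
/- Let X be a real Hilbert space with dim X ≥ 2, and let t₁, t₀, λ₋, λ₊, M₂, r ∈ ℝ with λ₋ < λ₊ and M₂ > 0. Define M₁ = 2λ₊ − λ₋ if t₁ ≥ t₀ and M₁ = λ₊ − 2λ₋ otherwise, and K(α) = |t₁−t₀| if α = 0, K(α) = (exp(α|t₁−t₀|)−1)/α otherwise. If r·M₂·K(M₁) > 1, then there exists an autonomous ODE ẋ = f(x) with analytic right hand side f defined on all of X such that λ₋ ≤ μ₋(f'(x)) ≤ μ₊(f'(x)) ≤ λ₊ and ‖f''(x)‖ ≤ M₂ for all x ∈ X, and yet the reachable set φ(t₁,t₀,B̄(0,r))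 is not convex (φ being the general solution). In other words, the bound r·M₂·K(M₁) ≤ 1 ensuring convexity of reachable sets is sharp. -/
open Metric RealInnerProductSpace

/-!
In the plane spanned by orthonormal vectors `e₁`, `e₂`, consider the field
`x ↦ d x + (a - d) ⟪e₁, x⟫ e₁ + g ⟪e₁, x⟫ e₂`. It is solvable in closed form: the `e₁`-coordinate
grows like `exp (a s)`, and the flow bends the `e₂`-direction by `exp (d s)` times
`∫ τ in 0..s, exp (-d τ) g (exp (a τ) u)`, where `u` is the initial `e₁`-coordinate. If
`g u ≈ M u² / 2` near `0`, this integral is about `(M / 2) u² ∫ τ in 0..s, exp ((2 a - d) τ)`,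
while the sphere of radius `r` recedes from its tangent only by about `u² / (2 r)`. So once
`r M |∫ exp ((2 a - d) τ)| > 1`, two points of the ball that are mirror images in the `e₁`-direction
are moved so far that the midpoint of their images leaves the image of the ball.

The integral is extremal for `(a, d) = (λ₊, λ₋)` forward and `(a, d) = (λ₋, λ₊)` backward in time.
Moving `a` and `d` slightly into the open interval keeps the strict inequality and leaves room for
a small derivative of `g`, provided by a cosine of small amplitude and high frequency.
-/

section NumericalRange

variable {X : Type*} [NormedAddCommGroup X] [InnerProductSpace ℝ X] {A : X →L[ℝ] X} {c : ℝ}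

lemma le_muMinus [Nontrivial X] (h : ∀ y : X, ‖y‖ = 1 → c ≤ ⟪A y, y⟫) : c ≤ muMinus A := by
  obtain ⟨y, hy⟩ := exists_norm_eq X zero_le_one
  refine le_csInf ⟨_, y, hy, rfl⟩ ?_
  rintro _ ⟨z, hz, rfl⟩
  exact h z hz

lemma muPlus_le [Nontrivial X] (h : ∀ y : X, ‖y‖ = 1 → ⟪A y, y⟫ ≤ c) : muPlus A ≤ c := by
  obtain ⟨y, hy⟩ := exists_norm_eq X zero_le_one
  refine csSup_le ⟨_, y, hy, rfl⟩ ?_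
  rintro _ ⟨z, hz, rfl⟩
  exact h z hz

lemma abs_inner_apply_self_le_opNorm (A : X →L[ℝ] X) {y : X} (hy : ‖y‖ = 1) :
    |⟪A y, y⟫| ≤ ‖A‖ := by
  simpa [ContinuousLinearMap.rayleighQuotient, ContinuousLinearMap.reApplyInnerSelf_apply, hy]
    using A.rayleighQuotient_le_norm y

lemma muMinus_le_muPlus [Nontrivial X] (A : X →L[ℝ] X) : muMinus A ≤ muPlus A := by
  obtain ⟨y, hy⟩ := exists_norm_eq X zero_le_one
  refine csInf_le_csSup ⟨_, y, hy, rfl⟩ ⟨-‖A‖, ?_⟩ ⟨‖A‖, ?_⟩ <;> rintro _ ⟨z, hz, rfl⟩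
  · exact (abs_le.1 (abs_inner_apply_self_le_opNorm A hz)).1
  · exact (abs_le.1 (abs_inner_apply_self_le_opNorm A hz)).2

end NumericalRange

lemma exists_orthonormal_fin_of_le_rank {X : Type*} [NormedAddCommGroup X]
    [InnerProductSpace ℝ X] {n : ℕ} (hn : n ≤ Module.rank ℝ X) :
    ∃ e : Fin n → X, Orthonormal ℝ e := by
  obtain ⟨v, hv⟩ := Module.le_rank_iff.1 hn
  exact ⟨_, InnerProductSpace.gramSchmidtNormed_orthonormal hv⟩

section Rates

lemma hasDerivAt_exp_const_mul (c s : ℝ) :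
    HasDerivAt (fun s ↦ Real.exp (c * s)) (c * Real.exp (c * s)) s := by
  simpa [mul_comm] using ((hasDerivAt_id s).const_mul c).exp

lemma integral_exp_const_mul (α T : ℝ) : ∫ s in 0..T, Real.exp (α * s) =
    if α = 0 then T else (Real.exp (α * T) - 1) / α := by
  split_ifs with hα
  · simp [hα]
  · rw [intervalIntegral.integral_comp_mul_left (fun x ↦ Real.exp x) hα, integral_exp]
    simp [div_eq_inv_mul]

lemma abs_integral_exp_const_mul (α T : ℝ) : |∫ s in 0..T, Real.exp (α * s)| =
    ∫ s in 0..|T|, Real.exp ((if 0 ≤ T then α else -α) * s) := by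
  have nonneg (β : ℝ) {S : ℝ} (hS : 0 ≤ S) : 0 ≤ ∫ s in 0..S, Real.exp (β * s) :=
    intervalIntegral.integral_nonneg hS fun _ _ ↦ (Real.exp_pos _).le
  split_ifs with hT
  · rw [abs_of_nonneg hT, abs_of_nonneg (nonneg α hT)]
  · have reflect : ∫ s in 0..-T, Real.exp (-α * s) = ∫ s in T..0, Real.exp (α * s) := by
      simpa using intervalIntegral.integral_comp_neg (a := 0) (b := -T) fun s ↦ Real.exp (α * s)
    have hT' : T < 0 := not_le.1 hT
    rw [intervalIntegral.integral_symm, abs_neg, ← reflect, abs_of_neg hT',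
      abs_of_nonneg (nonneg _ (by linarith))]

lemma exists_mem_Ioo_of_isOpen_of_mem_Icc {α : Type*} [TopologicalSpace α] [LinearOrder α]
    [OrderTopology α] [DenselyOrdered α] {l u : α} (hlu : l < u) {s : Set (α × α)}
    (hs : IsOpen s) {p : α × α} (hp : p ∈ s) (h₁ : p.1 ∈ Set.Icc l u) (h₂ : p.2 ∈ Set.Icc l u) :
    ∃ q ∈ s, q.1 ∈ Set.Ioo l u ∧ q.2 ∈ Set.Ioo l u := by
  have hcl : p ∈ closure (Set.Ioo l u ×ˢ Set.Ioo l u) := by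
    rw [closure_prod_eq, closure_Ioo hlu.ne]
    exact ⟨h₁, h₂⟩
  exact mem_closure_iff.1 hcl s hs hp

lemma exists_interior_rates {lm lp c T : ℝ} (hlm : lm < lp)
    (h : 1 < c * ∫ s in 0..|T|, Real.exp ((if 0 ≤ T then 2 * lp - lm else lp - 2 * lm) * s)) :
    ∃ a ∈ Set.Ioo lm lp, ∃ d ∈ Set.Ioo lm lp,
      1 < c * |∫ s in 0..T, Real.exp ((2 * a - d) * s)| := by
  have hopen : IsOpen {p : ℝ × ℝ | 1 < c * |∫ s in 0..T, Real.exp ((2 * p.1 - p.2) * s)|} := by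
    refine isOpen_lt continuous_const (continuous_const.mul (Continuous.abs ?_))
    apply intervalIntegral.continuous_parametric_intervalIntegral_of_continuous'
    simp only [Function.uncurry_def]
    fun_prop
  obtain ⟨⟨a, d⟩, h, ha, hd⟩ := exists_mem_Ioo_of_isOpen_of_mem_Icc hlm hopen
    (p := if 0 ≤ T then (lp, lm) else (lm, lp)) (by
      rw [Set.mem_ofPred_eq, abs_integral_exp_const_mul]
      convert h using 5
      split_ifs <;> ring)
    (by split_ifs <;> simp [hlm.le]) (by split_ifs <;> simp [hlm.le])
  exact ⟨a, ha, d, hd, h⟩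

lemma exists_pos_mem_Icc_of_mem_Ioo {l u a d : ℝ} (ha : a ∈ Set.Ioo l u) (hd : d ∈ Set.Ioo l u) :
    ∃ ε > 0, a ∈ Set.Icc (l + ε) (u - ε) ∧ d ∈ Set.Icc (l + ε) (u - ε) := by
  obtain ⟨ε, hε, h⟩ := exists_between
    (show 0 < min (min (a - l) (u - a)) (min (d - l) (u - d)) by
      simpa only [lt_min_iff, sub_pos] using And.intro (Set.mem_Ioo.1 ha) (Set.mem_Ioo.1 hd))
  simp only [lt_min_iff] at h
  exact ⟨ε, hε, ⟨by linarith, by linarith⟩, by linarith, by linarith⟩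

end Rates

section ShearField

open Filter Topology

variable {X : Type*} [NormedAddCommGroup X] [InnerProductSpace ℝ X]

/-- The linear vector field with eigenvalue `a` along the unit vector `e₁` and `d` on its orthogonal
complement, perturbed in the direction `e₂` by the profile `g` of the `e₁`-coordinate. -/
noncomputable def shearField (e₁ e₂ : X) (a d : ℝ) (g : ℝ → ℝ) (x : X) : X :=
  d • x + ((a - d) * ⟪e₁, x⟫) • e₁ + g ⟪e₁, x⟫ • e₂

/-- The displacement in the direction `e₂`, up to the factor `exp (d * s)`, that the flow of
`shearField` produces within time `s` from a point with `e₁`-coordinate `u`. -/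
noncomputable def shearDisplacement (a d : ℝ) (g : ℝ → ℝ) (s u : ℝ) : ℝ :=
  ∫ τ in 0..s, Real.exp (-d * τ) * g (Real.exp (a * τ) * u)

/-- The solution of `ẋ = shearField e₁ e₂ a d g x` at time `s` that starts in `x` at time `0`, for
orthonormal `e₁`, `e₂`. -/
noncomputable def shearFlow (e₁ e₂ : X) (a d : ℝ) (g : ℝ → ℝ) (s : ℝ) (x : X) : X :=
  Real.exp (d * s) • x + ((Real.exp (a * s) - Real.exp (d * s)) * ⟪e₁, x⟫) • e₁ +
    (Real.exp (d * s) * shearDisplacement a d g s ⟪e₁, x⟫) • e₂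

variable {e₁ e₂ : X} {a d : ℝ} {g g' g'' : ℝ → ℝ}

lemma contDiff_shearField {n : WithTop ℕ∞} (hg : ContDiff ℝ n g) :
    ContDiff ℝ n (shearField e₁ e₂ a d g) := by
  have hinner : ContDiff ℝ n fun x : X ↦ ⟪e₁, x⟫ := (innerSL ℝ e₁).contDiff
  unfold shearField
  fun_prop

lemma fderiv_shearField (hg : ∀ u, HasDerivAt g (g' u) u) (x : X) :
    fderiv ℝ (shearField e₁ e₂ a d g) x = d • ContinuousLinearMap.id ℝ X +
      ((a - d) • innerSL ℝ e₁).smulRight e₁ +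
      g' ⟪e₁, x⟫ • (innerSL ℝ e₁).smulRight e₂ := by
  have hinner : HasFDerivAt (fun x : X ↦ ⟪e₁, x⟫) (innerSL ℝ e₁) x := (innerSL ℝ e₁).hasFDerivAt
  have h := (((hasFDerivAt_id x).const_smul d).add
    ((hinner.const_mul (a - d)).smul_const e₁)).add
    (((hg _).comp_hasFDerivAt x hinner).smul_const e₂)
  refine h.fderiv.trans ?_
  ext v
  simp [mul_smul]

lemma inner_fderiv_shearField_self (hg : ∀ u, HasDerivAt g (g' u) u) (x v : X) :
    ⟪fderiv ℝ (shearField e₁ e₂ a d g) x v, v⟫ =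
      d * ‖v‖ ^ 2 + (a - d) * ⟪e₁, v⟫ ^ 2 + g' ⟪e₁, x⟫ * (⟪e₁, v⟫ * ⟪e₂, v⟫) := by
  rw [fderiv_shearField hg]
  simp only [add_apply, smul_apply, ContinuousLinearMap.id_apply,
    ContinuousLinearMap.smulRight_apply, coe_innerSL_apply, inner_add_left, real_inner_smul_left,
    real_inner_self_eq_norm_sq, smul_eq_mul]
  ring

lemma inner_fderiv_shearField_self_mem_Icc {lm lp ε : ℝ} (he₁ : ‖e₁‖ = 1) (he₂ : ‖e₂‖ = 1)
    (ha : a ∈ Set.Icc (lm + ε) (lp - ε)) (hd : d ∈ Set.Icc (lm + ε) (lp - ε))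
    (hg : ∀ u, HasDerivAt g (g' u) u) (hg' : ∀ u, |g' u| ≤ ε) (x : X) {v : X} (hv : ‖v‖ = 1) :
    ⟪fderiv ℝ (shearField e₁ e₂ a d g) x v, v⟫ ∈ Set.Icc lm lp := by
  have h₁ : |⟪e₁, v⟫| ≤ 1 := by simpa [he₁, hv] using abs_real_inner_le_norm e₁ v
  have h₂ : |⟪e₂, v⟫| ≤ 1 := by simpa [he₂, hv] using abs_real_inner_le_norm e₂ v
  have hsq : ⟪e₁, v⟫ ^ 2 ≤ 1 := (sq_le_one_iff_abs_le_one _).2 h₁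
  have hlinear : d + (a - d) * ⟪e₁, v⟫ ^ 2 ∈ Set.Icc (lm + ε) (lp - ε) := by
    have := convex_Icc (lm + ε) (lp - ε) ha hd (sq_nonneg ⟪e₁, v⟫) (sub_nonneg.2 hsq) (by ring)
    convert this using 1
    simp only [smul_eq_mul]
    ring
  have hshear : |g' ⟪e₁, x⟫ * (⟪e₁, v⟫ * ⟪e₂, v⟫)| ≤ ε := by
    rw [abs_mul, abs_mul]
    exact (mul_le_of_le_one_right (abs_nonneg _) (mul_le_one₀ h₁ (abs_nonneg _) h₂)).trans (hg' _)
  rw [inner_fderiv_shearField_self hg, hv, one_pow, mul_one]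
  constructor <;> linarith [hlinear.1, hlinear.2, (abs_le.1 hshear).1, (abs_le.1 hshear).2]

lemma norm_fderiv_fderiv_shearField (he₁ : ‖e₁‖ = 1) (he₂ : ‖e₂‖ = 1)
    (hg : ∀ u, HasDerivAt g (g' u) u) (hg' : ∀ u, HasDerivAt g' (g'' u) u) (x : X) :
    ‖fderiv ℝ (fderiv ℝ (shearField e₁ e₂ a d g)) x‖ = |g'' ⟪e₁, x⟫| := by
  have hinner : HasFDerivAt (fun x : X ↦ ⟪e₁, x⟫) (innerSL ℝ e₁) x := (innerSL ℝ e₁).hasFDerivAt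
  have h := (((hg' _).comp_hasFDerivAt x hinner).smul_const
    ((innerSL ℝ e₁).smulRight e₂)).const_add
    (d • ContinuousLinearMap.id ℝ X + ((a - d) • innerSL ℝ e₁).smulRight e₁)
  rw [funext (fderiv_shearField hg)]
  refine (congrArg norm h.fderiv).trans ?_
  simp [ContinuousLinearMap.norm_smulRight_apply, norm_smul, he₁, he₂]

@[simp]
lemma shearDisplacement_zero_left (u : ℝ) : shearDisplacement a d g 0 u = 0 := by
  simp [shearDisplacement]

lemma shearDisplacement_zero_right (hg0 : g 0 = 0) (s : ℝ) :
    shearDisplacement a d g s 0 = 0 := by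
  simp [shearDisplacement, hg0]

lemma shearDisplacement_neg (hg : ∀ u, g (-u) = g u) (s u : ℝ) :
    shearDisplacement a d g s (-u) = shearDisplacement a d g s u := by
  simp [shearDisplacement, hg]

lemma hasDerivAt_shearDisplacement (hg : Continuous g) (s u : ℝ) :
    HasDerivAt (fun s ↦ shearDisplacement a d g s u)
      (Real.exp (-d * s) * g (Real.exp (a * s) * u)) s :=
  (Continuous.integral_hasStrictDerivAt (by fun_prop) 0 s).hasDerivAt

lemma eventually_mul_sq_le_abs_shearDisplacement {c : ℝ} (hc : 0 ≤ c) (hg : Continuous g)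
    (hcg : ∀ᶠ u in 𝓝 0, c * u ^ 2 ≤ g u) (T : ℝ) :
    ∀ᶠ u in 𝓝 0, c * |∫ s in 0..T, Real.exp ((2 * a - d) * s)| * u ^ 2 ≤
      |shearDisplacement a d g T u| := by
  have huniform : ∀ᶠ u in 𝓝 (0 : ℝ), ∀ τ ∈ Set.uIcc 0 T,
      c * (Real.exp (a * τ) * u) ^ 2 ≤ g (Real.exp (a * τ) * u) := by
    refine isCompact_uIcc.eventually_forall_of_forall_eventually fun τ _ ↦ ?_
    have : Tendsto (fun p : ℝ × ℝ ↦ Real.exp (a * p.2) * p.1) (𝓝 (0, τ)) (𝓝 0) :=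
      Continuous.tendsto' (by fun_prop) _ _ (by simp)
    exact this.eventually hcg
  filter_upwards [huniform] with u hu
  have hpointwise : ∀ τ ∈ Set.uIoc 0 T, ‖c * u ^ 2 * Real.exp ((2 * a - d) * τ)‖ ≤
      Real.exp (-d * τ) * g (Real.exp (a * τ) * u) := by
    intro τ hτ
    have hexp : Real.exp ((2 * a - d) * τ) = Real.exp (-d * τ) * Real.exp (a * τ) ^ 2 := by
      rw [← Real.exp_nat_mul, ← Real.exp_add]
      congr 1
      push_cast
      ring
    rw [Real.norm_of_nonneg (by positivity)]
    calc c * u ^ 2 * Real.exp ((2 * a - d) * τ)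
        = Real.exp (-d * τ) * (c * (Real.exp (a * τ) * u) ^ 2) := by rw [hexp]; ring
      _ ≤ Real.exp (-d * τ) * g (Real.exp (a * τ) * u) := by
        gcongr
        exact hu τ (Set.uIoc_subset_uIcc hτ)
  calc c * |∫ s in 0..T, Real.exp ((2 * a - d) * s)| * u ^ 2
      = ‖∫ s in 0..T, c * u ^ 2 * Real.exp ((2 * a - d) * s)‖ := by
        rw [intervalIntegral.integral_const_mul, norm_mul, Real.norm_of_nonneg (by positivity),
          Real.norm_eq_abs]
        ring
    _ ≤ |shearDisplacement a d g T u| :=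
      intervalIntegral.norm_integral_le_abs_of_norm_le
        (MeasureTheory.ae_restrict_of_forall_mem measurableSet_uIoc hpointwise)
        (Continuous.intervalIntegrable (by fun_prop) _ _)

@[simp]
lemma shearFlow_zero (x : X) : shearFlow e₁ e₂ a d g 0 x = x := by
  simp [shearFlow]

lemma inner_shearFlow (he₁ : ‖e₁‖ = 1) (he : ⟪e₁, e₂⟫ = 0) (s : ℝ) (x : X) :
    ⟪e₁, shearFlow e₁ e₂ a d g s x⟫ = Real.exp (a * s) * ⟪e₁, x⟫ := by
  simp only [shearFlow, inner_add_right, real_inner_smul_right, real_inner_self_eq_norm_sq, he₁, he]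
  ring

lemma hasDerivAt_shearFlow (he₁ : ‖e₁‖ = 1) (he : ⟪e₁, e₂⟫ = 0) (hg : Continuous g) (s : ℝ)
    (x : X) : HasDerivAt (fun s ↦ shearFlow e₁ e₂ a d g s x)
      (shearField e₁ e₂ a d g (shearFlow e₁ e₂ a d g s x)) s := by
  have hexp : Real.exp (d * s) * Real.exp (-d * s) = 1 := by
    rw [← Real.exp_add]
    simp
  have h := (((hasDerivAt_exp_const_mul d s).smul_const x).add
    ((((hasDerivAt_exp_const_mul a s).sub (hasDerivAt_exp_const_mul d s)).mul_const
      ⟪e₁, x⟫).smul_const e₁)).add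
    (((hasDerivAt_exp_const_mul d s).mul
      (hasDerivAt_shearDisplacement (a := a) (d := d) hg s ⟪e₁, x⟫)).smul_const e₂)
  refine h.congr_deriv ?_
  rw [← mul_assoc (Real.exp (d * s)) (Real.exp (-d * s)), hexp, one_mul]
  simp only [shearField, inner_shearFlow he₁ he]
  simp only [shearFlow]
  module

lemma shearFlow_injective (he₁ : ‖e₁‖ = 1) (he : ⟪e₁, e₂⟫ = 0) (s : ℝ) :
    Function.Injective (shearFlow e₁ e₂ a d g s) := by
  intro x y hxy
  have hinner : ⟪e₁, x⟫ = ⟪e₁, y⟫ := by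
    simpa [inner_shearFlow he₁ he] using congrArg (⟪e₁, ·⟫) hxy
  simpa [shearFlow, hinner] using hxy

lemma shearFlow_smul_add_smul (he₁ : ‖e₁‖ = 1) (he : ⟪e₁, e₂⟫ = 0) (s u q : ℝ) :
    shearFlow e₁ e₂ a d g s (u • e₁ + q • e₂) =
      (Real.exp (a * s) * u) • e₁ +
        (Real.exp (d * s) * (q + shearDisplacement a d g s u)) • e₂ := by
  have hinner : ⟪e₁, u • e₁ + q • e₂⟫ = u := by
    simp [inner_add_right, real_inner_smul_right, he₁, he]
  simp only [shearFlow, hinner]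
  module

lemma midpoint_shearFlow (he₁ : ‖e₁‖ = 1) (he : ⟪e₁, e₂⟫ = 0) (hg : ∀ u, g (-u) = g u)
    (hg0 : g 0 = 0) (s u q : ℝ) :
    midpoint ℝ (shearFlow e₁ e₂ a d g s (u • e₁ + q • e₂))
        (shearFlow e₁ e₂ a d g s ((-u) • e₁ + q • e₂)) =
      shearFlow e₁ e₂ a d g s ((q + shearDisplacement a d g s u) • e₂) := by
  have haxis := shearFlow_smul_add_smul (a := a) (d := d) (g := g) he₁ he s 0
    (q + shearDisplacement a d g s u)
  rw [zero_smul, zero_add, mul_zero, zero_smul, zero_add, shearDisplacement_zero_right hg0,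
    add_zero] at haxis
  rw [haxis, shearFlow_smul_add_smul he₁ he, shearFlow_smul_add_smul he₁ he,
    shearDisplacement_neg hg, midpoint_eq_smul_add]
  simp only [invOf_eq_inv]
  module

lemma norm_smul_add_smul_sq (he₁ : ‖e₁‖ = 1) (he₂ : ‖e₂‖ = 1) (he : ⟪e₁, e₂⟫ = 0) (u q : ℝ) :
    ‖u • e₁ + q • e₂‖ ^ 2 = u ^ 2 + q ^ 2 := by
  rw [norm_add_sq_real, real_inner_smul_left, real_inner_smul_right, he]
  simp [norm_smul, he₁, he₂]

lemma not_convex_shearFlow_image_closedBall (he₁ : ‖e₁‖ = 1) (he₂ : ‖e₂‖ = 1)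
    (he : ⟪e₁, e₂⟫ = 0) (hg : ∀ u, g (-u) = g u) (hg0 : g 0 = 0) {r s u q : ℝ} (hr : 0 ≤ r)
    (hball : u ^ 2 + q ^ 2 ≤ r ^ 2) (hout : r < |q + shearDisplacement a d g s u|) :
    ¬ Convex ℝ (shearFlow e₁ e₂ a d g s '' closedBall 0 r) := by
  intro hconv
  have hmem (v : ℝ) (hv : v ^ 2 = u ^ 2) : v • e₁ + q • e₂ ∈ closedBall (0 : X) r := by
    rw [mem_closedBall_zero_iff, ← pow_le_pow_iff_left₀ (norm_nonneg _) hr two_ne_zero,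
      norm_smul_add_smul_sq he₁ he₂ he, hv]
    exact hball
  have hmid := hconv.midpoint_mem (Set.mem_image_of_mem _ (hmem u rfl))
    (Set.mem_image_of_mem _ (hmem (-u) (neg_sq u)))
  rw [midpoint_shearFlow he₁ he hg hg0, (shearFlow_injective he₁ he s).mem_set_image,
    mem_closedBall_zero_iff, norm_smul, he₂, mul_one, Real.norm_eq_abs] at hmid
  exact hout.not_ge hmid

end ShearField

section Bending

open Topology

lemma exists_sq_add_sq_le_and_lt_abs_add {h : ℝ → ℝ} {r k : ℝ} (hr : 0 < r) (hk : 1 < 2 * r * k)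
    (hh : ∀ᶠ u in 𝓝 0, k * u ^ 2 ≤ |h u|) :
    ∃ u q, u ^ 2 + q ^ 2 ≤ r ^ 2 ∧ r < |q + h u| := by
  obtain ⟨k', hk', hk'k⟩ : ∃ k', 1 / (2 * r) < k' ∧ k' < k :=
    exists_between ((div_lt_iff₀' (by positivity)).2 hk)
  rw [div_lt_iff₀' (by positivity)] at hk'
  have hsmall : ∀ᶠ u in 𝓝 (0 : ℝ), k' ^ 2 * u ^ 2 < 2 * r * k' - 1 := by
    have : ContinuousAt (fun u : ℝ ↦ k' ^ 2 * u ^ 2) 0 := by fun_prop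
    exact this.eventually_lt continuousAt_const (by simpa using hk')
  obtain ⟨u, ⟨hu, hsmall⟩, hu0⟩ := (((hh.and hsmall).filter_mono nhdsWithin_le_nhds).and
    (eventually_mem_nhdsWithin (a := (0 : ℝ)) (s := {0}ᶜ))).exists
  have hu2 : 0 < u ^ 2 := sq_pos_of_ne_zero hu0
  have hball : u ^ 2 + (r - k' * u ^ 2) ^ 2 ≤ r ^ 2 := by nlinarith
  have hbend : k' * u ^ 2 < |h u| := (mul_lt_mul_of_pos_right hk'k hu2).trans_le hu
  rcases abs_cases (h u) with ⟨habs, -⟩ | ⟨habs, -⟩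
  · exact ⟨u, r - k' * u ^ 2, hball, lt_abs.2 (.inl (by linarith))⟩
  · exact ⟨u, -(r - k' * u ^ 2), by rwa [neg_sq], lt_abs.2 (.inr (by linarith))⟩

lemma eventually_mul_sq_le_of_hasDerivAt {g g' : ℝ → ℝ} {c M : ℝ}
    (hg : ∀ u, HasDerivAt g (g' u) u) (hg' : HasDerivAt g' M 0) (hg0 : g 0 = 0) (hg'0 : g' 0 = 0)
    (hc : 2 * c < M) : ∀ᶠ u in 𝓝 0, c * u ^ 2 ≤ g u := by
  have hderiv (u : ℝ) : HasDerivAt (fun u ↦ g u - c * u ^ 2) (g' u - 2 * c * u) u :=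
    ((hg u).sub ((hasDerivAt_pow 2 u).const_mul c)).congr_deriv (by norm_num; ring)
  have hderiv₂ : HasDerivAt (fun u ↦ g' u - 2 * c * u) (M - 2 * c) 0 := by
    refine (hg'.sub ((hasDerivAt_id (0 : ℝ)).const_mul (2 * c))).congr_deriv ?_
    simp
  have hderiv_eq : deriv (fun u ↦ g u - c * u ^ 2) = fun u ↦ g' u - 2 * c * u :=
    funext fun u ↦ (hderiv u).deriv
  have hmin : IsLocalMin (fun u ↦ g u - c * u ^ 2) 0 := by
    apply isLocalMin_of_deriv_deriv_pos
    · rw [hderiv_eq, hderiv₂.deriv]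
      linarith
    · simp [hderiv_eq, hg'0]
    · exact (hderiv 0).continuousAt
  filter_upwards [hmin] with u hu
  simpa [hg0] using hu

theorem not_convex_shearFlow_image_closedBall_of_one_lt
    {X : Type*} [NormedAddCommGroup X] [InnerProductSpace ℝ X] {e₁ e₂ : X} (he₁ : ‖e₁‖ = 1)
    (he₂ : ‖e₂‖ = 1) (he : ⟪e₁, e₂⟫ = 0) {a d M r T : ℝ} {g g' : ℝ → ℝ} (hM : 0 < M)
    (hg : ∀ u, HasDerivAt g (g' u) u) (hg' : HasDerivAt g' M 0) (hg0 : g 0 = 0) (hg'0 : g' 0 = 0)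
    (heven : ∀ u, g (-u) = g u) (hT : 1 < r * M * |∫ s in 0..T, Real.exp ((2 * a - d) * s)|) :
    ¬ Convex ℝ (shearFlow e₁ e₂ a d g T '' closedBall 0 r) := by
  set I := |∫ s in 0..T, Real.exp ((2 * a - d) * s)|
  have hI0 : 0 ≤ I := abs_nonneg _
  have hrI : 0 < r * I := by
    refine pos_of_mul_pos_left (b := M) ?_ hM.le
    linarith
  have hr : 0 < r := pos_of_mul_pos_left hrI hI0
  obtain ⟨c, hc, hcM⟩ : ∃ c, 1 / (2 * (r * I)) < c ∧ c < M / 2 :=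
    exists_between (by rw [div_lt_div_iff₀ (by positivity) two_pos]; linarith)
  have hc0 : 0 ≤ c := le_trans (by positivity) hc.le
  rw [div_lt_iff₀' (by positivity)] at hc
  have hcg := eventually_mul_sq_le_of_hasDerivAt hg hg' hg0 hg'0 (c := c) (by linarith)
  have hgcont : Continuous g := continuous_iff_continuousAt.2 fun u ↦ (hg u).continuousAt
  obtain ⟨u, q, hball, hout⟩ := exists_sq_add_sq_le_and_lt_abs_add hr (k := c * I) (by linarith)
    (eventually_mul_sq_le_abs_shearDisplacement hc0 hgcont hcg T)
  exact not_convex_shearFlow_image_closedBall he₁ he₂ he heven hg0 hr.le hball hout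

/-- The even profile with derivative `ε * sin (M / ε * u)` and second derivative
`M * cos (M / ε * u)` that vanishes at `0`: its slope is bounded by `ε`, its curvature attains the
bound `M` at `0`. -/
noncomputable def cosProfile (ε M u : ℝ) : ℝ := ε ^ 2 / M * (1 - Real.cos (M / ε * u))

variable {ε M : ℝ}

@[simp]
lemma cosProfile_zero : cosProfile ε M 0 = 0 := by
  simp [cosProfile]

@[simp]
lemma cosProfile_neg (u : ℝ) : cosProfile ε M (-u) = cosProfile ε M u := by
  simp [cosProfile]

lemma contDiff_cosProfile {n : WithTop ℕ∞} : ContDiff ℝ n (cosProfile ε M) := by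
  unfold cosProfile
  fun_prop

lemma hasDerivAt_cosProfile (hε : ε ≠ 0) (hM : M ≠ 0) (u : ℝ) :
    HasDerivAt (cosProfile ε M) (ε * Real.sin (M / ε * u)) u := by
  refine (((((hasDerivAt_id u).const_mul (M / ε)).cos).const_sub 1).const_mul
    (ε ^ 2 / M)).congr_deriv ?_
  simp only [id]
  field_simp

lemma hasDerivAt_mul_sin_div_mul (hε : ε ≠ 0) (u : ℝ) :
    HasDerivAt (fun u ↦ ε * Real.sin (M / ε * u)) (M * Real.cos (M / ε * u)) u := by
  refine ((((hasDerivAt_id u).const_mul (M / ε)).sin).const_mul ε).congr_deriv ?_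
  simp only [id]
  field_simp

lemma abs_mul_le_of_abs_le_one {c x : ℝ} (hc : 0 ≤ c) (hx : |x| ≤ 1) : |c * x| ≤ c := by
  rw [abs_mul, abs_of_nonneg hc]
  exact mul_le_of_le_one_right hc hx

end Bending

theorem stmt_9_general {X : Type*} [NormedAddCommGroup X] [InnerProductSpace ℝ X]
    (hdim : 2 ≤ Module.rank ℝ X)
    (t₁ t₀ lm lp M₂ r : ℝ) (hlm : lm < lp) (hM₂ : 0 < M₂)
    (M₁ : ℝ) (hM₁ : M₁ = if t₀ ≤ t₁ then 2 * lp - lm else lp - 2 * lm)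
    (K : ℝ → ℝ)
    (hK : ∀ α : ℝ, K α = if α = 0 then |t₁ - t₀| else (Real.exp (α * |t₁ - t₀|) - 1) / α)
    (hsharp : 1 < r * M₂ * K M₁) :
    ∃ f : X → X, AnalyticOnNhd ℝ f Set.univ ∧
      (∀ x : X, lm ≤ muMinus (fderiv ℝ f x) ∧ muMinus (fderiv ℝ f x) ≤ muPlus (fderiv ℝ f x) ∧
        muPlus (fderiv ℝ f x) ≤ lp) ∧
      (∀ x : X, ‖fderiv ℝ (fderiv ℝ f) x‖ ≤ M₂) ∧
      ∃ φ : ℝ → X → X, (∀ x : X, φ t₀ x = x) ∧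
        (∀ (x : X) (τ : ℝ), HasDerivAt (fun s => φ s x) (f (φ τ x)) τ) ∧
        ¬ Convex ℝ (φ t₁ '' closedBall (0:X) r) := by
  rw [hK, ← integral_exp_const_mul, hM₁] at hsharp
  simp only [← sub_nonneg (b := t₀)] at hsharp
  obtain ⟨a, ha, d, hd, hbend⟩ := exists_interior_rates hlm hsharp
  obtain ⟨ε, hε, haε, hdε⟩ := exists_pos_mem_Icc_of_mem_Ioo ha hd
  obtain ⟨e, he⟩ := exists_orthonormal_fin_of_le_rank (n := 2) hdim
  have he01 : ⟪e 0, e 1⟫ = 0 := he.2 zero_ne_one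
  have : Nontrivial X := nontrivial_of_ne (e 0) 0 (he.ne_zero 0)
  have hg := hasDerivAt_cosProfile hε.ne' hM₂.ne'
  have hg' := hasDerivAt_mul_sin_div_mul (M := M₂) hε.ne'
  have hform (x v : X) (hv : ‖v‖ = 1) := inner_fderiv_shearField_self_mem_Icc (he.1 0) (he.1 1)
    haε hdε hg (fun _ ↦ abs_mul_le_of_abs_le_one hε.le (Real.abs_sin_le_one _)) x hv
  refine ⟨shearField (e 0) (e 1) a d (cosProfile ε M₂),
    (contDiff_shearField contDiff_cosProfile).analyticOnNhd, fun x ↦ ⟨?_, muMinus_le_muPlus _, ?_⟩,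
    fun x ↦ ?_, fun t ↦ shearFlow (e 0) (e 1) a d (cosProfile ε M₂) (t - t₀), by simp,
    fun x τ ↦ ?_, ?_⟩
  · exact le_muMinus fun v hv ↦ (hform x v hv).1
  · exact muPlus_le fun v hv ↦ (hform x v hv).2
  · rw [norm_fderiv_fderiv_shearField (he.1 0) (he.1 1) hg hg']
    exact abs_mul_le_of_abs_le_one hM₂.le (Real.abs_cos_le_one _)
  · have hcont := (contDiff_cosProfile (ε := ε) (M := M₂) (n := 0)).continuous
    exact (hasDerivAt_shearFlow (he.1 0) he01 hcont (τ - t₀) x).comp_sub_const τ t₀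
  · exact not_convex_shearFlow_image_closedBall_of_one_lt (he.1 0) (he.1 1) he01 hM₂ hg
      (by simpa using hg' 0) cosProfile_zero (by simp) cosProfile_neg hbend

/-- **sharpness.** Let `X` be a real Hilbert space with `dim X ≥ 2`, and
`t₁, t₀, λ₋, λ₊, M₂, r ∈ ℝ` with `λ₋ < λ₊`, `M₂ > 0`.  Set `M₁ = 2λ₊ − λ₋` if `t₁ ≥ t₀` and
`M₁ = λ₊ − 2λ₋` otherwise, and `K(α) = |t₁−t₀|` if `α = 0`, `K(α) = (exp(α|t₁−t₀|)−1)/α`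
otherwise.  If `r·M₂·K(M₁) > 1`, then there is an autonomous ODE `ẋ = f(x)` with analytic
right hand side defined on all of `X` with `λ₋ ≤ μ₋(f'(x))`, `μ₊(f'(x)) ≤ λ₊` and
`‖f''(x)‖ ≤ M₂` everywhere, whose general solution `φ` has a non-convex reachable set
`φ(t₁,t₀,B̄(0,r))`. -/
theorem stmt_9 {X : Type*} [NormedAddCommGroup X] [InnerProductSpace ℝ X] [CompleteSpace X]
    (hdim : 2 ≤ Module.rank ℝ X)
    (t₁ t₀ lm lp M₂ r : ℝ) (hlm : lm < lp) (hM₂ : 0 < M₂)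
    (M₁ : ℝ) (hM₁ : M₁ = if t₀ ≤ t₁ then 2 * lp - lm else lp - 2 * lm)
    (K : ℝ → ℝ)
    (hK : ∀ α : ℝ, K α = if α = 0 then |t₁ - t₀| else (Real.exp (α * |t₁ - t₀|) - 1) / α)
    (hsharp : 1 < r * M₂ * K M₁) :
    ∃ f : X → X, AnalyticOnNhd ℝ f Set.univ ∧
      (∀ x : X, lm ≤ muMinus (fderiv ℝ f x) ∧ muMinus (fderiv ℝ f x) ≤ muPlus (fderiv ℝ f x) ∧
        muPlus (fderiv ℝ f x) ≤ lp) ∧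
      (∀ x : X, ‖fderiv ℝ (fderiv ℝ f) x‖ ≤ M₂) ∧
      ∃ φ : ℝ → X → X, (∀ x : X, φ t₀ x = x) ∧
        (∀ (x : X) (τ : ℝ), HasDerivAt (fun s => φ s x) (f (φ τ x)) τ) ∧
        ¬ Convex ℝ (φ t₁ '' closedBall (0:X) r) :=
  stmt_9_general hdim t₁ t₀ lm lp M₂ r hlm hM₂ M₁ hM₁ K hK hsharp
end

section
/- For t₁ > 0 consider the closed-loop control system ẋ₁ = u(x), ẋ₂ = u(x)², x(0) = (0,0), where admissible feedbacks are Lipschitz-continuous maps u : ℝ² → [0,1]. Let R(t₁) = {x(t₁) : x : [0,t₁] → ℝ² solves the system for some admissible u}. Then (0,0) ∈ R(t₁) and (t₁,t₁) ∈ R(t₁), but the midpoint (t₁/2, t₁/2) ∉ R(t₁); hence R(t₁) is not convex, for every t₁ > 0. (Key step: there is no continuous function v : [0,t₁] → [0,1] with ∫₀^{t₁} v(τ) dτ = t₁/2 and ∫₀^{t₁} v(τ)² dτ = t₁/2.) -/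
open Set

/-- The reachable set at time `t₁` of the closed-loop system
`ẋ₁ = u(x), ẋ₂ = u(x)², x(0) = (0,0)` over all Lipschitz-continuous feedbacks
`u : ℝ² → [0,1]`. -/
def reachSet (t₁ : ℝ) : Set (ℝ × ℝ) :=
  {p : ℝ × ℝ | ∃ u : ℝ × ℝ → ℝ, (∃ L : NNReal, LipschitzWith L u) ∧
    (∀ y, u y ∈ Icc (0:ℝ) 1) ∧
    ∃ x : ℝ → ℝ × ℝ, x 0 = (0, 0) ∧
      (∀ t ∈ Icc 0 t₁,
        HasDerivWithinAt x (u (x t), (u (x t)) ^ 2) (Icc 0 t₁) t) ∧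
      x t₁ = p}

/-!
Feeding a trajectory `x` into its own feedback gives the open-loop control `v t = u (x t)`, which is
continuous with values in `[0, 1]` and satisfies `x t₁ = (∫ v, ∫ v ^ 2)`. If this endpoint lies on
the diagonal, then `∫ v ^ 2 = ∫ v` although `v ^ 2 ≤ v`, so `v` takes only the values `0` and `1`;
by connectedness it is constant. Hence `(0, 0)` and `(t₁, t₁)` are the only reachable points on the
diagonal.
-/

open intervalIntegral

section IntervalIntegral

variable {a b : ℝ}

theorem eqOn_Icc_of_le_of_integral_eq {f g : ℝ → ℝ} (hab : a < b)
    (hf : ContinuousOn f (Icc a b)) (hg : ContinuousOn g (Icc a b))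
    (hle : ∀ x ∈ Icc a b, f x ≤ g x) (heq : (∫ x in a..b, f x) = ∫ x in a..b, g x) :
    EqOn f g (Icc a b) := by
  intro c hc
  by_contra hne
  have hlt := integral_lt_integral_of_continuousOn_of_le_of_exists_lt hab hf hg
    (fun x hx => hle x (Ioc_subset_Icc_self hx)) ⟨c, hc, (hle c hc).lt_of_ne hne⟩
  exact hlt.ne heq

theorem integral_eq_sub_of_hasDerivWithinAt_Icc {E : Type*} [NormedAddCommGroup E]
    [NormedSpace ℝ E] [CompleteSpace E] {f f' : ℝ → E} (hab : a ≤ b)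
    (hderiv : ∀ x ∈ Icc a b, HasDerivWithinAt f (f' x) (Icc a b) x)
    (hintegral : IntervalIntegrable f' MeasureTheory.volume a b) :
    ∫ x in a..b, f' x = f b - f a :=
  integral_eq_sub_of_hasDerivAt_of_le hab (fun x hx => (hderiv x hx).continuousWithinAt)
    (fun x hx => (hderiv x (Ioo_subset_Icc_self hx)).hasDerivAt (Icc_mem_nhds hx.1 hx.2)) hintegral

theorem exists_eqOn_const_of_integral_sq_eq_integral {v : ℝ → ℝ} (hab : a < b)
    (hcont : ContinuousOn v (Icc a b)) (hv : ∀ t ∈ Icc a b, v t ∈ Icc (0 : ℝ) 1)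
    (heq : (∫ t in a..b, v t ^ 2) = ∫ t in a..b, v t) :
    ∃ c ∈ ({0, 1} : Set ℝ), EqOn v (fun _ => c) (Icc a b) := by
  have hsq : EqOn (fun t => v t ^ 2) v (Icc a b) :=
    eqOn_Icc_of_le_of_integral_eq hab (hcont.pow 2) hcont
      (fun t ht => pow_le_of_le_one (hv t ht).1 (hv t ht).2 two_ne_zero) heq
  have hmaps : MapsTo v (Icc a b) {0, 1} := fun t ht =>
    IsIdempotentElem.iff_eq_zero_or_one.1 ((sq (v t)).symm.trans (hsq ht))
  exact isPreconnected_Icc.eqOn_const_of_mapsTo (toFinite _).isDiscrete hcont hmaps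
    (insert_nonempty 0 {1})

theorem integral_eq_zero_or_eq_sub_of_integral_sq_eq_integral {v : ℝ → ℝ} (hab : a ≤ b)
    (hcont : ContinuousOn v (Icc a b)) (hv : ∀ t ∈ Icc a b, v t ∈ Icc (0 : ℝ) 1)
    (heq : (∫ t in a..b, v t ^ 2) = ∫ t in a..b, v t) :
    (∫ t in a..b, v t) = 0 ∨ (∫ t in a..b, v t) = b - a := by
  obtain rfl | hlt := hab.eq_or_lt
  · exact .inl integral_same
  obtain ⟨c, hc, hconst⟩ := exists_eqOn_const_of_integral_sq_eq_integral hlt hcont hv heq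
  have hintegral : (∫ t in a..b, v t) = (b - a) * c := by
    rw [integral_congr (by rwa [uIcc_of_le hab]), integral_const, smul_eq_mul]
  obtain rfl | rfl := hc
  · exact .inl (hintegral.trans (mul_zero _))
  · exact .inr (hintegral.trans (mul_one _))

end IntervalIntegral

section ReachSet

variable {t₁ : ℝ}

theorem smul_mem_reachSet (t₁ : ℝ) {c : ℝ} (hc : c ∈ Icc (0 : ℝ) 1) :
    t₁ • (c, c ^ 2) ∈ reachSet t₁ := by
  refine ⟨fun _ => c, ⟨0, LipschitzWith.const c⟩, fun _ => hc, fun t => t • (c, c ^ 2),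
    zero_smul ℝ _, fun t _ => ?_, rfl⟩
  simpa only [id, one_smul] using (hasDerivWithinAt_id t (Icc 0 t₁)).smul_const (c, c ^ 2)

theorem exists_integral_eq_of_mem_reachSet (ht₁ : 0 ≤ t₁) {p : ℝ × ℝ} (hp : p ∈ reachSet t₁) :
    ∃ v : ℝ → ℝ, ContinuousOn v (Icc 0 t₁) ∧ (∀ t ∈ Icc 0 t₁, v t ∈ Icc (0 : ℝ) 1) ∧
      (∫ t in (0)..t₁, v t) = p.1 ∧ (∫ t in (0)..t₁, v t ^ 2) = p.2 := by
  obtain ⟨u, ⟨L, hL⟩, hu, x, hx₀, hx, rfl⟩ := hp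
  have hv : ContinuousOn (fun t => u (x t)) (Icc 0 t₁) :=
    hL.continuous.comp_continuousOn fun t ht => (hx t ht).continuousWithinAt
  refine ⟨fun t => u (x t), hv, fun t _ => hu (x t), ?_, ?_⟩
  · rw [integral_eq_sub_of_hasDerivWithinAt_Icc ht₁ (fun t ht => (hx t ht).fst)
      (hv.intervalIntegrable_of_Icc ht₁), hx₀, sub_zero]
  · rw [integral_eq_sub_of_hasDerivWithinAt_Icc ht₁ (fun t ht => (hx t ht).snd)
      ((hv.pow 2).intervalIntegrable_of_Icc ht₁), hx₀, sub_zero]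

theorem diagonal_mem_reachSet_iff (ht₁ : 0 ≤ t₁) {s : ℝ} :
    (s, s) ∈ reachSet t₁ ↔ s = 0 ∨ s = t₁ := by
  constructor
  · intro hs
    obtain ⟨v, hcont, hv, hintegral, hintegral_sq⟩ := exists_integral_eq_of_mem_reachSet ht₁ hs
    simpa only [hintegral, sub_zero] using integral_eq_zero_or_eq_sub_of_integral_sq_eq_integral
      ht₁ hcont hv (hintegral_sq.trans hintegral.symm)
  · rintro (rfl | rfl)
    · simpa using smul_mem_reachSet t₁ (left_mem_Icc.2 zero_le_one)
    · simpa using smul_mem_reachSet s (right_mem_Icc.2 zero_le_one)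

end ReachSet

/-- For every `t₁ > 0`, the reachable set `R(t₁)` of the closed-loop system
`ẋ₁ = u(x), ẋ₂ = u(x)², x(0) = (0,0)` with Lipschitz feedbacks `u : ℝ² → [0,1]` contains
`(0,0)` and `(t₁,t₁)` but not their midpoint `(t₁/2, t₁/2)`; in particular it is not convex.
(Key step: no continuous `v : [0,t₁] → [0,1]` has `∫₀^{t₁} v = t₁/2 = ∫₀^{t₁} v²`.) -/
theorem stmt_10 (t₁ : ℝ) (ht₁ : 0 < t₁) :
    (0, 0) ∈ reachSet t₁ ∧ (t₁, t₁) ∈ reachSet t₁ ∧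
      (t₁ / 2, t₁ / 2) ∉ reachSet t₁ ∧ ¬ Convex ℝ (reachSet t₁) ∧
      ¬ ∃ v : ℝ → ℝ, ContinuousOn v (Icc 0 t₁) ∧ (∀ t ∈ Icc 0 t₁, v t ∈ Icc (0:ℝ) 1) ∧
        (∫ τ in (0)..t₁, v τ) = t₁ / 2 ∧ (∫ τ in (0)..t₁, (v τ) ^ 2) = t₁ / 2 := by
  have hhalf : ¬(t₁ / 2 = 0 ∨ t₁ / 2 = t₁) := by
    rintro (h | h) <;> linarith
  have hzero : ((0 : ℝ), (0 : ℝ)) ∈ reachSet t₁ := (diagonal_mem_reachSet_iff ht₁.le).2 (.inl rfl)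
  have hfull : (t₁, t₁) ∈ reachSet t₁ := (diagonal_mem_reachSet_iff ht₁.le).2 (.inr rfl)
  have hmid : (t₁ / 2, t₁ / 2) ∉ reachSet t₁ := mt (diagonal_mem_reachSet_iff ht₁.le).1 hhalf
  refine ⟨hzero, hfull, hmid, fun hconvex => hmid ?_, ?_⟩
  · simpa [midpoint_eq_smul_add, div_eq_inv_mul] using hconvex.midpoint_mem hzero hfull
  · rintro ⟨v, hcont, hv, hintegral, hintegral_sq⟩
    have hdichotomy := integral_eq_zero_or_eq_sub_of_integral_sq_eq_integral ht₁.le hcont hv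
      (hintegral_sq.trans hintegral.symm)
    rw [hintegral, sub_zero] at hdichotomy
    exact hhalf hdichotomy
end

section
/- Let X be a real Hilbert space, I ⊆ ℝ an interval, U ⊆ I × X relatively open, f : U → X continuous and of class C² with respect to its second argument, and φ the general solution of ẋ = f(t,x). Let t₀, t₁ ∈ I and x ∈ X with (t₁,t₀,x) ∈ dom φ, and set F = φ(t₁,t₀,·). Then for every h ∈ X, F'(x)⁻¹ F''(x)h² = ∫_{t₀}^{t₁} D₃φ(τ,t₀,x)⁻¹ D₂²f(τ, φ(τ,t₀,x)) (D₃φ(τ,t₀,x)h)² dτ. -/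
open Filter Topology Metric Set intervalIntegral

/-!
Write `φ τ y` for the solution starting from `y` at time `t₀`, and `D τ` for the derivative of
`φ τ` at `x`. Since `D` solves the variational equation `D' = f'(τ, φ τ x) ∘ D`, variation of
constants applied to `φ τ y - φ τ x` gives, for `y` near `x`, the exact identity
`D(t₁)⁻¹ R(φ t₁; x, y) = ∫ D(τ)⁻¹ R(f τ; φ τ x, φ τ y) dτ` between the first-order Taylor remainders
`R` of the flow map and of the vector field. With `y = x + s h`, divide by `s²` and let `s → 0`:
both remainders converge to half the corresponding second derivatives, on the right pointwise in
`τ` and dominated by a constant because Gronwall's inequality makes `φ τ` Lipschitz at `x`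
uniformly in `τ`.
-/

section Taylor

variable {E G : Type*} [NormedAddCommGroup E] [NormedSpace ℝ E] [NormedAddCommGroup G]
  [NormedSpace ℝ G] {g : E → G} {g' : E → E →L[ℝ] G} {g'' : E →L[ℝ] E →L[ℝ] G} {x : E}

/-- The first-order Taylor remainder at `y` of `g` expanded at `x`, where `L` stands for the
derivative of `g` at `x`. -/
def linearRemainder (g : E → G) (L : E →L[ℝ] G) (x y : E) : G :=
  g y - g x - L (y - x)

theorem norm_linearRemainder_sub_half_le {v : E} {C : ℝ}
    (hg : ∀ θ ∈ Icc (0 : ℝ) 1, HasFDerivAt g (g' (x + θ • v)) (x + θ • v))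
    (hC : ∀ θ ∈ Icc (0 : ℝ) 1, ‖g' (x + θ • v) - g' x - g'' (θ • v)‖ ≤ C) :
    ‖linearRemainder g (g' x) x (x + v) - (1 / 2 : ℝ) • g'' v v‖ ≤ C * ‖v‖ := by
  have hderiv : ∀ θ ∈ Icc (0 : ℝ) 1, HasDerivWithinAt
      (fun θ : ℝ ↦ g (x + θ • v) - θ • g' x v - (θ ^ 2 / 2) • g'' v v)
      (g' (x + θ • v) v - g' x v - θ • g'' v v) (Icc 0 1) θ := by
    intro θ hθ
    have hline : HasDerivAt (fun θ : ℝ ↦ x + θ • v) v θ := by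
      simpa using ((hasDerivAt_id θ).smul_const v).const_add x
    have hlin : HasDerivAt (fun θ : ℝ ↦ θ • g' x v) (g' x v) θ := by
      simpa using (hasDerivAt_id θ).smul_const (g' x v)
    have hsq : HasDerivAt (fun θ : ℝ ↦ θ ^ 2 / 2) θ θ := by
      simpa using (hasDerivAt_pow 2 θ).div_const 2
    exact ((((hg θ hθ).comp_hasDerivAt θ hline).sub hlin).sub (hsq.smul_const _)).hasDerivWithinAt
  have hbound : ∀ θ ∈ Ico (0 : ℝ) 1, ‖g' (x + θ • v) v - g' x v - θ • g'' v v‖ ≤ C * ‖v‖ := by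
    intro θ hθ
    simpa using (g' (x + θ • v) - g' x - g'' (θ • v)).le_of_opNorm_le
      (hC θ (Ico_subset_Icc_self hθ)) v
  refine le_of_eq_of_le ?_ (norm_image_sub_le_of_norm_deriv_le_segment_01' hderiv hbound)
  simp only [linearRemainder, add_sub_cancel_left, one_smul, zero_smul, one_pow, add_zero,
    ne_eq, OfNat.ofNat_ne_zero, not_false_eq_true, zero_pow, zero_div, sub_zero]
  congr 1
  abel

theorem isLittleO_linearRemainder_sub_half (hg : ∀ᶠ y in 𝓝 x, HasFDerivAt g (g' y) y)
    (hg' : HasFDerivAt g' g'' x) :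
    (fun v ↦ linearRemainder g (g' x) x (x + v) - (1 / 2 : ℝ) • g'' v v)
      =o[𝓝 0] fun v ↦ ‖v‖ ^ 2 := by
  refine Asymptotics.isLittleO_iff.2 fun c hc ↦ ?_
  have hshift : Tendsto (fun v ↦ x + v) (𝓝 0) (𝓝 x) := by
    simpa using (continuous_const_add x).tendsto 0
  obtain ⟨r, hr, hball⟩ := Metric.eventually_nhds_iff_ball.1 <| (hshift.eventually hg).and
    (Asymptotics.isLittleO_iff.1 (hasFDerivAt_iff_isLittleO_nhds_zero.1 hg') hc)
  filter_upwards [ball_mem_nhds (0 : E) hr] with v hv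
  have hle : ∀ θ ∈ Icc (0 : ℝ) 1, ‖θ • v‖ ≤ ‖v‖ := fun θ hθ ↦ by
    simpa [norm_smul, abs_of_nonneg hθ.1] using mul_le_of_le_one_left (norm_nonneg v) hθ.2
  have hmem : ∀ θ ∈ Icc (0 : ℝ) 1, θ • v ∈ ball (0 : E) r := fun θ hθ ↦
    mem_ball_zero_iff.2 ((hle θ hθ).trans_lt (mem_ball_zero_iff.1 hv))
  have hremainder := norm_linearRemainder_sub_half_le (C := c * ‖v‖)
    (fun θ hθ ↦ (hball _ (hmem θ hθ)).1)
    (fun θ hθ ↦ (hball _ (hmem θ hθ)).2.trans (by gcongr; exact hle θ hθ))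
  simpa [sq, mul_assoc] using hremainder

theorem tendsto_sq_inv_smul_linearRemainder (hg : ∀ᶠ y in 𝓝 x, HasFDerivAt g (g' y) y)
    (hg' : HasFDerivAt g' g'' x) {c : ℝ → E} {z : E} (hc : HasDerivAt c z 0) (hc0 : c 0 = x) :
    Tendsto (fun s : ℝ ↦ (s ^ 2)⁻¹ • linearRemainder g (g' x) x (c s)) (𝓝[≠] 0)
      (𝓝 ((1 / 2 : ℝ) • g'' z z)) := by
  subst hc0
  have hcont : Tendsto (fun s ↦ c s - c 0) (𝓝 0) (𝓝 0) := by
    simpa using hc.continuousAt.tendsto.sub_const (c 0)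
  have hquad : (fun s ↦ ‖c s - c 0‖ ^ 2) =O[𝓝 0] fun s : ℝ ↦ s ^ 2 := by
    simpa using hc.isBigO_sub.norm_left.pow 2
  have herror := (((isLittleO_linearRemainder_sub_half hg hg').comp_tendsto hcont).trans_isBigO
    hquad).tendsto_inv_smul_nhds_zero.mono_left (nhdsWithin_le_nhds (s := {0}ᶜ))
  have hmain : Tendsto (fun s : ℝ ↦ (1 / 2 : ℝ) • g'' (s⁻¹ • (c s - c 0)) (s⁻¹ • (c s - c 0)))
      (𝓝[≠] 0) (𝓝 ((1 / 2 : ℝ) • g'' z z)) := by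
    have hdiag : Continuous fun z : E ↦ (1 / 2 : ℝ) • g'' z z := by fun_prop
    exact (hdiag.tendsto z).comp (by simpa using hc.tendsto_slope_zero)
  have hsum := herror.add hmain
  rw [zero_add] at hsum
  refine hsum.congr fun s ↦ ?_
  have hscale : (1 / 2 : ℝ) • g'' (s⁻¹ • (c s - c 0)) (s⁻¹ • (c s - c 0)) =
      (s ^ 2)⁻¹ • (1 / 2 : ℝ) • g'' (c s - c 0) (c s - c 0) := by
    simp only [map_smul, smul_apply, smul_smul]
    congr 1
    ring
  rw [hscale, Function.comp_apply, add_sub_cancel, ← smul_add, sub_add_cancel]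

theorem norm_linearRemainder_le {g'' : E → E →L[ℝ] E →L[ℝ] G} {y : E} {r M : ℝ}
    (hg : ∀ z ∈ ball x r, HasFDerivAt g (g' z) z)
    (hg' : ∀ z ∈ ball x r, HasFDerivAt g' (g'' z) z) (hM : ∀ z ∈ ball x r, ‖g'' z‖ ≤ M)
    (hy : y ∈ ball x r) : ‖linearRemainder g (g' x) x y‖ ≤ M * ‖y - x‖ ^ 2 := by
  have hx : x ∈ ball x r := mem_ball_self (pos_of_mem_ball hy)
  have hM0 : 0 ≤ M := (norm_nonneg (g'' x)).trans (hM x hx)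
  have hsub : closedBall x ‖y - x‖ ⊆ ball x r :=
    closedBall_subset_ball (mem_ball_iff_norm.1 hy)
  have hlip : ∀ z ∈ closedBall x ‖y - x‖, ‖g' z - g' x‖ ≤ M * ‖y - x‖ := fun z hz ↦
    ((convex_ball x r).norm_image_sub_le_of_norm_hasFDerivWithin_le
      (fun z hz ↦ (hg' z hz).hasFDerivWithinAt) hM hx (hsub hz)).trans
      (by gcongr; exact mem_closedBall_iff_norm.1 hz)
  refine ((convex_closedBall x ‖y - x‖).norm_image_sub_le_of_norm_hasFDerivWithin_le'
    (fun z hz ↦ (hg z (hsub hz)).hasFDerivWithinAt) hlip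
    (mem_closedBall_self (norm_nonneg _)) (mem_closedBall_iff_norm.2 le_rfl)).trans_eq ?_
  ring

theorem tendsto_add_smul_nhdsNE (x h : E) :
    Tendsto (fun s : ℝ ↦ x + s • h) (𝓝[≠] 0) (𝓝 x) :=
  ((by fun_prop : Continuous fun s : ℝ ↦ x + s • h).tendsto' 0 x (by simp)).mono_left
    nhdsWithin_le_nhds

end Taylor

theorem eventually_hasFDerivAt_fderiv_of_ne_zero {𝕜 E G : Type*} [NontriviallyNormedField 𝕜]
    [NormedAddCommGroup E] [NormedSpace 𝕜 E] [NormedAddCommGroup G] [NormedSpace 𝕜 G]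
    {g : E → G} {x : E} (hcont : ContinuousAt (fderiv 𝕜 g) x) (hne : fderiv 𝕜 g x ≠ 0) :
    ∀ᶠ y in 𝓝 x, HasFDerivAt g (fderiv 𝕜 g y) y := by
  filter_upwards [hcont.eventually_ne hne] with y hy
  exact (not_imp_comm.1 fderiv_zero_of_not_differentiableAt hy).hasFDerivAt

section Integration

variable {E G : Type*} [NormedAddCommGroup E] [NormedSpace ℝ E]
  [NormedAddCommGroup G] [NormedSpace ℝ G]

theorem hasFDerivAt_intervalIntegral_of_dominated {a b : ℝ} {μ : MeasureTheory.Measure ℝ}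
    {F : E → ℝ → G} {F' : ℝ → E →L[ℝ] G} {bound : ℝ → ℝ} {x : E}
    (hF_meas : ∀ᶠ y in 𝓝 x, MeasureTheory.AEStronglyMeasurable (F y) (μ.restrict (uIoc a b)))
    (hF_int : IntervalIntegrable (F x) μ a b)
    (hF'_meas : MeasureTheory.AEStronglyMeasurable F' (μ.restrict (uIoc a b)))
    (hF_le : ∀ᶠ y in 𝓝 x, ∀ t ∈ uIoc a b, ‖F y t - F x t‖ ≤ bound t * ‖y - x‖)
    (hbound : IntervalIntegrable bound μ a b)
    (hF : ∀ t ∈ uIoc a b, HasFDerivAt (F · t) (F' t) x) :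
    HasFDerivAt (fun y ↦ ∫ t in a..b, F y t ∂μ) (∫ t in a..b, F' t ∂μ) x := by
  simp only [intervalIntegrable_iff, intervalIntegral_eq_integral_uIoc] at *
  exact (hasFDerivAt_integral_of_dominated_loc_of_lip' (hF_meas.and hF_le) (fun y hy ↦ hy.1)
    hF_int hF'_meas
    ((MeasureTheory.ae_restrict_iff' measurableSet_uIoc).2 (.of_forall fun t ht y hy ↦ hy.2 t ht))
    hbound ((MeasureTheory.ae_restrict_iff' measurableSet_uIoc).2 (.of_forall hF))).2.const_smul _

variable [CompleteSpace G] {a b : ℝ} {g g' : ℝ → G}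

theorem integral_eq_sub_of_hasDerivWithinAt_uIcc
    (hg : ∀ t ∈ uIcc a b, HasDerivWithinAt g (g' t) (uIcc a b) t)
    (hg' : ContinuousOn g' (uIcc a b)) : ∫ t in a..b, g' t = g b - g a :=
  integral_eq_sub_of_hasDeriv_right (fun t ht ↦ (hg t ht).continuousWithinAt)
    (fun t ht ↦ ((hg t (Ioo_subset_Icc_self ht)).hasDerivAt
      (Icc_mem_nhds ht.1 ht.2)).hasDerivWithinAt)
    hg'.intervalIntegrable

theorem hasDerivWithinAt_integral_uIcc (hg : ContinuousOn g (uIcc a b)) {t : ℝ}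
    (ht : t ∈ uIcc a b) :
    HasDerivWithinAt (fun T ↦ ∫ τ in a..T, g τ) (g t) (uIcc a b) t := by
  have : Fact (t ∈ Icc (min a b) (max a b)) := ⟨ht⟩
  exact integral_hasDerivWithinAt_right (s := Icc (min a b) (max a b))
    (t := Icc (min a b) (max a b))
    (hg.mono (uIcc_subset_uIcc_left ht)).intervalIntegrable
    (hg.stronglyMeasurableAtFilter_nhdsWithin measurableSet_uIcc t) (hg t ht)

end Integration

section InverseOperator

variable {X : Type*} [NormedAddCommGroup X] [NormedSpace ℝ X] [CompleteSpace X]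

theorem hasDerivWithinAt_continuousLinearEquiv_symm {D : ℝ → X ≃L[ℝ] X} {D' : X →L[ℝ] X}
    {s : Set ℝ} {t : ℝ} (hD : HasDerivWithinAt (fun t ↦ (D t : X →L[ℝ] X)) D' s t) :
    HasDerivWithinAt (fun t ↦ ((D t).symm : X →L[ℝ] X))
      (-((D t).symm ∘L D' ∘L (D t).symm)) s t := by
  have hinv := (hasFDerivAt_ringInverse (𝕜 := ℝ) (D t).toUnit).comp_hasDerivWithinAt
    (f := fun t ↦ (D t : X →L[ℝ] X)) t hD
  simp only [Function.comp_def, ContinuousLinearMap.ringInverse_equiv,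
    ContinuousLinearMap.inverse_equiv] at hinv
  exact hinv

theorem hasDerivWithinAt_symm_apply_of_linear_ode {D : ℝ → X ≃L[ℝ] X} {A : X →L[ℝ] X}
    {w : ℝ → X} {w' : X} {s : Set ℝ} {t : ℝ}
    (hD : HasDerivWithinAt (fun t ↦ (D t : X →L[ℝ] X)) (A ∘L D t) s t)
    (hw : HasDerivWithinAt w w' s t) :
    HasDerivWithinAt (fun t ↦ (D t).symm (w t)) ((D t).symm (w' - A (w t))) s t := by
  refine ((hasDerivWithinAt_continuousLinearEquiv_symm hD).clm_apply hw).congr_deriv ?_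
  simp [sub_eq_neg_add]

end InverseOperator

section Gronwall

variable {E : Type*} [NormedAddCommGroup E] [NormedSpace ℝ E] {w w' : ℝ → E} {a b M δ : ℝ}

theorem norm_le_mul_exp_of_norm_lt_Icc (hM : 0 ≤ M)
    (hw : ∀ t ∈ Icc a b, HasDerivWithinAt w (w' t) (Icc a b) t)
    (hw' : ∀ t ∈ Icc a b, ‖w t‖ < δ → ‖w' t‖ ≤ M * ‖w t‖)
    (hδ : ‖w a‖ * Real.exp ((M + 1) * (b - a)) < δ) :
    ∀ t ∈ Icc a b, ‖w t‖ ≤ ‖w a‖ * Real.exp ((M + 1) * (b - a)) := by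
  set K := Real.exp ((M + 1) * (b - a))
  have hexp : ∀ t ≤ b, Real.exp ((M + 1) * (t - a)) ≤ K := fun t ht ↦
    Real.exp_le_exp.2 (by gcongr)
  -- The barrier comparison needs a strict inequality of slopes: hence `M + 1` instead of `M`, and
  -- an initial height `r > ‖w a‖`, which is positive even if `w a = 0`.
  have hbarrier : ∀ r > ‖w a‖, r * K < δ → ∀ t ∈ Icc a b, ‖w t‖ ≤ r * K := by
    intro r hr hrδ t ht
    have hr0 : 0 < r := (norm_nonneg _).trans_lt hr
    refine (image_norm_le_of_norm_deriv_right_lt_deriv_boundary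
      (B := fun t ↦ r * Real.exp ((M + 1) * (t - a)))
      (B' := fun t ↦ r * (Real.exp ((M + 1) * (t - a)) * (M + 1)))
      (fun t ht ↦ (hw t ht).continuousWithinAt)
      (fun t ht ↦ (hw t (Ico_subset_Icc_self ht)).mono_of_mem_nhdsWithin
        (Icc_mem_nhdsGE_of_mem ht))
      (by simpa using hr.le) (fun t ↦ ?_) (fun t ht heq ↦ ?_) ht).trans
      (by gcongr; exact hexp t ht.2)
    · have hlin : HasDerivAt (fun t ↦ (M + 1) * (t - a)) (M + 1) t := by
        simpa using ((hasDerivAt_id t).sub_const a).const_mul (M + 1)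
      exact hlin.exp.const_mul r
    · have hlt : ‖w t‖ < δ := by
        rw [heq]
        exact lt_of_le_of_lt (by gcongr; exact hexp t ht.2.le) hrδ
      have hpos : 0 < r * Real.exp ((M + 1) * (t - a)) := by positivity
      have hle := hw' t (Ico_subset_Icc_self ht) hlt
      rw [heq] at hle
      linarith
  intro t ht
  have hlim : Tendsto (fun r ↦ r * K) (𝓝[>] ‖w a‖) (𝓝 (‖w a‖ * K)) :=
    (tendsto_id.mono_left nhdsWithin_le_nhds).mul_const K
  refine ge_of_tendsto hlim ?_
  filter_upwards [self_mem_nhdsWithin, hlim.eventually_lt_const hδ] with r hr hrδ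
  exact hbarrier r hr hrδ t ht

theorem norm_le_mul_exp_of_norm_lt_uIcc (hM : 0 ≤ M)
    (hw : ∀ t ∈ uIcc a b, HasDerivWithinAt w (w' t) (uIcc a b) t)
    (hw' : ∀ t ∈ uIcc a b, ‖w t‖ < δ → ‖w' t‖ ≤ M * ‖w t‖)
    (hδ : ‖w a‖ * Real.exp (M * |b - a| + 1) < δ) :
    ∀ t ∈ uIcc a b, ‖w t‖ ≤ ‖w a‖ * Real.exp (M * |b - a| + 1) := by
  have himage : AffineMap.lineMap a b '' Icc (0 : ℝ) 1 = uIcc a b := by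
    rw [← segment_eq_image_lineMap, segment_eq_uIcc]
  have hmaps : MapsTo (AffineMap.lineMap a b) (Icc (0 : ℝ) 1) (uIcc a b) :=
    mapsTo_iff_image_subset.2 himage.subset
  have hunit := norm_le_mul_exp_of_norm_lt_Icc (a := 0) (b := 1) (M := M * |b - a|) (δ := δ)
    (w := fun θ ↦ w (AffineMap.lineMap a b θ))
    (w' := fun θ ↦ (b - a) • w' (AffineMap.lineMap a b θ)) (by positivity)
    (fun θ hθ ↦ (hw _ (hmaps hθ)).scomp θ AffineMap.hasDerivWithinAt_lineMap hmaps)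
    (fun θ hθ hlt ↦ by
      rw [norm_smul, Real.norm_eq_abs, mul_comm M, mul_assoc]
      gcongr
      exact hw' _ (hmaps hθ) hlt)
    (by simpa using hδ)
  rw [← himage]
  rintro _ ⟨θ, hθ, rfl⟩
  simpa using hunit θ hθ

end Gronwall

theorem exists_forall_ball_mem_and_norm_le {T X G : Type*} [PseudoMetricSpace T]
    [PseudoMetricSpace X] [SeminormedAddCommGroup G] {I : Set T} {U : Set (T × X)}
    (hU : ∃ W : Set (T × X), IsOpen W ∧ U = W ∩ I ×ˢ (univ : Set X)) {g : T × X → G}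
    (hg : ContinuousOn g U) {J : Set T} {u : T → X} (hJ : IsCompact J) (hu : ContinuousOn u J)
    (hgraph : ∀ τ ∈ J, (τ, u τ) ∈ U) :
    ∃ δ > 0, ∃ M, ∀ τ ∈ J, ∀ y ∈ ball (u τ) δ, (τ, y) ∈ U ∧ ‖g (τ, y)‖ ≤ M := by
  obtain ⟨W, hW, rfl⟩ := hU
  have hK : IsCompact ((fun τ ↦ (τ, u τ)) '' J) :=
    hJ.image_of_continuousOn (continuousOn_id.prodMk hu)
  have hKU := image_subset_iff.2 hgraph
  obtain ⟨V, hKV, hV, hVbdd⟩ :=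
    exists_isOpen_isBounded_image_inter_of_isCompact_of_continuousOn hK hKU hg
  obtain ⟨M, hM⟩ := hVbdd.exists_norm_le
  obtain ⟨δ, hδ, hthick⟩ := hK.exists_thickening_subset_open (hW.inter hV)
    (subset_inter (hKU.trans inter_subset_left) hKV)
  refine ⟨δ, hδ, M, fun τ hτ y hy ↦ ?_⟩
  have hmem : (τ, y) ∈ W ∩ V := hthick <| mem_thickening_iff.2
    ⟨(τ, u τ), mem_image_of_mem _ hτ, by simpa using hy⟩
  have hyU : (τ, y) ∈ W ∩ I ×ˢ (univ : Set X) := ⟨hmem.1, (hgraph τ hτ).2.1, mem_univ y⟩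
  exact ⟨hyU, hM _ (mem_image_of_mem g ⟨hmem.2, hyU⟩)⟩

section Tube

variable {X : Type*} [NormedAddCommGroup X] [NormedSpace ℝ X] {f : ℝ → X → X}
  {f' : ℝ → X → X →L[ℝ] X} {f'' : ℝ → X → X →L[ℝ] X →L[ℝ] X} {J : Set ℝ} {u : ℝ → X} {δ M : ℝ}

/-- The vector field `f` is twice differentiable in space on the tube of radius `δ` around the
curve `u` over the times `J`, with spatial derivatives `f'` and `f''` bounded by `M` there. -/
structure IsC2Tube (f : ℝ → X → X) (f' : ℝ → X → X →L[ℝ] X) (f'' : ℝ → X → X →L[ℝ] X →L[ℝ] X)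
    (J : Set ℝ) (u : ℝ → X) (δ M : ℝ) : Prop where
  pos : 0 < δ
  hasFDerivAt : ∀ τ ∈ J, ∀ y ∈ ball (u τ) δ, HasFDerivAt (f τ) (f' τ y) y
  hasFDerivAt_deriv : ∀ τ ∈ J, ∀ y ∈ ball (u τ) δ, HasFDerivAt (f' τ) (f'' τ y) y
  norm_deriv_le : ∀ τ ∈ J, ∀ y ∈ ball (u τ) δ, ‖f' τ y‖ ≤ M
  norm_deriv_two_le : ∀ τ ∈ J, ∀ y ∈ ball (u τ) δ, ‖f'' τ y‖ ≤ M

namespace IsC2Tube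

theorem self_mem_ball (h : IsC2Tube f f' f'' J u δ M) (τ : ℝ) : u τ ∈ ball (u τ) δ :=
  mem_ball_self h.pos

theorem nonneg (h : IsC2Tube f f' f'' J u δ M) (hJ : J.Nonempty) : 0 ≤ M :=
  (norm_nonneg _).trans (h.norm_deriv_le _ hJ.some_mem _ (h.self_mem_ball _))

theorem norm_sub_le (h : IsC2Tube f f' f'' J u δ M) {τ : ℝ} (hτ : τ ∈ J) {y : X}
    (hy : y ∈ ball (u τ) δ) : ‖f τ y - f τ (u τ)‖ ≤ M * ‖y - u τ‖ :=
  (convex_ball (u τ) δ).norm_image_sub_le_of_norm_hasFDerivWithin_le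
    (fun z hz ↦ (h.hasFDerivAt τ hτ z hz).hasFDerivWithinAt) (h.norm_deriv_le τ hτ)
    (h.self_mem_ball τ) hy

end IsC2Tube

theorem exists_isC2Tube {I : Set ℝ} {U : Set (ℝ × X)}
    (hU : ∃ W : Set (ℝ × X), IsOpen W ∧ U = W ∩ I ×ˢ (univ : Set X))
    (hf'c : ContinuousOn (fun p : ℝ × X ↦ f' p.1 p.2) U)
    (hf''c : ContinuousOn (fun p : ℝ × X ↦ f'' p.1 p.2) U)
    (hf : ∀ p ∈ U, HasFDerivAt (f p.1) (f' p.1 p.2) p.2)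
    (hf' : ∀ p ∈ U, HasFDerivAt (f' p.1) (f'' p.1 p.2) p.2)
    (hJ : IsCompact J) (hu : ContinuousOn u J) (hgraph : ∀ τ ∈ J, (τ, u τ) ∈ U) :
    ∃ δ M, IsC2Tube f f' f'' J u δ M := by
  obtain ⟨δ, hδ, M, hM⟩ :=
    exists_forall_ball_mem_and_norm_le (G := (X →L[ℝ] X) × (X →L[ℝ] X →L[ℝ] X)) hU
      (hf'c.prodMk hf''c) hJ hu hgraph
  exact ⟨δ, M, hδ, fun τ hτ y hy ↦ hf _ (hM τ hτ y hy).1, fun τ hτ y hy ↦ hf' _ (hM τ hτ y hy).1,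
    fun τ hτ y hy ↦ (norm_fst_le _).trans (hM τ hτ y hy).2,
    fun τ hτ y hy ↦ (norm_snd_le _).trans (hM τ hτ y hy).2⟩

end Tube

section Flow

variable {X : Type*} [NormedAddCommGroup X] [NormedSpace ℝ X] {f : ℝ → X → X}
  {f' : ℝ → X → X →L[ℝ] X} {f'' : ℝ → X → X →L[ℝ] X →L[ℝ] X} {a b : ℝ} {x : X}
  {φ : ℝ → X → X} {δ M : ℝ}

/-- For all initial values `y` near `x`, the curve `φ · y` solves `ẏ = f(t, y)` on the time
interval with endpoints `a` and `b`, starts from `y` at time `a`, and has continuous velocity. -/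
def IsLocalFlow (f : ℝ → X → X) (a b : ℝ) (x : X) (φ : ℝ → X → X) : Prop :=
  ∀ᶠ y in 𝓝 x, φ a y = y ∧ IsIntegralCurveOn (φ · y) f (uIcc a b) ∧
    ContinuousOn (fun τ ↦ f τ (φ τ y)) (uIcc a b)

namespace IsLocalFlow

theorem hasDerivWithinAt_sub (hφ : IsLocalFlow f a b x φ) :
    ∀ᶠ y in 𝓝 x, ∀ τ ∈ uIcc a b, HasDerivWithinAt (fun t ↦ φ t y - φ t x)
      (f τ (φ τ y) - f τ (φ τ x)) (uIcc a b) τ := by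
  filter_upwards [hφ] with y hy τ hτ
  exact (hy.2.1 τ hτ).sub (hφ.self_of_nhds.2.1 τ hτ)

theorem exists_norm_sub_le (hφ : IsLocalFlow f a b x φ)
    (hf : IsC2Tube f f' f'' (uIcc a b) (φ · x) δ M) :
    ∃ K ≥ 0, ∀ᶠ y in 𝓝 x, ∀ τ ∈ uIcc a b,
      φ τ y ∈ ball (φ τ x) δ ∧ ‖φ τ y - φ τ x‖ ≤ K * ‖y - x‖ := by
  set K := Real.exp (M * |b - a| + 1)
  have hsmall : ∀ᶠ y in 𝓝 x, ‖y - x‖ * K < δ := by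
    have hlim : Tendsto (fun y ↦ ‖y - x‖ * K) (𝓝 x) (𝓝 (‖x - x‖ * K)) :=
      (by fun_prop : Continuous fun y ↦ ‖y - x‖ * K).tendsto x
    exact hlim.eventually_lt_const (by simpa using hf.pos)
  refine ⟨K, (Real.exp_pos _).le, ?_⟩
  filter_upwards [hφ, hφ.hasDerivWithinAt_sub, hsmall] with y hy hderiv hyδ τ hτ
  have hinit : φ a y - φ a x = y - x := by rw [hy.1, hφ.self_of_nhds.1]
  have hbound := norm_le_mul_exp_of_norm_lt_uIcc (hf.nonneg nonempty_uIcc) hderiv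
    (fun t ht hlt ↦ hf.norm_sub_le ht (mem_ball_iff_norm.2 hlt)) (by rwa [hinit]) τ hτ
  rw [hinit] at hbound
  exact ⟨mem_ball_iff_norm.2 (hbound.trans_lt hyδ), hbound.trans_eq (mul_comm _ _)⟩

theorem eq_add_integral [CompleteSpace X] (hφ : IsLocalFlow f a b x φ) {T : ℝ}
    (hT : T ∈ uIcc a b) : ∀ᶠ y in 𝓝 x, φ T y = y + ∫ τ in a..T, f τ (φ τ y) := by
  filter_upwards [hφ] with y hy
  have hsub : uIcc a T ⊆ uIcc a b := uIcc_subset_uIcc_left hT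
  rw [integral_eq_sub_of_hasDerivWithinAt_uIcc
    (fun τ hτ ↦ (hy.2.1 τ (hsub hτ)).mono hsub) (hy.2.2.mono hsub), hy.1, add_sub_cancel]

section Variational

variable {D : ℝ → X →L[ℝ] X}

theorem continuousOn_fderiv (hφ : IsLocalFlow f a b x φ)
    (hf : IsC2Tube f f' f'' (uIcc a b) (φ · x) δ M)
    (hD : ∀ τ ∈ uIcc a b, HasFDerivAt (φ τ) (D τ) x) : ContinuousOn D (uIcc a b) := by
  obtain ⟨K, hK, hsub⟩ := hφ.exists_norm_sub_le hf
  have hM := hf.nonneg nonempty_uIcc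
  refine (LipschitzOnWith.of_dist_le_mul (K := (M * K).toNNReal) fun T hT S hS ↦ ?_).continuousOn
  rw [dist_eq_norm, Real.dist_eq, Real.coe_toNNReal _ (by positivity)]
  refine ((hD T hT).sub (hD S hS)).le_of_lip' (by positivity) ?_
  filter_upwards [hsub, hφ.hasDerivWithinAt_sub] with y hy hderiv
  calc ‖(φ T y - φ S y) - (φ T x - φ S x)‖
      = ‖(φ T y - φ T x) - (φ S y - φ S x)‖ := by rw [sub_sub_sub_comm]
    _ ≤ M * (K * ‖y - x‖) * ‖T - S‖ :=
        (convex_uIcc a b).norm_image_sub_le_of_norm_hasDerivWithin_le hderiv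
          (fun τ hτ ↦ (hf.norm_sub_le hτ (hy τ hτ).1).trans (by gcongr; exact (hy τ hτ).2)) hS hT
    _ = M * K * |T - S| * ‖y - x‖ := by rw [Real.norm_eq_abs]; ring

variable [CompleteSpace X]

theorem fderiv_eq_id_add_integral (hφ : IsLocalFlow f a b x φ)
    (hf : IsC2Tube f f' f'' (uIcc a b) (φ · x) δ M)
    (hf'c : ContinuousOn (fun τ ↦ f' τ (φ τ x)) (uIcc a b))
    (hD : ∀ τ ∈ uIcc a b, HasFDerivAt (φ τ) (D τ) x) {T : ℝ} (hT : T ∈ uIcc a b) :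
    D T = .id ℝ X + ∫ τ in a..T, f' τ (φ τ x) ∘L D τ := by
  obtain ⟨K, -, hsub⟩ := hφ.exists_norm_sub_le hf
  have hM := hf.nonneg nonempty_uIcc
  have hJ : uIcc a T ⊆ uIcc a b := uIcc_subset_uIcc_left hT
  have hJ' : uIoc a T ⊆ uIcc a b := uIoc_subset_uIcc.trans hJ
  have hintegral : HasFDerivAt (fun y ↦ ∫ τ in a..T, f τ (φ τ y))
      (∫ τ in a..T, f' τ (φ τ x) ∘L D τ) x := by
    refine hasFDerivAt_intervalIntegral_of_dominated (bound := fun _ ↦ M * K) ?_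
      (hφ.self_of_nhds.2.2.mono hJ).intervalIntegrable ?_ ?_ intervalIntegrable_const
      (fun τ hτ ↦ (hf.hasFDerivAt τ (hJ' hτ) _ (hf.self_mem_ball τ)).comp x (hD τ (hJ' hτ)))
    · filter_upwards [hφ] with y hy
      exact (hy.2.2.mono hJ').aestronglyMeasurable measurableSet_uIoc
    · exact ((hf'c.clm_comp (hφ.continuousOn_fderiv hf hD)).mono hJ').aestronglyMeasurable
        measurableSet_uIoc
    · filter_upwards [hsub] with y hy τ hτ
      rw [mul_assoc]
      exact (hf.norm_sub_le (hJ' hτ) (hy τ (hJ' hτ)).1).trans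
        (by gcongr; exact (hy τ (hJ' hτ)).2)
  exact (hD T hT).unique
    (((hasFDerivAt_id x).add hintegral).congr_of_eventuallyEq (hφ.eq_add_integral hT))

theorem hasDerivWithinAt_fderiv (hφ : IsLocalFlow f a b x φ)
    (hf : IsC2Tube f f' f'' (uIcc a b) (φ · x) δ M)
    (hf'c : ContinuousOn (fun τ ↦ f' τ (φ τ x)) (uIcc a b))
    (hD : ∀ τ ∈ uIcc a b, HasFDerivAt (φ τ) (D τ) x) {τ : ℝ} (hτ : τ ∈ uIcc a b) :
    HasDerivWithinAt D (f' τ (φ τ x) ∘L D τ) (uIcc a b) τ :=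
  ((hasDerivWithinAt_integral_uIcc (hf'c.clm_comp (hφ.continuousOn_fderiv hf hD))
    hτ).const_add _).congr_of_mem (fun _ hT ↦ hφ.fderiv_eq_id_add_integral hf hf'c hD hT) hτ

end Variational

section Remainder

variable [CompleteSpace X] {D : ℝ → X ≃L[ℝ] X}

theorem continuousOn_symm (hφ : IsLocalFlow f a b x φ)
    (hf : IsC2Tube f f' f'' (uIcc a b) (φ · x) δ M)
    (hf'c : ContinuousOn (fun τ ↦ f' τ (φ τ x)) (uIcc a b))
    (hD : ∀ τ ∈ uIcc a b, HasFDerivAt (φ τ) (D τ : X →L[ℝ] X) x) :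
    ContinuousOn (fun τ ↦ ((D τ).symm : X →L[ℝ] X)) (uIcc a b) := fun _ hτ ↦
  (hasDerivWithinAt_continuousLinearEquiv_symm
    (hφ.hasDerivWithinAt_fderiv hf hf'c hD hτ)).continuousWithinAt

theorem continuousOn_symm_linearRemainder (hφ : IsLocalFlow f a b x φ)
    (hf : IsC2Tube f f' f'' (uIcc a b) (φ · x) δ M)
    (hf'c : ContinuousOn (fun τ ↦ f' τ (φ τ x)) (uIcc a b))
    (hD : ∀ τ ∈ uIcc a b, HasFDerivAt (φ τ) (D τ : X →L[ℝ] X) x) :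
    ∀ᶠ y in 𝓝 x, ContinuousOn (fun τ ↦
      (D τ).symm (linearRemainder (f τ) (f' τ (φ τ x)) (φ τ x) (φ τ y))) (uIcc a b) := by
  have hx := hφ.self_of_nhds
  filter_upwards [hφ] with y hy
  exact (hφ.continuousOn_symm hf hf'c hD).clm_apply
    ((hy.2.2.sub hx.2.2).sub (hf'c.clm_apply (hy.2.1.continuousOn.sub hx.2.1.continuousOn)))

theorem symm_linearRemainder_eq_integral (hφ : IsLocalFlow f a b x φ)
    (hf : IsC2Tube f f' f'' (uIcc a b) (φ · x) δ M)
    (hf'c : ContinuousOn (fun τ ↦ f' τ (φ τ x)) (uIcc a b))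
    (hD : ∀ τ ∈ uIcc a b, HasFDerivAt (φ τ) (D τ : X →L[ℝ] X) x) :
    ∀ᶠ y in 𝓝 x, (D b).symm (linearRemainder (φ b) (D b) x y) =
      ∫ τ in a..b, (D τ).symm (linearRemainder (f τ) (f' τ (φ τ x)) (φ τ x) (φ τ y)) := by
  have hDa : (D a : X →L[ℝ] X) = .id ℝ X := by
    simpa using hφ.fderiv_eq_id_add_integral hf hf'c hD left_mem_uIcc
  filter_upwards [hφ, hφ.hasDerivWithinAt_sub, hφ.continuousOn_symm_linearRemainder hf hf'c hD]
    with y hy hsub hcont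
  have hinit : (D a).symm (φ a y - φ a x) = y - x := by
    rw [ContinuousLinearEquiv.symm_apply_eq, hy.1, hφ.self_of_nhds.1]
    exact (DFunLike.congr_fun hDa _).symm
  have hftc := integral_eq_sub_of_hasDerivWithinAt_uIcc
    (fun τ hτ ↦ hasDerivWithinAt_symm_apply_of_linear_ode
      (hφ.hasDerivWithinAt_fderiv hf hf'c hD hτ) (hsub τ hτ)) hcont
  rw [hinit] at hftc
  refine Eq.trans ?_ hftc.symm
  simp [linearRemainder]

theorem exists_norm_symm_linearRemainder_le (hφ : IsLocalFlow f a b x φ)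
    (hf : IsC2Tube f f' f'' (uIcc a b) (φ · x) δ M)
    (hf'c : ContinuousOn (fun τ ↦ f' τ (φ τ x)) (uIcc a b))
    (hD : ∀ τ ∈ uIcc a b, HasFDerivAt (φ τ) (D τ : X →L[ℝ] X) x) :
    ∃ C, ∀ᶠ y in 𝓝 x, ∀ τ ∈ uIcc a b,
      ‖(D τ).symm (linearRemainder (f τ) (f' τ (φ τ x)) (φ τ x) (φ τ y))‖ ≤ C * ‖y - x‖ ^ 2 := by
  obtain ⟨K, -, hsub⟩ := hφ.exists_norm_sub_le hf
  obtain ⟨N, hN⟩ := isCompact_uIcc.exists_bound_of_continuousOn (hφ.continuousOn_symm hf hf'c hD)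
  have hM := hf.nonneg nonempty_uIcc
  refine ⟨N * (M * K ^ 2), ?_⟩
  filter_upwards [hsub] with y hy τ hτ
  have hN0 : 0 ≤ N := (norm_nonneg _).trans (hN τ hτ)
  have hremainder := norm_linearRemainder_le (hf.hasFDerivAt τ hτ) (hf.hasFDerivAt_deriv τ hτ)
    (hf.norm_deriv_two_le τ hτ) (hy τ hτ).1
  calc ‖(D τ).symm (linearRemainder (f τ) (f' τ (φ τ x)) (φ τ x) (φ τ y))‖
      ≤ N * (M * ‖φ τ y - φ τ x‖ ^ 2) :=
        ((D τ).symm : X →L[ℝ] X).le_of_opNorm_le_of_le (hN τ hτ) hremainder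
    _ ≤ N * (M * (K * ‖y - x‖) ^ 2) := by gcongr; exact (hy τ hτ).2
    _ = N * (M * K ^ 2) * ‖y - x‖ ^ 2 := by ring

theorem tendsto_integral_symm_linearRemainder (hφ : IsLocalFlow f a b x φ)
    (hf : IsC2Tube f f' f'' (uIcc a b) (φ · x) δ M)
    (hf'c : ContinuousOn (fun τ ↦ f' τ (φ τ x)) (uIcc a b))
    (hD : ∀ τ ∈ uIcc a b, HasFDerivAt (φ τ) (D τ : X →L[ℝ] X) x) (h : X) :
    Tendsto (fun s : ℝ ↦ (s ^ 2)⁻¹ • ∫ τ in a..b,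
        (D τ).symm (linearRemainder (f τ) (f' τ (φ τ x)) (φ τ x) (φ τ (x + s • h)))) (𝓝[≠] 0)
      (𝓝 ((1 / 2 : ℝ) • ∫ τ in a..b, (D τ).symm (f'' τ (φ τ x) (D τ h) (D τ h)))) := by
  obtain ⟨C, hC⟩ := hφ.exists_norm_symm_linearRemainder_le hf hf'c hD
  have hline := tendsto_add_smul_nhdsNE x h
  simp only [← integral_smul]
  refine tendsto_integral_filter_of_dominated_convergence
    (fun _ ↦ C * ‖h‖ ^ 2) ?_ ?_ intervalIntegrable_const (.of_forall fun τ hτ ↦ ?_)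
  · filter_upwards [hline.eventually (hφ.continuousOn_symm_linearRemainder hf hf'c hD)] with s hs
    exact ((hs.const_smul _).mono uIoc_subset_uIcc).aestronglyMeasurable measurableSet_uIoc
  · filter_upwards [hline.eventually hC, self_mem_nhdsWithin] with s hs hs0
    refine .of_forall fun τ hτ ↦ ?_
    have hs2 : 0 < s ^ 2 := sq_pos_iff.2 hs0
    rw [norm_smul, norm_inv, Real.norm_of_nonneg hs2.le, inv_mul_le_iff₀ hs2]
    refine (hs τ (uIoc_subset_uIcc hτ)).trans_eq ?_
    rw [add_sub_cancel_left, norm_smul, Real.norm_eq_abs, mul_pow, sq_abs]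
    ring
  · replace hτ := uIoc_subset_uIcc hτ
    have hf_near : ∀ᶠ y in 𝓝 (φ τ x), HasFDerivAt (f τ) (f' τ y) y := by
      filter_upwards [ball_mem_nhds (φ τ x) hf.pos] with y hy using hf.hasFDerivAt τ hτ y hy
    have hlim := ((D τ).symm.continuous.tendsto _).comp (tendsto_sq_inv_smul_linearRemainder hf_near
      (hf.hasFDerivAt_deriv τ hτ _ (hf.self_mem_ball τ)) ((hD τ hτ).hasLineDerivAt h) (by simp))
    simpa only [map_smul, Function.comp_def, ContinuousLinearEquiv.coe_coe] using hlim

theorem symm_second_fderiv_eq_integral (hφ : IsLocalFlow f a b x φ)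
    (hf : IsC2Tube f f' f'' (uIcc a b) (φ · x) δ M)
    (hf'c : ContinuousOn (fun τ ↦ f' τ (φ τ x)) (uIcc a b))
    (hD : ∀ τ ∈ uIcc a b, HasFDerivAt (φ τ) (D τ : X →L[ℝ] X) x)
    {F' : X → X →L[ℝ] X} {F'' : X →L[ℝ] X →L[ℝ] X}
    (hF : ∀ᶠ y in 𝓝 x, HasFDerivAt (φ b) (F' y) y) (hF' : HasFDerivAt F' F'' x) (h : X) :
    (D b).symm (F'' h h) = ∫ τ in a..b, (D τ).symm (f'' τ (φ τ x) (D τ h) (D τ h)) := by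
  have hF'x : F' x = D b := hF.self_of_nhds.unique (hD b right_mem_uIcc)
  have hderiv : HasDerivAt (fun s : ℝ ↦ x + s • h) h 0 := by
    simpa using ((hasDerivAt_id (0 : ℝ)).smul_const h).const_add x
  have hleft := ((D b).symm.continuous.tendsto _).comp
    (tendsto_sq_inv_smul_linearRemainder hF hF' hderiv (by simp))
  have hright := hφ.tendsto_integral_symm_linearRemainder hf hf'c hD h
  have hlimits := tendsto_nhds_unique hleft <| hright.congr' <| by
    filter_upwards [(tendsto_add_smul_nhdsNE x h).eventually
      (hφ.symm_linearRemainder_eq_integral hf hf'c hD)] with s hs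
    rw [Function.comp_apply, map_smul, hF'x, hs]
  rw [map_smul] at hlimits
  exact smul_right_injective X (by norm_num : (1 / 2 : ℝ) ≠ 0) hlimits

end Remainder

end IsLocalFlow

end Flow

theorem stmt_14_general {X : Type*} [NormedAddCommGroup X] [NormedSpace ℝ X] [CompleteSpace X]
    (I : Set ℝ) (U : Set (ℝ × X))
    (hU : ∃ W : Set (ℝ × X), IsOpen W ∧ U = W ∩ I ×ˢ (univ : Set X))
    (f : ℝ → X → X) (f' : ℝ → X → X →L[ℝ] X) (f'' : ℝ → X → X →L[ℝ] X →L[ℝ] X)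
    (hfc : ContinuousOn (fun p : ℝ × X => f p.1 p.2) U)
    (hf'c : ContinuousOn (fun p : ℝ × X => f' p.1 p.2) U)
    (hf''c : ContinuousOn (fun p : ℝ × X => f'' p.1 p.2) U)
    (hderiv : ∀ p ∈ U, HasFDerivAt (fun y => f p.1 y) (f' p.1 p.2) p.2)
    (hderiv2 : ∀ p ∈ U, HasFDerivAt (fun y => f' p.1 y) (f'' p.1 p.2) p.2)
    (t₀ t₁ : ℝ) (x : X) (O : Set X) (hO : IsOpen O) (hxO : x ∈ O) (φ : ℝ → ℝ → X → X)
    (hφ : ∀ y ∈ O, φ t₀ t₀ y = y ∧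
      ∀ τ ∈ uIcc t₀ t₁, (τ, φ τ t₀ y) ∈ U ∧
        HasDerivWithinAt (fun s => φ s t₀ y) (f τ (φ τ t₀ y)) (uIcc t₀ t₁) τ)
    (Dφ : ℝ → (X ≃L[ℝ] X))
    (hDφ : ∀ τ ∈ uIcc t₀ t₁, HasFDerivAt (fun y => φ τ t₀ y) (Dφ τ : X →L[ℝ] X) x)
    (F'' : X →L[ℝ] X →L[ℝ] X)
    (hF'' : HasFDerivAt (fun y => fderiv ℝ (fun z => φ t₁ t₀ z) y) F'' x) (h : X) :
    (Dφ t₁).symm (F'' h h) =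
      ∫ τ in t₀..t₁, (Dφ τ).symm (f'' τ (φ τ t₀ x) (Dφ τ h) (Dφ τ h)) := by
  nontriviality X
  have hcurve : ∀ y ∈ O, IsIntegralCurveOn (φ · t₀ y) f (uIcc t₀ t₁) :=
    fun y hy τ hτ ↦ ((hφ y hy).2 τ hτ).2
  have hgraph : ∀ y ∈ O, MapsTo (fun τ ↦ (τ, φ τ t₀ y)) (uIcc t₀ t₁) U :=
    fun y hy τ hτ ↦ ((hφ y hy).2 τ hτ).1
  have hgraph_cont : ∀ y ∈ O, ContinuousOn (fun τ ↦ (τ, φ τ t₀ y)) (uIcc t₀ t₁) :=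
    fun y hy ↦ continuousOn_id.prodMk (hcurve y hy).continuousOn
  have hflow : IsLocalFlow f t₀ t₁ x (φ · t₀) := by
    filter_upwards [hO.mem_nhds hxO] with y hy
    exact ⟨(hφ y hy).1, hcurve y hy, hfc.comp (hgraph_cont y hy) (hgraph y hy)⟩
  obtain ⟨δ, M, htube⟩ := exists_isC2Tube (f := f) hU hf'c hf''c hderiv hderiv2 isCompact_uIcc
    (hcurve x hxO).continuousOn (hgraph x hxO)
  -- Where `φ t₁ t₀` fails to be differentiable, `fderiv` takes the junk value `0`.
  have hne : fderiv ℝ (φ t₁ t₀) x ≠ 0 := by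
    rw [(hDφ t₁ right_mem_uIcc).fderiv]
    intro hzero
    obtain ⟨v, hv⟩ := exists_ne (0 : X)
    exact hv ((Dφ t₁).map_eq_zero_iff.1 (DFunLike.congr_fun hzero v))
  exact hflow.symm_second_fderiv_eq_integral htube
    (hf'c.comp (hgraph_cont x hxO) (hgraph x hxO)) hDφ
    (eventually_hasFDerivAt_fderiv_of_ne_zero hF''.continuousAt hne) hF'' h

/-- Let `X` be a real Hilbert space, `I ⊆ ℝ` an interval, `U ⊆ I × X`
relatively open, `f : U → X` continuous and of class `C²` with respect to its second argument
(with partial derivatives `f'`, `f''`), and `φ` the general solution of `ẋ = f(t,x)`.  Let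
`t₀, t₁ ∈ I`, `x ∈ X` with `(t₁,t₀,x) ∈ dom φ`, and set `F = φ(t₁,t₀,·)`, with first
derivative `F'(x) = D₃φ(t₁,t₀,x)` and second derivative `F''(x)`.  Then for every `h ∈ X`,
`F'(x)⁻¹ F''(x)h² = ∫_{t₀}^{t₁} D₃φ(τ,t₀,x)⁻¹ D₂²f(τ,φ(τ,t₀,x)) (D₃φ(τ,t₀,x)h)² dτ`. -/
theorem stmt_14 {X : Type*} [NormedAddCommGroup X] [InnerProductSpace ℝ X] [CompleteSpace X]
    (I : Set ℝ) (hI : I.OrdConnected)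
    (U : Set (ℝ × X)) (hU : ∃ W : Set (ℝ × X), IsOpen W ∧ U = W ∩ I ×ˢ (univ : Set X))
    (f : ℝ → X → X) (f' : ℝ → X → X →L[ℝ] X) (f'' : ℝ → X → X →L[ℝ] X →L[ℝ] X)
    (hfc : ContinuousOn (fun p : ℝ × X => f p.1 p.2) U)
    (hf'c : ContinuousOn (fun p : ℝ × X => f' p.1 p.2) U)
    (hf''c : ContinuousOn (fun p : ℝ × X => f'' p.1 p.2) U)
    (hderiv : ∀ p ∈ U, HasFDerivAt (fun y => f p.1 y) (f' p.1 p.2) p.2)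
    (hderiv2 : ∀ p ∈ U, HasFDerivAt (fun y => f' p.1 y) (f'' p.1 p.2) p.2)
    (t₀ t₁ : ℝ) (ht₀ : t₀ ∈ I) (ht₁ : t₁ ∈ I) (x : X)
    (O : Set X) (hO : IsOpen O) (hxO : x ∈ O)
    (φ : ℝ → ℝ → X → X)
    (hφ : ∀ y ∈ O, φ t₀ t₀ y = y ∧
      ∀ τ ∈ uIcc t₀ t₁, (τ, φ τ t₀ y) ∈ U ∧
        HasDerivWithinAt (fun s => φ s t₀ y) (f τ (φ τ t₀ y)) (uIcc t₀ t₁) τ)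
    (Dφ : ℝ → (X ≃L[ℝ] X))
    (hDφ : ∀ τ ∈ uIcc t₀ t₁, HasFDerivAt (fun y => φ τ t₀ y) (Dφ τ : X →L[ℝ] X) x)
    (F'' : X →L[ℝ] X →L[ℝ] X)
    (hF'' : HasFDerivAt (fun y => fderiv ℝ (fun z => φ t₁ t₀ z) y) F'' x) :
    ∀ h : X, (Dφ t₁).symm (F'' h h) =
      ∫ τ in t₀..t₁, (Dφ τ).symm (f'' τ (φ τ t₀ x) (Dφ τ h) (Dφ τ h)) :=
  stmt_14_general I U hU f f' f'' hfc hf'c hf''c hderiv hderiv2 t₀ t₁ x O hO hxO φ hφ Dφ hDφ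
    F'' hF''
end

section
/- Let X be a real Hilbert space, t₀ ≤ t₁ real numbers, A : [t₀,t₁] → 𝓛(X,X) continuous, and Φ : [t₀,t₁] → 𝓛(X,X) the operator solution of Φ'(τ) = A(τ)∘Φ(τ) with Φ(t₀) = id, each Φ(τ) being invertible. If M₁ ∈ ℝ satisfies M₁ ≥ 2μ₊(A(τ)) − μ₋(A(τ)) for all τ ∈ [t₀,t₁], then ∫_{t₀}^{t₁} ‖Φ(τ)⁻¹‖·‖Φ(τ)‖² dτ ≤ K(M₁), where K(α) = t₁−t₀ if α = 0 and K(α) = (exp(α(t₁−t₀))−1)/α otherwise, and ‖·‖ is the operator norm. -/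
open Set RealInnerProductSpace intervalIntegral

/-!
Along a nonvanishing solution of `x' = A x` the logarithmic derivative of `‖x‖` is the Rayleigh
quotient of `A` at `x`, which lies in `[μ₋(A), μ₊(A)]`. Hence for two nonvanishing solutions `x`
and `z` the function `2 log ‖x‖ - log ‖z‖ - M₁ τ` is nonincreasing. Comparing its values at `t₀` and
`τ` for `x = Φ(·) x₀` and `z = Φ(·) Φ(τ)⁻¹ w`, and taking suprema over unit vectors `x₀` and `w`,
gives `‖Φ(τ)⁻¹‖ ‖Φ(τ)‖² ≤ exp (M₁ (τ - t₀))`, which is then integrated. Treating the two solutions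
together avoids integrating `μ₊(A(τ))` and `μ₋(A(τ))` separately, as Ważewski's inequalities would.
-/

section Rayleigh

variable {X : Type*} [NormedAddCommGroup X] [InnerProductSpace ℝ X]

lemma setOf_inner_eq_image_rayleighQuotient (A : X →L[ℝ] X) :
    {c : ℝ | ∃ y : X, ‖y‖ = 1 ∧ c = ⟪A y, y⟫} = A.rayleighQuotient '' {0}ᶜ := by
  rw [A.image_rayleigh_eq_image_rayleigh_sphere one_pos]
  ext c
  refine exists_congr fun y => ?_
  rw [mem_sphere_zero_iff_norm]
  refine and_congr_right fun hy => ?_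
  simp [ContinuousLinearMap.rayleighQuotient, ContinuousLinearMap.reApplyInnerSelf_apply, hy,
    eq_comm]

lemma rayleighQuotient_le_muPlus (A : X →L[ℝ] X) {x : X} (hx : x ≠ 0) :
    A.rayleighQuotient x ≤ muPlus A := by
  rw [muPlus, setOf_inner_eq_image_rayleighQuotient]
  refine le_csSup ⟨‖A‖, ?_⟩ (mem_image_of_mem _ hx)
  rintro _ ⟨y, -, rfl⟩
  exact (abs_le.1 (A.rayleighQuotient_le_norm y)).2

lemma muMinus_le_rayleighQuotient (A : X →L[ℝ] X) {x : X} (hx : x ≠ 0) :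
    muMinus A ≤ A.rayleighQuotient x := by
  rw [muMinus, setOf_inner_eq_image_rayleighQuotient]
  refine csInf_le ⟨-‖A‖, ?_⟩ (mem_image_of_mem _ hx)
  rintro _ ⟨y, -, rfl⟩
  exact (abs_le.1 (A.rayleighQuotient_le_norm y)).1

end Rayleigh

section Trajectories

variable {X : Type*} [NormedAddCommGroup X] [InnerProductSpace ℝ X]
  {D : Set ℝ} {A : ℝ → X →L[ℝ] X} {x z : ℝ → X} {M : ℝ}

lemma hasDerivWithinAt_log_norm {L : X →L[ℝ] X} {s : ℝ}
    (hx : HasDerivWithinAt x (L (x s)) D s) (hxs : x s ≠ 0) :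
    HasDerivWithinAt (fun r => Real.log ‖x r‖) (L.rayleighQuotient (x s)) D s := by
  have hsq : HasDerivWithinAt (fun r => Real.log (‖x r‖ ^ 2) / 2)
      (2 * ⟪x s, L (x s)⟫ / ‖x s‖ ^ 2 / 2) D s :=
    (hx.norm_sq.log (pow_ne_zero 2 (norm_ne_zero_iff.2 hxs))).div_const 2
  convert hsq using 1
  · funext r
    rw [Real.log_pow]
    ring
  · rw [ContinuousLinearMap.rayleighQuotient, ContinuousLinearMap.reApplyInnerSelf_apply,
      RCLike.re_to_real, real_inner_comm]
    ring

lemma antitoneOn_two_mul_log_norm_sub_log_norm (hD : Convex ℝ D)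
    (hx : ∀ s ∈ D, HasDerivWithinAt x (A s (x s)) D s) (hx0 : ∀ s ∈ D, x s ≠ 0)
    (hz : ∀ s ∈ D, HasDerivWithinAt z (A s (z s)) D s) (hz0 : ∀ s ∈ D, z s ≠ 0)
    (hM : ∀ s ∈ D, 2 * muPlus (A s) - muMinus (A s) ≤ M) :
    AntitoneOn (fun s => 2 * Real.log ‖x s‖ - Real.log ‖z s‖ - M * s) D := by
  have hderiv : ∀ s ∈ D, HasDerivWithinAt
      (fun s => 2 * Real.log ‖x s‖ - Real.log ‖z s‖ - M * s)
      (2 * (A s).rayleighQuotient (x s) - (A s).rayleighQuotient (z s) - M * 1) D s :=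
    fun s hs => (((hasDerivWithinAt_log_norm (hx s hs) (hx0 s hs)).const_mul 2).sub
      (hasDerivWithinAt_log_norm (hz s hs) (hz0 s hs))).sub
        ((hasDerivWithinAt_id s D).const_mul M)
  refine antitoneOn_of_hasDerivWithinAt_nonpos hD (fun s hs => (hderiv s hs).continuousWithinAt)
    (fun s hs => (hderiv s (interior_subset hs)).mono interior_subset) fun s hs => ?_
  have hsD := interior_subset hs
  linarith [rayleighQuotient_le_muPlus (A s) (hx0 s hsD),
    muMinus_le_rayleighQuotient (A s) (hz0 s hsD), hM s hsD]

lemma norm_sq_mul_norm_le_exp_mul (hD : Convex ℝ D)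
    (hx : ∀ s ∈ D, HasDerivWithinAt x (A s (x s)) D s) (hx0 : ∀ s ∈ D, x s ≠ 0)
    (hz : ∀ s ∈ D, HasDerivWithinAt z (A s (z s)) D s) (hz0 : ∀ s ∈ D, z s ≠ 0)
    (hM : ∀ s ∈ D, 2 * muPlus (A s) - muMinus (A s) ≤ M)
    {a b : ℝ} (ha : a ∈ D) (hb : b ∈ D) (hab : a ≤ b) :
    ‖x b‖ ^ 2 * ‖z a‖ ≤ Real.exp (M * (b - a)) * (‖x a‖ ^ 2 * ‖z b‖) := by
  have hpos : ∀ {y : ℝ → X}, (∀ s ∈ D, y s ≠ 0) → ∀ s ∈ D, ‖y s‖ = Real.exp (Real.log ‖y s‖) :=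
    fun hy s hs => (Real.exp_log (norm_pos_iff.2 (hy s hs))).symm
  have hlog : 2 * Real.log ‖x b‖ - Real.log ‖z b‖ - M * b
      ≤ 2 * Real.log ‖x a‖ - Real.log ‖z a‖ - M * a :=
    antitoneOn_two_mul_log_norm_sub_log_norm hD hx hx0 hz hz0 hM ha hb hab
  rw [hpos hx0 a ha, hpos hx0 b hb, hpos hz0 a ha, hpos hz0 b hb]
  simp only [← Real.exp_nat_mul, ← Real.exp_add, Real.exp_le_exp, Nat.cast_ofNat]
  linarith

end Trajectories

section OperatorNorm

variable {𝕜 E F G H : Type*} [NontriviallyNormedField 𝕜]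
  [SeminormedAddCommGroup E] [NormedSpace 𝕜 E] [SeminormedAddCommGroup F] [NormedSpace 𝕜 F]
  [SeminormedAddCommGroup G] [NormedSpace 𝕜 G] [SeminormedAddCommGroup H] [NormedSpace 𝕜 H]

lemma opNorm_sq_le_of_forall_norm_sq_le (S : E →L[𝕜] F) {C : ℝ} (hC : 0 ≤ C)
    (h : ∀ x, ‖S x‖ ^ 2 ≤ C * ‖x‖ ^ 2) : ‖S‖ ^ 2 ≤ C := by
  refine (Real.le_sqrt (norm_nonneg S) hC).1 (S.opNorm_le_bound C.sqrt_nonneg fun x => ?_)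
  simpa [Real.sqrt_mul hC, Real.sqrt_sq (norm_nonneg x)] using Real.le_sqrt_of_sq_le (h x)

lemma opNorm_mul_le_of_forall_norm_mul_le (T : G →L[𝕜] H) {c C : ℝ} (hc : 0 ≤ c) (hC : 0 ≤ C)
    (h : ∀ w, ‖T w‖ * c ≤ C * ‖w‖) : ‖T‖ * c ≤ C := by
  rcases hc.eq_or_lt with rfl | hc
  · simpa using hC
  rw [← le_div_iff₀ hc]
  refine T.opNorm_le_bound (by positivity) fun w => ?_
  rw [div_mul_eq_mul_div, le_div_iff₀ hc]
  exact h w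

lemma opNorm_mul_opNorm_sq_le_of_forall (T : G →L[𝕜] H) (S : E →L[𝕜] F) {C : ℝ} (hC : 0 ≤ C)
    (h : ∀ w x, ‖T w‖ * ‖S x‖ ^ 2 ≤ C * (‖w‖ * ‖x‖ ^ 2)) : ‖T‖ * ‖S‖ ^ 2 ≤ C := by
  rcases (norm_nonneg T).eq_or_lt with hT | hT
  · simpa [← hT] using hC
  rw [← le_div_iff₀' hT]
  refine opNorm_sq_le_of_forall_norm_sq_le S (by positivity) fun x => ?_
  rw [div_mul_eq_mul_div, le_div_iff₀' hT]
  refine opNorm_mul_le_of_forall_norm_mul_le T (by positivity) (by positivity) fun w => ?_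
  linarith [h w x]

end OperatorNorm

section Symm

variable {𝕜 E F ι : Type*} [NontriviallyNormedField 𝕜]
  [SeminormedAddCommGroup E] [NormedSpace 𝕜 E] [SeminormedAddCommGroup F] [NormedSpace 𝕜 F]

lemma norm_symm_sub_symm_le (e f : E ≃L[𝕜] F) :
    ‖(e.symm : F →L[𝕜] E) - f.symm‖
      ≤ ‖(e.symm : F →L[𝕜] E)‖ * ‖(e : E →L[𝕜] F) - f‖ * ‖(f.symm : F →L[𝕜] E)‖ := by
  have hresolvent : (e.symm : F →L[𝕜] E) - f.symm
      = -((e.symm : F →L[𝕜] E) ∘L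
        ((e : E →L[𝕜] F) - (f : E →L[𝕜] F)) ∘L (f.symm : F →L[𝕜] E)) := by
    ext y
    simp
  rw [hresolvent, norm_neg, mul_assoc]
  grw [ContinuousLinearMap.opNorm_comp_le, ContinuousLinearMap.opNorm_comp_le]

lemma tendsto_symm_of_tendsto {l : Filter ι} {e : ι → E ≃L[𝕜] F} {f : E ≃L[𝕜] F}
    (h : Filter.Tendsto (fun i => (e i : E →L[𝕜] F)) l (nhds f)) :
    Filter.Tendsto (fun i => ((e i).symm : F →L[𝕜] E)) l (nhds f.symm) := by
  -- The resolvent identity bounds `‖(e i)⁻¹‖` by `2 ‖f⁻¹‖` once `e i` is close to `f`.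
  set a := ‖(f.symm : F →L[𝕜] E)‖
  have hdist : Filter.Tendsto (fun i => ‖(e i : E →L[𝕜] F) - f‖) l (nhds 0) :=
    tendsto_iff_norm_sub_tendsto_zero.1 h
  have hsmall : ∀ᶠ i in l, ‖(e i : E →L[𝕜] F) - f‖ * a ≤ 1 / 2 :=
    (hdist.mul_const a).eventually_le_const (by simp)
  have hbdd : ∀ᶠ i in l, ‖((e i).symm : F →L[𝕜] E)‖ ≤ 2 * a := by
    filter_upwards [hsmall] with i hi
    have htri := norm_le_norm_add_norm_sub' ((e i).symm : F →L[𝕜] E) f.symm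
    have hle := norm_symm_sub_symm_le (e i) f
    nlinarith [norm_nonneg ((e i).symm : F →L[𝕜] E)]
  refine tendsto_iff_norm_sub_tendsto_zero.2 (squeeze_zero'
    (g := fun i => 2 * a * ‖(e i : E →L[𝕜] F) - f‖ * a) (.of_forall fun i => norm_nonneg _) ?_ ?_)
  · filter_upwards [hbdd] with i hi
    grw [norm_symm_sub_symm_le, hi]
  · simpa using (hdist.const_mul (2 * a)).mul_const a

end Symm

lemma integral_exp_mul_sub_left (c a b : ℝ) :
    ∫ s in a..b, Real.exp (c * (s - a))
      = if c = 0 then b - a else (Real.exp (c * (b - a)) - 1) / c := by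
  split_ifs with hc
  · simp [hc]
  · rw [integral_comp_sub_right (fun s => Real.exp (c * s)), integral_comp_mul_left _ hc,
      integral_exp, sub_self, mul_zero, Real.exp_zero, smul_eq_mul, inv_mul_eq_div]

section Fundamental

variable {X : Type*} [NormedAddCommGroup X] [InnerProductSpace ℝ X] {D : Set ℝ}
  {A : ℝ → X →L[ℝ] X} {Φ : ℝ → (X ≃L[ℝ] X)} {M t₀ : ℝ}

lemma norm_symm_mul_norm_sq_le_exp (hD : Convex ℝ D) (ht₀ : t₀ ∈ D)
    (hΦ0 : Φ t₀ = ContinuousLinearEquiv.refl ℝ X)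
    (hΦ : ∀ τ ∈ D, HasDerivWithinAt (fun s => (Φ s : X →L[ℝ] X))
      ((A τ).comp (Φ τ : X →L[ℝ] X)) D τ)
    (hM : ∀ τ ∈ D, 2 * muPlus (A τ) - muMinus (A τ) ≤ M)
    {τ : ℝ} (hτ : τ ∈ D) (ht₀τ : t₀ ≤ τ) :
    ‖((Φ τ).symm : X →L[ℝ] X)‖ * ‖(Φ τ : X →L[ℝ] X)‖ ^ 2 ≤ Real.exp (M * (τ - t₀)) := by
  have htraj : ∀ y : X, ∀ s ∈ D, HasDerivWithinAt (fun r => Φ r y) (A s (Φ s y)) D s :=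
    fun y s hs => by simpa using (hΦ s hs).clm_apply (hasDerivWithinAt_const s D y)
  have hne : ∀ y : X, y ≠ 0 → ∀ s ∈ D, Φ s y ≠ 0 := fun y hy s _ => (Φ s).map_ne_zero_iff.2 hy
  refine opNorm_mul_opNorm_sq_le_of_forall _ _ (Real.exp_pos _).le fun w x => ?_
  rcases eq_or_ne x 0 with rfl | hx
  · simp
  rcases eq_or_ne w 0 with rfl | hw
  · simp
  have hz : (Φ τ).symm w ≠ 0 := (Φ τ).symm.map_ne_zero_iff.2 hw
  simpa [hΦ0, mul_comm] using norm_sq_mul_norm_le_exp_mul hD (htraj x) (hne x hx)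
    (htraj _) (hne _ hz) hM ht₀ hτ ht₀τ

end Fundamental

theorem stmt_15_general {X : Type*} [NormedAddCommGroup X] [InnerProductSpace ℝ X]
    {t₀ t₁ : ℝ} (ht : t₀ ≤ t₁) {A : ℝ → X →L[ℝ] X} {Φ : ℝ → (X ≃L[ℝ] X)}
    (hΦ0 : Φ t₀ = ContinuousLinearEquiv.refl ℝ X)
    (hΦ : ∀ τ ∈ Icc t₀ t₁, HasDerivWithinAt (fun s => (Φ s : X →L[ℝ] X))
      ((A τ).comp (Φ τ : X →L[ℝ] X)) (Icc t₀ t₁) τ)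
    {M₁ : ℝ} (hM₁ : ∀ τ ∈ Icc t₀ t₁, 2 * muPlus (A τ) - muMinus (A τ) ≤ M₁) :
    ContinuousOn (fun τ => ‖((Φ τ).symm : X →L[ℝ] X)‖ * ‖(Φ τ : X →L[ℝ] X)‖ ^ 2) (Icc t₀ t₁) ∧
    (∫ τ in t₀..t₁, ‖((Φ τ).symm : X →L[ℝ] X)‖ * ‖(Φ τ : X →L[ℝ] X)‖ ^ 2)
      ≤ if M₁ = 0 then t₁ - t₀ else (Real.exp (M₁ * (t₁ - t₀)) - 1) / M₁ := by
  have hcont : ContinuousOn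
      (fun τ => ‖((Φ τ).symm : X →L[ℝ] X)‖ * ‖(Φ τ : X →L[ℝ] X)‖ ^ 2) (Icc t₀ t₁) := fun τ hτ =>
    have hΦτ := (hΦ τ hτ).continuousWithinAt
    (tendsto_symm_of_tendsto hΦτ).norm.mul (hΦτ.norm.pow 2)
  refine ⟨hcont, ?_⟩
  rw [← integral_exp_mul_sub_left]
  refine integral_mono_on ht (hcont.intervalIntegrable_of_Icc ht)
    (Continuous.intervalIntegrable (by fun_prop) _ _) fun τ hτ => ?_
  exact norm_symm_mul_norm_sq_le_exp (convex_Icc t₀ t₁) (left_mem_Icc.2 ht) hΦ0 hΦ hM₁ hτ hτ.1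

/-- Let `X` be a real Hilbert space, `t₀ ≤ t₁`, `A : [t₀,t₁] → 𝓛(X,X)`
continuous, and `Φ : [t₀,t₁] → 𝓛(X,X)` the (invertible) operator solution of
`Φ' = A∘Φ`, `Φ(t₀) = id`.  If `M₁ ≥ 2μ₊(A(τ)) − μ₋(A(τ))` on `[t₀,t₁]`, then
`∫_{t₀}^{t₁} ‖Φ(τ)⁻¹‖·‖Φ(τ)‖² dτ ≤ K(M₁)`, where `K(α) = t₁−t₀` for `α = 0` and
`K(α) = (exp(α(t₁−t₀))−1)/α` otherwise. -/
theorem stmt_15 {X : Type*} [NormedAddCommGroup X] [InnerProductSpace ℝ X] [CompleteSpace X]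
    (t₀ t₁ : ℝ) (ht : t₀ ≤ t₁)
    (A : ℝ → X →L[ℝ] X) (hA : ContinuousOn A (Icc t₀ t₁))
    (Φ : ℝ → (X ≃L[ℝ] X))
    (hΦ0 : Φ t₀ = ContinuousLinearEquiv.refl ℝ X)
    (hΦ : ∀ τ ∈ Icc t₀ t₁, HasDerivWithinAt (fun s => (Φ s : X →L[ℝ] X))
      ((A τ).comp (Φ τ : X →L[ℝ] X)) (Icc t₀ t₁) τ)
    (M₁ : ℝ) (hM₁ : ∀ τ ∈ Icc t₀ t₁, 2 * muPlus (A τ) - muMinus (A τ) ≤ M₁)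
    (K : ℝ → ℝ)
    (hK : ∀ α : ℝ, K α = if α = 0 then t₁ - t₀ else (Real.exp (α * (t₁ - t₀)) - 1) / α) :
    (∫ τ in t₀..t₁, ‖((Φ τ).symm : X →L[ℝ] X)‖ * ‖(Φ τ : X →L[ℝ] X)‖ ^ 2) ≤ K M₁ := by
  rw [hK]
  exact (stmt_15_general ht hΦ0 hΦ hM₁).2
end

section
/- For all real α ≥ 1 and all x ∈ [0,1], (1 − (5/3)·x·exp(−α)) ≥ (1 − x/(α² + 1))^{3/2}. -/
/-!
Convexity of `y ↦ y ^ (3 / 2)` makes the left-hand side of the inequality lie below its chord on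
`x ∈ [0, 1]`, so it suffices to treat `x = 1`. There the chord of `(1 - t) ^ (3 / 2)` over
`t ∈ [0, 1/2]` has slope at most `-5/4`, while `(α² + 1) exp (-α)` is decreasing with derivative
`-(α - 1)² exp (-α)`, hence at most `2 / e ≤ 3/4` for `α ≥ 1`; and `(5/3) (3/4) = 5/4`.
-/

open Real

theorem one_sub_mul_rpow_le_one_sub_mul {p s t : ℝ} (hp : 1 ≤ p) (hs₀ : 0 ≤ s) (hs₁ : s ≤ 1)
    (ht : t ≤ 1) :
    (1 - s * t) ^ p ≤ 1 - s * (1 - (1 - t) ^ p) := by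
  have hconv := (convexOn_rpow hp).2 (x := 1) (y := 1 - t) (Set.mem_Ici.2 zero_le_one)
    (Set.mem_Ici.2 (sub_nonneg.2 ht)) (sub_nonneg.2 hs₁) hs₀ (sub_add_cancel 1 s)
  simp only [smul_eq_mul, one_rpow] at hconv
  calc (1 - s * t) ^ p = ((1 - s) * 1 + s * (1 - t)) ^ p := by ring_nf
    _ ≤ (1 - s) * 1 + s * (1 - t) ^ p := hconv
    _ = 1 - s * (1 - (1 - t) ^ p) := by ring

theorem one_half_rpow_three_halves_le : (1 / 2 : ℝ) ^ (3 / 2 : ℝ) ≤ 3 / 8 := by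
  have hsq : ((1 / 2 : ℝ) ^ (3 / 2 : ℝ)) ^ 2 = 1 / 8 := by
    rw [← rpow_mul_natCast (by norm_num)]
    norm_num
  exact le_of_sq_le_sq (by rw [hsq]; norm_num) (by norm_num)

theorem one_sub_rpow_three_halves_le {t : ℝ} (ht₀ : 0 ≤ t) (ht : t ≤ 1 / 2) :
    (1 - t) ^ (3 / 2 : ℝ) ≤ 1 - 5 / 4 * t := by
  calc (1 - t) ^ (3 / 2 : ℝ) = (1 - 2 * t * (1 / 2)) ^ (3 / 2 : ℝ) := by ring_nf
    _ ≤ 1 - 2 * t * (1 - (1 - 1 / 2) ^ (3 / 2 : ℝ)) :=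
      one_sub_mul_rpow_le_one_sub_mul (by norm_num) (by linarith) (by linarith) (by norm_num)
    _ = 1 - 2 * t * (1 - (1 / 2) ^ (3 / 2 : ℝ)) := by norm_num
    _ ≤ 1 - 2 * t * (1 - 3 / 8) := by gcongr; exact one_half_rpow_three_halves_le
    _ = 1 - 5 / 4 * t := by ring

theorem antitone_sq_add_one_mul_exp_neg : Antitone fun a : ℝ ↦ (a ^ 2 + 1) * exp (-a) := by
  have hderiv (a : ℝ) :
      HasDerivAt (fun a : ℝ ↦ (a ^ 2 + 1) * exp (-a)) (-((a - 1) ^ 2 * exp (-a))) a :=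
    (((hasDerivAt_pow 2 a).add_const 1).mul (hasDerivAt_neg a).exp).congr_deriv (by
      push_cast
      ring)
  exact antitone_of_hasDerivAt_nonpos hderiv fun a ↦ neg_nonpos.2 (by positivity)

theorem exp_neg_le_mul_one_div_sq_add_one {a : ℝ} (ha : 1 ≤ a) :
    exp (-a) ≤ 3 / 4 * (1 / (a ^ 2 + 1)) := by
  have hmul : (a ^ 2 + 1) * exp (-a) ≤ 3 / 4 :=
    calc (a ^ 2 + 1) * exp (-a) ≤ (1 ^ 2 + 1) * exp (-1) := antitone_sq_add_one_mul_exp_neg ha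
      _ ≤ 3 / 4 := by linarith [exp_neg_one_lt_d9]
  rwa [mul_one_div, le_div_iff₀' (by positivity)]

/-- For all real `α ≥ 1` and all `x ∈ [0,1]`,
`1 - (5/3)·x·exp(-α) ≥ (1 - x/(α² + 1))^(3/2)`. -/
theorem stmt_17 (α : ℝ) (hα : 1 ≤ α) (x : ℝ) (hx : x ∈ Set.Icc (0:ℝ) 1) :
    (1 - x / (α ^ 2 + 1)) ^ ((3:ℝ) / 2) ≤ 1 - (5 / 3) * x * Real.exp (-α) := by
  obtain ⟨hx₀, hx₁⟩ := hx
  set t := 1 / (α ^ 2 + 1) with ht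
  have ht₀ : 0 ≤ t := by positivity
  have ht_half : t ≤ 1 / 2 := one_div_le_one_div_of_le two_pos (by nlinarith)
  have hendpoint : 5 / 3 * exp (-α) ≤ 1 - (1 - t) ^ ((3:ℝ) / 2) := by
    linarith [exp_neg_le_mul_one_div_sq_add_one hα, one_sub_rpow_three_halves_le ht₀ ht_half]
  calc (1 - x / (α ^ 2 + 1)) ^ ((3:ℝ) / 2) = (1 - x * t) ^ ((3:ℝ) / 2) := by
        rw [ht, mul_one_div]
    _ ≤ 1 - x * (1 - (1 - t) ^ ((3:ℝ) / 2)) :=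
      one_sub_mul_rpow_le_one_sub_mul (by norm_num) hx₀ hx₁ (by linarith)
    _ ≤ 1 - x * (5 / 3 * exp (-α)) := by gcongr
    _ = 1 - (5 / 3) * x * exp (-α) := by ring
end

section
/- For all real α ≥ 1, (3/5)·exp(α)·(1 − α³/(α² + 1)^{3/2}) ≥ 1. -/
/-!
Write `α = tan θ` with `θ = arctan α`, so that `α³ / (α² + 1)^(3/2) = sin³ θ` and
`d(sin θ)/dα = cos³ θ`. Hence `exp α * (1 - sin³ θ)` has derivative
`exp α * (1 - sin³ θ - 3 sin² θ cos³ θ)`. This is nonnegative: after factoring `1 - sin θ` out of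
`1 - sin³ θ` and `cos² θ`, the bound `2 |sin θ| cos θ ≤ 1` leaves a quadratic inequality in `sin θ`.
So the function is monotone on the whole line, and at `α = 1` it is `e * (1 - √2 / 4) > 5 / 3`.
-/

open Real

theorem three_mul_sin_sq_mul_cos_mul_one_add_sin_le (θ : ℝ) :
    3 * (sin θ ^ 2 * cos θ) * (1 + sin θ) ≤ 1 + sin θ + sin θ ^ 2 := by
  have one_add_nonneg : 0 ≤ 1 + sin θ := by linarith [neg_one_le_sin θ]
  have abs_sin_mul_cos_le : |sin θ| * cos θ ≤ 1 / 2 := by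
    nlinarith [sq_nonneg (|sin θ| - cos θ), sq_abs (sin θ), sin_sq_add_cos_sq θ]
  have quadratic_le : 3 / 2 * |sin θ| * (1 + sin θ) ≤ 1 + sin θ + sin θ ^ 2 := by
    rcases abs_cases (sin θ) with ⟨h, -⟩ | ⟨h, -⟩ <;> rw [h]
    · nlinarith [sin_le_one θ]
    · nlinarith [sq_nonneg (sin θ + 1 / 2)]
  calc 3 * (sin θ ^ 2 * cos θ) * (1 + sin θ)
      = 3 * |sin θ| * (1 + sin θ) * (|sin θ| * cos θ) := by rw [← sq_abs (sin θ)]; ring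
    _ ≤ 3 * |sin θ| * (1 + sin θ) * (1 / 2) := by gcongr
    _ ≤ 1 + sin θ + sin θ ^ 2 := by linarith

theorem three_mul_sin_sq_mul_cos_cube_le (θ : ℝ) :
    3 * sin θ ^ 2 * cos θ ^ 3 ≤ 1 - sin θ ^ 3 := by
  have one_sub_nonneg : 0 ≤ 1 - sin θ := sub_nonneg.2 (sin_le_one θ)
  calc 3 * sin θ ^ 2 * cos θ ^ 3
      = 3 * (sin θ ^ 2 * cos θ) * cos θ ^ 2 := by ring
    _ = (1 - sin θ) * (3 * (sin θ ^ 2 * cos θ) * (1 + sin θ)) := by rw [cos_sq' θ]; ring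
    _ ≤ (1 - sin θ) * (1 + sin θ + sin θ ^ 2) := by
      gcongr
      exact three_mul_sin_sq_mul_cos_mul_one_add_sin_le θ
    _ = 1 - sin θ ^ 3 := by ring

theorem hasDerivAt_sin_comp_arctan (x : ℝ) :
    HasDerivAt (fun y ↦ sin (arctan y)) (cos (arctan x) ^ 3) x := by
  convert (hasDerivAt_arctan x).sin using 1
  rw [← cos_sq_arctan]
  ring

theorem monotone_exp_mul_one_sub_sin_arctan_cube :
    Monotone fun x : ℝ ↦ exp x * (1 - sin (arctan x) ^ 3) := by
  refine monotone_of_hasDerivAt_nonneg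
    (fun x ↦ (hasDerivAt_exp x).mul (((hasDerivAt_sin_comp_arctan x).pow 3).const_sub 1)) fun x ↦ ?_
  calc (0 : ℝ)
      ≤ exp x * (1 - sin (arctan x) ^ 3 - 3 * sin (arctan x) ^ 2 * cos (arctan x) ^ 3) :=
        mul_nonneg (exp_pos x).le (sub_nonneg.2 (three_mul_sin_sq_mul_cos_cube_le _))
    _ = _ := by push_cast; ring

theorem pow_div_rpow_eq_sin_arctan_pow (x : ℝ) (n : ℕ) :
    x ^ n / (x ^ 2 + 1) ^ ((n : ℝ) / 2) = sin (arctan x) ^ n := by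
  rw [rpow_div_two_eq_sqrt _ (by positivity), rpow_natCast, sin_arctan, div_pow, add_comm 1]

theorem five_thirds_le_exp_one_mul_one_sub_sin_arctan_one_cube :
    5 / 3 ≤ exp 1 * (1 - sin (arctan 1) ^ 3) := by
  have sin_cube : sin (arctan 1) ^ 3 = √2 / 4 := by
    rw [arctan_one, sin_pi_div_four]
    linear_combination √2 / 8 * sq_sqrt (zero_le_two (α := ℝ))
  have sqrt_two_le : √2 ≤ 3 / 2 := sqrt_le_iff.2 (by norm_num)
  have exp_one_ge : 8 / 3 ≤ exp 1 := by linarith [exp_one_gt_d9]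
  rw [sin_cube]
  calc (5 / 3 : ℝ) ≤ 8 / 3 * (1 - 3 / 2 / 4) := by norm_num
    _ ≤ exp 1 * (1 - √2 / 4) := by gcongr

/-- For all real `α ≥ 1`, `(3/5)·exp(α)·(1 − α³/(α² + 1)^(3/2)) ≥ 1`. -/
theorem stmt_18 (α : ℝ) (hα : 1 ≤ α) :
    1 ≤ (3 / 5) * Real.exp α * (1 - α ^ 3 / (α ^ 2 + 1) ^ ((3:ℝ) / 2)) := by
  have sin_form : α ^ 3 / (α ^ 2 + 1) ^ ((3:ℝ) / 2) = sin (arctan α) ^ 3 :=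
    mod_cast pow_div_rpow_eq_sin_arctan_pow α 3
  rw [sin_form]
  calc (1 : ℝ) ≤ 3 / 5 * (exp 1 * (1 - sin (arctan 1) ^ 3)) := by
        linarith [five_thirds_le_exp_one_mul_one_sub_sin_arctan_one_cube]
    _ ≤ 3 / 5 * (exp α * (1 - sin (arctan α) ^ 3)) :=
        mul_le_mul_of_nonneg_left (monotone_exp_mul_one_sub_sin_arctan_cube hα) (by norm_num)
    _ = _ := by ring
end
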